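/- arXiv:1203.1955 — 2 statements merged into one kernel-verified Lean document; each statement's English description precedes it below -/
import Mathlib

section
/- Let R be a Cohen-Macaulay, complete, equicharacteristic commutative noetherian local ring with perfect residue field. Let X be any class of finitely generated R-modules with CM_0(R) ⊆ X ⊆ CM(R), and let Y be any class of finitely generated R-modules containing CM_0(R). Then V(⋂_{i>0, M ∈ X, N ∈ Y} Ann_R Ext_R^i(M,N)) = Sing R, i.e., a prime ideal p of R contains all the annihilators Ann_R Ext_R^i(M,N) (i > 0, M ∈ X, N ∈ Y) if and only if R_p is not regular. -/
open CategoryTheory IsLocalRing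

noncomputable section

/-- The `i`-th Tor module of two `R`-modules, as an object of `ModuleCat R`. -/
def TorMod (R : Type) [CommRing R] (i : ℕ) (M N : ModuleCat.{0} R) : ModuleCat.{0} R :=
  ((Tor (ModuleCat.{0} R) i).obj M).obj N

/-- The `i`-th Ext module of two `R`-modules, as an object of `ModuleCat R`. -/
def ExtMod (R : Type) [CommRing R] (i : ℕ) (M N : ModuleCat.{0} R) : ModuleCat.{0} R :=
  ((Ext R (ModuleCat.{0} R) i).obj (Opposite.op M)).obj N

/-- Integer-indexed Tor: `Tor_n = 0` for `n < 0`. -/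
def TorZ (R : Type) [CommRing R] (n : ℤ) (M N : ModuleCat.{0} R) : ModuleCat.{0} R :=
  if 0 ≤ n then TorMod R n.toNat M N else ModuleCat.of R PUnit

/-- Integer-indexed Ext: `Ext^n = 0` for `n < 0`. -/
def ExtZ (R : Type) [CommRing R] (n : ℤ) (M N : ModuleCat.{0} R) : ModuleCat.{0} R :=
  if 0 ≤ n then ExtMod R n.toNat M N else ModuleCat.of R PUnit

/-- The depth of a module `N` over a local ring `S`, defined as the infimum of the set of
integers `i` such that `Ext^i(k, N) ≠ 0`, where `k` is the residue field of `S`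
(`⊤` if no such `i` exists). -/
def moduleDepth (S : Type) [CommRing S] [IsLocalRing S] (N : Type) [AddCommGroup N]
    [Module S N] : ℕ∞ :=
  sInf {i : ℕ∞ | ∃ j : ℕ, i = (j : ℕ∞) ∧
    Nontrivial (ExtMod S j (ModuleCat.of S (ResidueField S)) (ModuleCat.of S N))}

/-- A local ring is regular if it is noetherian and its maximal ideal can be generated by
(Krull dimension of `S`)-many elements. -/
def IsRegularLocal (S : Type) [CommRing S] [IsLocalRing S] : Prop :=
  IsNoetherianRing S ∧ ∃ s : Finset S, Ideal.span (s : Set S) = maximalIdeal S ∧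
    (s.card : WithBot ℕ∞) = ringKrullDim S

/-- A local ring is Cohen-Macaulay if its depth (as a module over itself) equals its
Krull dimension. -/
def IsCMLocalRing (R : Type) [CommRing R] [IsLocalRing R] : Prop :=
  (moduleDepth R R : WithBot ℕ∞) = ringKrullDim R

/-- A module `M` over a local ring `R` is maximal Cohen-Macaulay if
`depth M_p ≥ dim R_p` for every prime ideal `p` of `R`. -/
def IsMCMModule (R : Type) [CommRing R] [IsLocalRing R] (M : Type) [AddCommGroup M]
    [Module R M] : Prop :=
  ∀ (p : Ideal R) [p.IsPrime],
    ringKrullDim (Localization.AtPrime p) ≤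
      (moduleDepth (Localization.AtPrime p) (LocalizedModule p.primeCompl M) : WithBot ℕ∞)

/-- Membership in `CM(R)`: finitely generated maximal Cohen-Macaulay modules. -/
def MemCM (R : Type) [CommRing R] [IsLocalRing R] (M : ModuleCat.{0} R) : Prop :=
  Module.Finite R M ∧ IsMCMModule R M

/-- Membership in `CM₀(R)`: finitely generated maximal Cohen-Macaulay modules that are
locally free on the punctured spectrum. -/
def MemCM0 (R : Type) [CommRing R] [IsLocalRing R] (M : ModuleCat.{0} R) : Prop :=
  Module.Finite R M ∧ IsMCMModule R M ∧
    ∀ (p : Ideal R) [p.IsPrime], p ≠ maximalIdeal R →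
      Module.Free (Localization.AtPrime p) (LocalizedModule p.primeCompl M)

/-- The singular locus of `R`: primes `p` such that `R_p` is not regular. -/
def singularLocus (R : Type) [CommRing R] : Set (PrimeSpectrum R) :=
  {p | ¬ IsRegularLocal (Localization.AtPrime p.asIdeal)}

/-- The nonfree locus of a module `M`: primes `p` such that `M_p` is not a free
`R_p`-module. -/
def nonfreeLocus (R : Type) [CommRing R] (M : Type) [AddCommGroup M] [Module R M] :
    Set (PrimeSpectrum R) :=
  {p | ¬ Module.Free (Localization.AtPrime p.asIdeal)
        (LocalizedModule p.asIdeal.primeCompl M)}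

/-- `K` is a first syzygy of `N` in a minimal free resolution: there is a surjection
`f : R^n → N` with `ker f ⊆ m·R^n` and `K ≅ ker f`. -/
def IsMinimalSyzygy1 (R : Type) [CommRing R] [IsLocalRing R] (N K : ModuleCat.{0} R) : Prop :=
  ∃ (n : ℕ) (f : (Fin n → R) →ₗ[R] N), Function.Surjective f ∧
    LinearMap.ker f ≤ (maximalIdeal R) • (⊤ : Submodule R (Fin n → R)) ∧
    Nonempty (K ≃ₗ[R] LinearMap.ker f)

/-- `K` is a `d`-th syzygy of `N` in a minimal free resolution. -/
def IsMinimalSyzygy (R : Type) [CommRing R] [IsLocalRing R] :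
    ℕ → ModuleCat.{0} R → ModuleCat.{0} R → Prop
  | 0, N, K => Nonempty ((K : Type) ≃ₗ[R] N)
  | d + 1, N, K => ∃ L : ModuleCat.{0} R, IsMinimalSyzygy1 R N L ∧ IsMinimalSyzygy R d L K

/-- A module is indecomposable if it is nonzero and is not isomorphic to the direct sum of
two nonzero modules. -/
def IndecomposableModule (R : Type) [CommRing R] (M : Type) [AddCommGroup M] [Module R M] :
    Prop :=
  Nontrivial M ∧ ∀ (A B : Type) [AddCommGroup A] [Module R A] [AddCommGroup B] [Module R B],
    Nonempty (M ≃ₗ[R] A × B) → (Subsingleton A ∨ Subsingleton B)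

lemma ann_homology_iff {R : Type} [CommRing R] (S : ShortComplex (ModuleCat.{0} R)) (r : R) :
    r ∈ Module.annihilator R S.homology ↔ ∀ z : S.X₂, S.g z = 0 → ∃ y : S.X₁, S.f y = r • z := by
  rw [S.moduleCatHomologyIso.toLinearEquiv.annihilator_eq, Module.mem_annihilator]
  have key : ∀ z : LinearMap.ker S.g.hom,
      (Submodule.Quotient.mk (r • z) : LinearMap.ker S.g.hom ⧸ LinearMap.range S.moduleCatToCycles) = 0 ↔
        ∃ y : S.X₁, S.f y = r • z.1 := by
    intro z
    rw [Submodule.Quotient.mk_eq_zero]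
    constructor
    · rintro ⟨y, hy⟩
      exact ⟨y, congrArg Subtype.val hy⟩
    · rintro ⟨y, hy⟩
      exact ⟨y, Subtype.ext hy⟩
  constructor
  · intro h z hz
    exact (key ⟨z, hz⟩).1 (h (Submodule.Quotient.mk (⟨z, hz⟩ : LinearMap.ker S.g.hom)))
  · intro h x
    obtain ⟨z, rfl⟩ := Submodule.Quotient.mk_surjective _ x
    exact (key z).2 (h z.1 z.2)

lemma ann_cohomology_iff {R : Type} [CommRing R] (K : CochainComplex (ModuleCat.{0} R) ℕ)
    (n : ℕ) (r : R) :
    r ∈ Module.annihilator R (K.homology n) ↔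
      ∀ z : K.X n, K.d n (n+1) z = 0 →
        ∃ y : K.X ((ComplexShape.up ℕ).prev n), K.d ((ComplexShape.up ℕ).prev n) n y = r • z := by
  have h := ann_homology_iff (K.sc n) r
  refine h.trans ?_
  have : (ComplexShape.up ℕ).next n = n + 1 := CochainComplex.next ℕ n
  constructor
  · intro H z hz
    refine H z ?_
    change K.d n _ z = 0
    rw [this]; exact hz
  · intro H z hz
    refine H z ?_
    change K.d n _ z = 0 at hz
    rw [this] at hz; exact hz

lemma ann_extMod_iff {R : Type} [CommRing R] (n : ℕ) (M N : ModuleCat.{0} R) (r : R) :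
    r ∈ Module.annihilator R (ExtMod R n M N) ↔ ∀ e : Abelian.Ext M N n, r • e = 0 := by
  let P := ProjectiveResolution.of M
  have e1 : ExtMod R n M N ≅ (P.complex.linearYonedaObj R N).homology n := P.isoExt n N
  rw [e1.toLinearEquiv.annihilator_eq, ann_cohomology_iff]
  cases n with
  | zero =>
    let π : P.complex.X 0 ⟶ M := P.π.f 0
    have hπe : Epi π := inferInstanceAs (Epi (P.π.f 0))
    have hπ0 : P.complex.d 1 0 ≫ π = 0 := P.complex_d_comp_π_f_zero
    have hdesc : ∀ z : P.complex.X 0 ⟶ N, P.complex.d 1 0 ≫ z = 0 → ∃ f : M ⟶ N, π ≫ f = z :=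
      fun z hz => ⟨(P.exact₀).desc z hz, (P.exact₀).g_desc z hz⟩
    constructor
    · intro H e
      apply (Abelian.Ext.linearEquiv₀ (R := R)).injective
      rw [map_smul, map_zero]
      set f := Abelian.Ext.linearEquiv₀ (R := R) e
      obtain ⟨y, hy⟩ := H (π ≫ f) (by
        change P.complex.d 1 0 ≫ _ = 0
        rw [← Category.assoc, hπ0, Limits.zero_comp])
      rw [show (P.complex.linearYonedaObj R N).d ((ComplexShape.up ℕ).prev 0) 0 = 0 from
        HomologicalComplex.shape _ _ _ (by simp)] at hy
      have h3 : r • (π ≫ f) = (0 : P.complex.X 0 ⟶ N) := hy.symm.trans (by rfl)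
      rw [← Linear.comp_smul] at h3
      exact (cancel_epi π).1 (by simpa using h3)
    · intro H z hz
      refine ⟨0, ?_⟩
      rw [map_zero]
      obtain ⟨f, hf⟩ := hdesc z hz
      have h1 := H ((Abelian.Ext.linearEquiv₀ (R := R)).symm f)
      rw [← map_smul, LinearEquiv.map_eq_zero_iff] at h1
      have h2 : r • (π ≫ f) = 0 := by
        rw [← Linear.comp_smul, h1, Limits.comp_zero]
      rw [hf] at h2
      exact h2.symm
  | succ n =>
    have hp : (ComplexShape.up ℕ).prev (n+1) = n := CochainComplex.prev_nat_succ n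
    rw [hp]
    have key : ∀ (f : P.complex.X (n+1) ⟶ N) (hf : P.complex.d (n+2) (n+1) ≫ f = 0),
        r • P.extMk f (n+2) rfl hf = P.extMk (r • f) (n+2) rfl (by simp [hf]) := by
      intro f hf
      rw [Abelian.Ext.smul_eq_comp_mk₀, ProjectiveResolution.extMk_comp_mk₀]
      congr 1
    constructor
    · intro H e
      obtain ⟨f, hf, rfl⟩ := P.extMk_surjective e (n+2) rfl
      rw [key, P.extMk_eq_zero_iff _ _ _ _ n rfl]
      exact H f hf
    · intro H z hz
      have := H (P.extMk (z : P.complex.X (n+1) ⟶ N) (n+2) rfl hz)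
      have := (key z hz).symm.trans this
      rw [ P.extMk_eq_zero_iff _ _ _ _ n rfl] at this
      exact this

lemma subsingleton_extMod_iff {R : Type} [CommRing R] (n : ℕ) (M N : ModuleCat.{0} R) :
    ¬ Nontrivial (ExtMod R n M N) ↔ Subsingleton (Abelian.Ext M N n) := by
  rw [not_nontrivial_iff_subsingleton, ← Module.annihilator_eq_top_iff (R := R),
    Ideal.eq_top_iff_one, ann_extMod_iff]
  simp only [one_smul]
  exact ⟨fun h => ⟨fun a b => by rw [h a, h b]⟩, fun h a => Subsingleton.elim _ _⟩

/-- depth lower bound in terms of `Abelian.Ext`. -/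
lemma le_moduleDepth_iff (S : Type) [CommRing S] [IsLocalRing S] (N : Type) [AddCommGroup N]
    [Module S N] (n : ℕ) :
    (n : ℕ∞) ≤ moduleDepth S N ↔ ∀ i < n, Subsingleton
      (Abelian.Ext (ModuleCat.of S (ResidueField S)) (ModuleCat.of S N) i) := by
  unfold moduleDepth
  rw [le_sInf_iff]
  constructor
  · intro h i hi
    rw [← subsingleton_extMod_iff]
    intro hn
    have := h i ⟨i, rfl, hn⟩
    have : n ≤ i := by exact_mod_cast this
    omega
  · rintro h _ ⟨j, rfl, hj⟩
    by_contra hlt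
    have : j < n := by
      rw [not_le] at hlt
      exact_mod_cast hlt
    exact (subsingleton_extMod_iff _ _ _).2 (h j this) hj

/-- `N` is killed by powers of the elements of `ys`. -/
def TorsBy {R : Type} [CommRing R] (ys : List R) (N : Type) [AddCommGroup N] [Module R N] : Prop :=
  ∀ y ∈ ys, ∃ c : ℕ, ∀ n : N, y ^ c • n = 0

lemma TorsBy.sub {R : Type} [CommRing R] {ys : List R} {N : Type} [AddCommGroup N] [Module R N]
    (h : TorsBy ys N) (G : Submodule R N) : TorsBy ys G := fun y hy => by
  obtain ⟨c, hc⟩ := h y hy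
  exact ⟨c, fun n => Subtype.ext (hc n)⟩

lemma TorsBy.quot {R : Type} [CommRing R] {ys : List R} {N : Type} [AddCommGroup N] [Module R N]
    (h : TorsBy ys N) (G : Submodule R N) : TorsBy ys (N ⧸ G) := fun y hy => by
  obtain ⟨c, hc⟩ := h y hy
  refine ⟨c, fun n => ?_⟩
  obtain ⟨n, rfl⟩ := Submodule.Quotient.mk_surjective _ n
  rw [← Submodule.Quotient.mk_smul, hc, Submodule.Quotient.mk_zero]

lemma exists_torsion_sub {R : Type} [CommRing R] [IsNoetherianRing R] (y : R)
    (N : Type) [AddCommGroup N] [Module R N] [Module.Finite R N] :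
    ∃ G : Submodule R N, (∃ c : ℕ, ∀ g ∈ G, y ^ c • g = 0) ∧ ∀ n : N, y • n ∈ G → n ∈ G := by
  let f : ℕ →o Submodule R N :=
    ⟨fun c => LinearMap.ker (LinearMap.lsmul R N (y ^ c)), by
      intro a b hab n hn
      simp only [LinearMap.mem_ker, LinearMap.lsmul_apply] at hn ⊢
      obtain ⟨e, rfl⟩ := Nat.exists_eq_add_of_le hab
      rw [add_comm, pow_add, mul_smul, hn, smul_zero]⟩
  obtain ⟨c, hc⟩ := monotone_stabilizes_iff_noetherian.2 (inferInstance : IsNoetherian R N) f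
  refine ⟨f c, ⟨c, fun g hg => hg⟩, fun n hn => ?_⟩
  rw [hc (c+1) (by omega)]
  change y ^ (c+1) • n = 0
  change y ^ c • y • n = 0 at hn
  rw [pow_succ, mul_smul, hn]

lemma kill_extension {R : Type} [CommRing R] {S : ShortComplex (ModuleCat.{0} R)}
    (hS : S.ShortExact) (W : ModuleCat.{0} R) (i : ℕ) (s t : R)
    (h1 : ∀ e : Abelian.Ext S.X₁ W i, s • e = 0) (h3 : ∀ e : Abelian.Ext S.X₃ W i, t • e = 0) :
    ∀ e : Abelian.Ext S.X₂ W i, (s * t) • e = 0 := by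
  intro e
  have h : (Abelian.Ext.mk₀ S.f).comp (s • e) (zero_add i) = 0 := by
    rw [Abelian.Ext.comp_smul, h1]
  obtain ⟨e3, he3⟩ := Abelian.Ext.contravariant_sequence_exact₂ hS W (s • e) h
  rw [mul_comm, mul_smul, ← he3, ← Abelian.Ext.comp_smul, h3, Abelian.Ext.comp_zero]

lemma kill_quot {R : Type} [CommRing R] (N : ModuleCat.{0} R) (G : Submodule R N)
    (W : ModuleCat.{0} R) (i : ℕ) (s t : R)
    (h1 : ∀ e : Abelian.Ext (ModuleCat.of R G) W i, s • e = 0)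
    (h3 : ∀ e : Abelian.Ext (ModuleCat.of R (N ⧸ G)) W i, t • e = 0) :
    ∀ e : Abelian.Ext N W i, (s * t) • e = 0 := by
  let S : ShortComplex (ModuleCat.{0} R) :=
    ShortComplex.mk (X₂ := N) (ModuleCat.ofHom G.subtype) (ModuleCat.ofHom G.mkQ)
      (by ext x; simp)
  have hS : S.ShortExact :=
    { exact := by
        rw [ShortComplex.moduleCat_exact_iff]
        intro x hx
        refine ⟨⟨x, (Submodule.Quotient.mk_eq_zero G).1 hx⟩, rfl⟩
      mono_f := by
        rw [ModuleCat.mono_iff_injective]; exact Subtype.val_injective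
      epi_g := by
        rw [ModuleCat.epi_iff_surjective]; exact Submodule.mkQ_surjective G }
  exact kill_extension hS W i s t h1 h3

lemma kill_regular {R : Type} [CommRing R] [IsNoetherianRing R] [IsLocalRing R]
    (N W : ModuleCat.{0} R) [Module.Finite R N] [Module.Finite R W] (i : ℕ) (s y : R)
    (hy : y ∈ maximalIdeal R) (hreg : IsSMulRegular N y)
    (h : ∀ c : ℕ, ∀ e : Abelian.Ext (ModuleCat.of R (QuotSMulTop (y ^ c) N)) W (i+1), s • e = 0) :
    ∀ e : Abelian.Ext N W i, s • e = 0 := by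
  intro e
  have key : ∀ c : ℕ, s • e ∈ (maximalIdeal R) ^ c • (⊤ : Submodule R (Abelian.Ext N W i)) := by
    intro c
    have hS := (hreg.pow c).smulShortComplex_shortExact
    obtain ⟨e', he'⟩ := Abelian.Ext.contravariant_sequence_exact₁ hS W (n₀ := i) (n₁ := i+1) (s • e)
      (add_comm 1 i) ((Abelian.Ext.comp_smul _ _ _ _).trans (h c _))
    have h5 : ∀ e' : Abelian.Ext N W i, (Abelian.Ext.mk₀ (y ^ c • 𝟙 N)).comp e' (zero_add i) =
        y ^ c • e' := by
      intro e'
      rw [Abelian.Ext.mk₀_smul, Abelian.Ext.smul_comp, Abelian.Ext.mk₀_id_comp]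
    have h6 : s • e = y ^ c • (show Abelian.Ext N W i from e') := he'.symm.trans (h5 e')
    rw [h6]
    exact Submodule.smul_mem_smul (Ideal.pow_mem_pow hy c) trivial
  have h2 := Ideal.iInf_pow_smul_eq_bot_of_isLocalRing (M := Abelian.Ext N W i) (maximalIdeal R)
    (Ideal.IsPrime.ne_top')
  have : s • e ∈ (⨅ c : ℕ, (maximalIdeal R) ^ c • (⊤ : Submodule R (Abelian.Ext N W i))) := by
    simpa using key
  rw [h2] at this
  simpa using this

lemma devissage {R : Type} [CommRing R] [IsNoetherianRing R] [IsLocalRing R]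
    (W : ModuleCat.{0} R) [Module.Finite R W] (p : ℕ → Prop) (s : R) (zs : List R)
    (hz : ∀ z ∈ zs, z ∈ maximalIdeal R) : ∀ (ys : List R)
    (_ : ∀ N : ModuleCat.{0} R, Module.Finite R N → TorsBy zs N → TorsBy ys N →
      ∀ i, p i → ∀ e : Abelian.Ext N W i, s • e = 0)
    (N : ModuleCat.{0} R) (_ : Module.Finite R N) (_ : TorsBy ys N) (i : ℕ)
    (_ : ∀ j ≤ zs.length, p (i + j)),
    ∀ e : Abelian.Ext N W i, s ^ (2 ^ zs.length) • e = 0 := by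
  induction zs with
  | nil =>
    intro ys h N hN hys i hi e
    simpa using h N hN (by intro y hy; simp at hy) hys i (by simpa using hi 0) e
  | cons z zs ih =>
    intro ys h N hN hys i hi
    have IH := ih (fun z hz' => hz z (by simp [hz'])) (z :: ys) (by
      intro N hN h1 h2 i hi
      refine h N hN ?_ ?_ i hi
      · intro y hy
        rcases List.mem_cons.1 hy with rfl | hy
        · exact h2 _ (by simp)
        · exact h1 _ hy
      · intro y hy
        exact h2 _ (by simp [hy]))
    obtain ⟨G, ⟨c, hc⟩, hG⟩ := exists_torsion_sub z N
    have e2 : s ^ 2 ^ (z :: zs).length = s ^ 2 ^ zs.length * s ^ 2 ^ zs.length := by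
      rw [List.length_cons, pow_succ 2, mul_two, pow_add]
    rw [e2]
    apply kill_quot N G
    · refine IH (ModuleCat.of R G) (inferInstanceAs (Module.Finite R G)) ?_ i
        (fun j hj => hi j (by simp; omega))
      intro y hy
      rcases List.mem_cons.1 hy with rfl | hy
      · exact ⟨c, fun n => Subtype.ext (hc n.1 n.2)⟩
      · exact hys.sub G y hy
    · have : Module.Finite R (ModuleCat.of R (N ⧸ G)) := inferInstanceAs (Module.Finite R (N ⧸ G))
      refine kill_regular (ModuleCat.of R (N ⧸ G)) W i _ z (hz z (by simp)) ?_ ?_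
      · change IsSMulRegular (N ⧸ G) z
        rw [isSMulRegular_iff_right_eq_zero_of_smul]
        intro n hn
        obtain ⟨n, rfl⟩ := Submodule.Quotient.mk_surjective _ n
        rw [← Submodule.Quotient.mk_smul, Submodule.Quotient.mk_eq_zero] at hn
        exact (Submodule.Quotient.mk_eq_zero _).2 (hG n hn)
      · intro c
        refine IH (ModuleCat.of R (QuotSMulTop (z ^ c) (N ⧸ G))) ?_ ?_ (i+1) ?_
        · exact inferInstanceAs (Module.Finite R (QuotSMulTop (z ^ c) (N ⧸ G)))
        · intro y hy
          rcases List.mem_cons.1 hy with rfl | hy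
          · refine ⟨c, fun n => ?_⟩
            obtain ⟨n, rfl⟩ := Submodule.Quotient.mk_surjective _ n
            exact (Submodule.Quotient.mk_eq_zero _).2
              (Submodule.smul_mem_pointwise_smul _ _ _ trivial)
          · exact (hys.quot G).quot _ y hy
        · intro j hj
          have := hi (j+1) (by simp; omega)
          rwa [show i + 1 + j = i + (j + 1) by omega]

/-- `Ext^i(k, M) = 0` for `i < n`. -/
def DepthGE (S : Type) [CommRing S] [IsLocalRing S] (M : Type) [AddCommGroup M] [Module S M]
    (n : ℕ) : Prop :=
  ∀ i < n, Subsingleton (Abelian.Ext (ModuleCat.of S (ResidueField S)) (ModuleCat.of S M) i)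

lemma support_residueField (S : Type) [CommRing S] [IsLocalRing S] :
    Module.support S (ResidueField S) = PrimeSpectrum.zeroLocus (maximalIdeal S) := by
  have : Module.support S (S ⧸ maximalIdeal S) = PrimeSpectrum.zeroLocus (maximalIdeal S) := by
    rw [Module.support_eq_zeroLocus, Ideal.annihilator_quotient]
  exact this

lemma subsingleton_ext_of_subsingleton {S : Type} [CommRing S] (N M : ModuleCat.{0} S)
    [Subsingleton M] (i : ℕ) : Subsingleton (Abelian.Ext N M i) := by
  suffices ∀ e : Abelian.Ext N M i, e = 0 from ⟨fun a b => (this a).trans (this b).symm⟩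
  intro e
  rw [← Abelian.Ext.comp_mk₀_id e, (ModuleCat.isZero_of_subsingleton M).eq_of_src (𝟙 M) 0,
    Abelian.Ext.mk₀_zero, Abelian.Ext.comp_zero]

lemma subsingleton_ext_of_subsingleton_left {S : Type} [CommRing S] (N M : ModuleCat.{0} S)
    [Subsingleton N] (i : ℕ) : Subsingleton (Abelian.Ext N M i) := by
  suffices ∀ e : Abelian.Ext N M i, e = 0 from ⟨fun a b => (this a).trans (this b).symm⟩
  intro e
  rw [← Abelian.Ext.mk₀_id_comp e, (ModuleCat.isZero_of_subsingleton N).eq_of_src (𝟙 N) 0,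
    Abelian.Ext.mk₀_zero, Abelian.Ext.zero_comp]

lemma DepthGE.of_isWeaklyRegular {S : Type} [CommRing S] [IsNoetherianRing S] [IsLocalRing S]
    (M : Type) [AddCommGroup M] [Module S M] [Module.Finite S M] (xs : List S)
    (hx : ∀ x ∈ xs, x ∈ maximalIdeal S) (h : RingTheory.Sequence.IsWeaklyRegular M xs) :
    DepthGE S M xs.length := by
  intro i hi
  rcases subsingleton_or_nontrivial M with hM | hM
  · exact subsingleton_ext_of_subsingleton _ (ModuleCat.of S M) i
  have hreg : RingTheory.Sequence.IsRegular M xs :=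
    (IsLocalRing.isRegular_iff_isWeaklyRegular_of_subset_maximalIdeal hx).2 h
  refine ModuleCat.subsingleton_ext_of_exists_isRegular (maximalIdeal S) _ ?_ _ ?_ xs hx hreg i hi
  · exact (support_residueField S).le
  · refine lt_top_iff_ne_top.2 (Submodule.top_ne_ideal_smul_of_le_jacobson_annihilator ?_).symm
    exact IsLocalRing.maximalIdeal_le_jacobson _

lemma DepthGE.ext_torsBy {S : Type} [CommRing S] [IsNoetherianRing S] [IsLocalRing S]
    (W : ModuleCat.{0} S) [Module.Finite S W] (n : ℕ) (h : DepthGE S W n) (xs : List S)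
    (hx : maximalIdeal S ≤ (Ideal.span {x | x ∈ xs}).radical)
    (N : ModuleCat.{0} S) [Module.Finite S N] (hN : TorsBy xs N) (i : ℕ) (hi : i < n) :
    Subsingleton (Abelian.Ext N W i) := by
  rcases subsingleton_or_nontrivial W with hM | hM
  · exact subsingleton_ext_of_subsingleton _ W i
  rcases subsingleton_or_nontrivial N with hM | hM
  · exact subsingleton_ext_of_subsingleton_left N W i
  have lt : maximalIdeal S • (⊤ : Submodule S W) < ⊤ := by
    refine lt_top_iff_ne_top.2 (Submodule.top_ne_ideal_smul_of_le_jacobson_annihilator ?_).symm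
    exact IsLocalRing.maximalIdeal_le_jacobson _
  have key := (ModuleCat.exists_isRegular_tfae (maximalIdeal S) n W lt).out 2 0
  refine key.1 ⟨ModuleCat.of S (ResidueField S), ?_, ?_, support_residueField S, h⟩ N ‹_› ‹_› ?_ i hi
  · exact inferInstanceAs (Nontrivial (ResidueField S))
  · exact inferInstanceAs (Module.Finite S (ResidueField S))
  · rw [Module.support_eq_zeroLocus]
    intro p hp
    have h1 : Ideal.span {x | x ∈ xs} ≤ p.asIdeal := by
      rw [Ideal.span_le]
      intro x hx
      obtain ⟨c, hc⟩ := hN x hx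
      exact p.2.mem_of_pow_mem c (hp (Module.mem_annihilator.2 hc))
    exact hx.trans ((Ideal.IsPrime.radical_le_iff p.2).2 h1)

lemma DepthGE.quot {S : Type} [CommRing S] [IsLocalRing S]
    (W : Type) [AddCommGroup W] [Module S W] (x : S) (hx : IsSMulRegular W x) (n : ℕ)
    (h : DepthGE S W (n+1)) : DepthGE S (QuotSMulTop x W) n := by
  intro i hi
  have hx' : IsSMulRegular (ModuleCat.of S W) x := hx
  have hS := hx'.smulShortComplex_shortExact
  have h1 := h i (by omega)
  have h2 := h (i+1) (by omega)
  refine ⟨?_⟩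
  suffices ∀ e : Abelian.Ext (ModuleCat.of S (ResidueField S)) (ModuleCat.of S (QuotSMulTop x W)) i,
    e = 0 from fun a b => (this a).trans (this b).symm
  intro e
  obtain ⟨e2, he⟩ := Abelian.Ext.covariant_sequence_exact₃ (ModuleCat.of S (ResidueField S)) hS e rfl
    (h2.elim _ _)
  rw [show e2 = 0 from h1.elim _ _, Abelian.Ext.zero_comp] at he
  exact he.symm

lemma sop_isWeaklyRegular {S : Type} [CommRing S] [IsNoetherianRing S] [IsLocalRing S]
    (zs : List S) : ∀ (ys : List S) (_ : ∀ z ∈ zs, z ∈ maximalIdeal S)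
    (W : Type) [AddCommGroup W] [Module S W] [Module.Finite S W] (_ : TorsBy ys W)
    (_ : maximalIdeal S ≤ (Ideal.span {x | x ∈ ys ∨ x ∈ zs}).radical)
    (_ : DepthGE S W zs.length),
    RingTheory.Sequence.IsWeaklyRegular W zs := by
  induction zs with
  | nil => intros; simp
  | cons z zs ih =>
    intro ys hz W _ _ _ hys hrad hd
    have hreg : IsSMulRegular W z := by
      rw [isSMulRegular_iff_ker_lsmul_eq_bot]
      set G := LinearMap.ker (LinearMap.lsmul S W z) with hG
      have hfin : Module.Finite S (ModuleCat.of S W) := inferInstanceAs (Module.Finite S W)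
      have := devissage (ModuleCat.of S W) (fun i => i < zs.length + 1) 1 zs
        (fun z hz' => hz z (by simp [hz'])) (z :: ys) (by
          intro N hN h1 h2 i hi e
          have := DepthGE.ext_torsBy (ModuleCat.of S W) _ hd (ys ++ z :: zs) (by
            refine hrad.trans (Ideal.radical_mono (Ideal.span_mono ?_))
            intro x hx; simpa using hx) N (by
              intro x hx
              simp only [List.mem_append, List.mem_cons] at hx
              rcases hx with hx | rfl | hx
              · exact h2 _ (by simp [hx])
              · exact h2 _ (by simp)
              · exact h1 _ hx) i hi
          exact this.elim _ _) (ModuleCat.of S G) (inferInstanceAs (Module.Finite S G)) (by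
          intro x hx
          rcases List.mem_cons.1 hx with rfl | hx
          · exact ⟨1, fun n => Subtype.ext ((congrArg (· • n.1) (pow_one x)).trans (LinearMap.mem_ker.1 n.2))⟩
          · exact hys.sub G x hx) 0 (by intro j hj; omega) (Abelian.Ext.mk₀ (ModuleCat.ofHom G.subtype))
      rw [one_pow, one_smul, Abelian.Ext.mk₀_eq_zero_iff] at this
      rw [eq_bot_iff]
      intro g hg
      exact congrArg (fun f => f.hom ⟨g, hg⟩) this
    rw [RingTheory.Sequence.isWeaklyRegular_cons_iff]
    refine ⟨hreg, ih (z :: ys) (fun z hz' => hz z (by simp [hz'])) _ ?_ ?_ (hd.quot W z hreg)⟩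
    · intro y hy
      rcases List.mem_cons.1 hy with rfl | hy
      · refine ⟨1, fun n => ?_⟩
        obtain ⟨n, rfl⟩ := Submodule.Quotient.mk_surjective _ n
        rw [pow_one]
        exact (Submodule.Quotient.mk_eq_zero _).2
              (Submodule.smul_mem_pointwise_smul _ _ _ trivial)
      · exact hys.quot _ y hy
    · refine hrad.trans (Ideal.radical_mono (Ideal.span_mono ?_))
      intro x hx
      simp only [Set.mem_ofPred_eq, List.mem_cons] at hx ⊢
      tauto

lemma height_sup_span_singleton {S : Type} [CommRing S] (I : Ideal S) (x : S) (n : ℕ)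
    (h : (n : ℕ∞) ≤ I.height) (hx : ∀ q ∈ I.minimalPrimes, x ∉ q) :
    ((n + 1 : ℕ) : ℕ∞) ≤ (I ⊔ Ideal.span {x}).height := by
  rw [Ideal.height_eq_inf_minimalPrimes]
  refine le_iInf₂ fun J hJ => ?_
  have hJp : J.IsPrime := hJ.1.1
  obtain ⟨q, hq, hqJ⟩ := Ideal.exists_minimalPrimes_le (le_sup_left.trans hJ.1.2)
  have hqp : q.IsPrime := hq.1.1
  have hlt : q < J := lt_of_le_of_ne hqJ (fun e => hx q hq (e ▸ hJ.1.2
    (Ideal.mem_sup_right (Ideal.mem_span_singleton_self x))))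
  have h1 := Ideal.height_add_one_le_of_lt_of_isPrime hlt
  have h2 : I.height ≤ q.height := Ideal.height_mono hq.1.2
  refine le_trans ?_ h1
  push_cast
  gcongr
  exact h.trans h2

lemma exists_avoid {R : Type} [CommRing R] [IsNoetherianRing R] (I J : Ideal R)
    (h : ∀ q ∈ I.minimalPrimes, ¬ J ≤ q) : ∃ x ∈ J, ∀ q ∈ I.minimalPrimes, x ∉ q := by
  by_contra! hc
  have := (J.subset_union_prime_finite (I.finite_minimalPrimes_of_isNoetherianRing R)
    (f := id) 0 0 (fun q hq _ _ => hq.1.1)).1 (by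
      intro x hx
      obtain ⟨q, hq, hxq⟩ := hc x hx
      simp only [Set.mem_iUnion]
      exact ⟨q, hq, hxq⟩)
  obtain ⟨q, hq, hJ⟩ := this
  exact h q hq hJ

lemma height_le_length {R : Type} [CommRing R] [IsNoetherianRing R] (xs : List R) (q : Ideal R)
    (hq : q ∈ (Ideal.ofList xs).minimalPrimes) : q.height ≤ (xs.length : ℕ∞) := by
  classical
  have : (Ideal.ofList xs) = Ideal.span (xs.toFinset : Set R) := by
    simp [Ideal.ofList]
  rw [this] at hq
  refine (Ideal.height_le_card_of_mem_minimalPrimes_span_finset hq).trans ?_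
  exact_mod_cast List.toFinset_card_le xs

lemma le_radical_of_height {R : Type} [CommRing R] [IsNoetherianRing R] [IsLocalRing R]
    (I : Ideal R) (h : (maximalIdeal R).height ≤ I.height) : maximalIdeal R ≤ I.radical := by
  rw [Ideal.radical_eq_sInf]
  refine le_sInf fun q hq => ?_
  have hq2 := hq.2
  refine (Ideal.eq_of_le_of_height_le _ (IsLocalRing.le_maximalIdeal hq2.ne_top)
    (h.trans (Ideal.height_mono hq.1))).ge

lemma extend_sop {R : Type} [CommRing R] [IsNoetherianRing R] [IsLocalRing R]
    (d : ℕ) (hd : (maximalIdeal R).height = d) (k : ℕ) : ∀ (xs : List R)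
    (_ : ∀ x ∈ xs, x ∈ maximalIdeal R) (_ : (xs.length : ℕ∞) ≤ (Ideal.ofList xs).height)
    (_ : xs.length + k = d), ∃ ys : List R, ys.length = k ∧ (∀ y ∈ ys, y ∈ maximalIdeal R) ∧
      (d : ℕ∞) ≤ (Ideal.ofList (xs ++ ys)).height := by
  induction k with
  | zero =>
    intro xs hxs h1 h2
    refine ⟨[], rfl, by simp, ?_⟩
    rw [← h2]
    simpa using h1
  | succ k ih =>
    intro xs hxs h1 h2
    obtain ⟨x, hx, hxq⟩ := exists_avoid (Ideal.ofList xs) (maximalIdeal R) (by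
      intro q hq hle
      have h3 := height_le_length xs q hq
      have h4 := (Ideal.height_mono hle).trans h3
      rw [hd] at h4
      have : d ≤ xs.length := by exact_mod_cast h4
      omega)
    obtain ⟨ys, hy1, hy2, hy3⟩ := ih (xs ++ [x]) (by
      intro z hz
      simp only [List.mem_append, List.mem_singleton] at hz
      rcases hz with hz | rfl
      · exact hxs z hz
      · exact hx) (by
      rw [Ideal.ofList_append, Ideal.ofList_singleton, List.length_append, List.length_singleton]
      exact height_sup_span_singleton _ x _ h1 hxq) (by simp; omega)
    refine ⟨x :: ys, by simp [hy1], by simpa using ⟨hx, hy2⟩, by simpa using hy3⟩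

lemma DepthGE.localize {R : Type} [CommRing R] [IsNoetherianRing R] [IsLocalRing R]
    (d : ℕ) (hd : (maximalIdeal R).height = d) (M : Type) [AddCommGroup M] [Module R M]
    [Module.Finite R M] (hM : DepthGE R M d) (p : Ideal R) [p.IsPrime] (h : ℕ) (hh : p.height = h) :
    DepthGE (Localization.AtPrime p) (LocalizedModule p.primeCompl M) h := by
  obtain ⟨s, hs, hc⟩ := p.exists_finset_card_eq_height_of_isNoetherianRing
  obtain ⟨J, hJp, hJ1, hJ2⟩ := Ideal.exists_spanRank_eq_and_height_eq p (Ideal.IsPrime.ne_top ‹_›)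
  rw [hh] at hJ1 hJ2
  have hJfg : Submodule.FG J := IsNoetherian.noetherian J
  have hfr : J.spanFinrank = h := by
    rw [Submodule.fg_iff_spanRank_eq_spanFinrank.mpr hJfg] at hJ1
    exact_mod_cast hJ1
  have hfin := hJfg.finite_generators
  set xs := hfin.toFinset.toList with hxs
  have hlen : xs.length = h := by
    rw [hxs, Finset.length_toList, ← Set.ncard_eq_toFinset_card _ hfin, hJfg.generators_ncard, hfr]
  have hspan : Ideal.ofList xs = J := by
    have : {x | x ∈ xs} = J.generators := by
      ext x; simp [hxs]
    rw [Ideal.ofList, this]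
    exact Submodule.span_generators J
  have hxp : ∀ x ∈ xs, x ∈ p := fun x hx => hJp (hspan ▸ Ideal.subset_span hx)
  have hpm : p ≤ maximalIdeal R := IsLocalRing.le_maximalIdeal (Ideal.IsPrime.ne_top ‹_›)
  have hhd : h ≤ d := by
    have := Ideal.height_mono hpm
    rw [hh, hd] at this
    exact_mod_cast this
  obtain ⟨ys, hy1, hy2, hy3⟩ := extend_sop d hd (d - h) xs (fun x hx => hpm (hxp x hx))
    (by rw [hspan, hlen, hJ2]) (by omega)
  have hreg := sop_isWeaklyRegular (xs ++ ys) [] (by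
      intro z hz
      rcases List.mem_append.1 hz with hz | hz
      · exact hpm (hxp z hz)
      · exact hy2 z hz) M (by intro y hy; simp at hy) (by
      have := le_radical_of_height _ (hd.le.trans hy3)
      refine this.trans (Ideal.radical_mono (Ideal.span_mono ?_))
      intro x hx; simpa using hx) (by
      rwa [List.length_append, hlen, hy1, show h + (d - h) = d by omega])
  have hreg2 : RingTheory.Sequence.IsWeaklyRegular M xs :=
    ((RingTheory.Sequence.isWeaklyRegular_append_iff M xs ys).1 hreg).1
  have hreg3 := hreg2.of_isLocalizedModule (Localization.AtPrime p) p.primeCompl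
    (LocalizedModule.mkLinearMap p.primeCompl M)
  have := DepthGE.of_isWeaklyRegular (LocalizedModule p.primeCompl M) _ (by
    intro x hx
    obtain ⟨y, hy, rfl⟩ := List.mem_map.1 hx
    rw [← Localization.AtPrime.map_eq_maximalIdeal]
    exact Ideal.mem_map_of_mem _ (hxp y hy)) hreg3
  rwa [List.length_map, hlen] at this

lemma ringKrullDim_le_moduleDepth_iff (S : Type) [CommRing S] [IsLocalRing S] (M : Type)
    [AddCommGroup M] [Module S M] (h : ℕ) (hh : ringKrullDim S = h) :
    ringKrullDim S ≤ (moduleDepth S M : WithBot ℕ∞) ↔ DepthGE S M h := by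
  rw [hh, DepthGE, ← le_moduleDepth_iff]
  exact WithBot.coe_le_coe

lemma isMCM_of_depthGE {R : Type} [CommRing R] [IsNoetherianRing R] [IsLocalRing R]
    (d : ℕ) (hd : (maximalIdeal R).height = d) (M : Type) [AddCommGroup M] [Module R M]
    [Module.Finite R M] (hM : DepthGE R M d) : IsMCMModule R M := by
  intro p hp
  obtain ⟨h, hh⟩ := ENat.ne_top_iff_exists.1 (Ideal.height_ne_top_of_isPrime (I := p))
  rw [ringKrullDim_le_moduleDepth_iff _ _ h]
  · exact hM.localize d hd M p h hh.symm
  · rw [IsLocalization.AtPrime.ringKrullDim_eq_height p, ← hh]; rfl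

/-- Finitely generated modules. -/
def FGMod (R : Type) [CommRing R] := {N : ModuleCat.{0} R // Module.Finite R N}

lemma exists_cover {R : Type} [CommRing R] (N : FGMod R) :
    ∃ nf : Σ n : ℕ, (Fin n → R) →ₗ[R] N.1, Function.Surjective nf.2 := by
  have := N.2
  obtain ⟨n, f, hf⟩ := Module.Finite.exists_fin' R N.1
  exact ⟨⟨n, f⟩, hf⟩

/-- A chosen free cover. -/
def coverMap {R : Type} [CommRing R] (N : FGMod R) :
    (Fin (exists_cover N).choose.1 → R) →ₗ[R] N.1 := (exists_cover N).choose.2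

/-- The short complex of a syzygy. -/
def syzS {R : Type} [CommRing R] (N : FGMod R) : ShortComplex (ModuleCat.{0} R) :=
  (coverMap N).shortComplexKer

lemma syzS_exact {R : Type} [CommRing R] (N : FGMod R) : (syzS N).ShortExact :=
  LinearMap.shortExact_shortComplexKer (exists_cover N).choose_spec

/-- Chosen syzygy. -/
def syz {R : Type} [CommRing R] [IsNoetherianRing R] (N : FGMod R) : FGMod R :=
  ⟨(syzS N).X₁, inferInstanceAs (Module.Finite R (LinearMap.ker (coverMap N)))⟩

instance syzS_proj {R : Type} [CommRing R] (N : FGMod R) : Projective (syzS N).X₂ :=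
  inferInstanceAs (Projective (ModuleCat.of R (Fin (exists_cover N).choose.1 → R)))

lemma kill_of_syz {R : Type} [CommRing R] [IsNoetherianRing R] (N : FGMod R) (W : ModuleCat.{0} R)
    (a : R) (i : ℕ) (h : ∀ e : Abelian.Ext (syz N).1 W i, a • e = 0) :
    ∀ e : Abelian.Ext N.1 W (i+1), a • e = 0 := by
  intro e
  obtain ⟨e', rfl⟩ := Abelian.Ext.contravariant_sequence_exact₃ (syzS_exact N) W
    (show Abelian.Ext (syzS N).X₃ W (i+1) from e) 
    (Abelian.Ext.eq_zero_of_projective _) (add_comm 1 i)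
  have : a • e' = 0 := h e'
  have h2 : (syzS_exact N).extClass.comp (a • e') (add_comm 1 i) = 0 := by
    rw [this, Abelian.Ext.comp_zero]
  exact (Abelian.Ext.comp_smul _ _ _ _).symm.trans h2

lemma kill_syz {R : Type} [CommRing R] [IsNoetherianRing R] (N : FGMod R) (W : ModuleCat.{0} R)
    (a : R) (i : ℕ) (h : ∀ e : Abelian.Ext N.1 W (i+2), a • e = 0) :
    ∀ e : Abelian.Ext (syz N).1 W (i+1), a • e = 0 := by
  intro e
  have h2 : (syzS_exact N).extClass.comp (a • e) (add_comm 1 (i+1)) = 0 :=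
    (Abelian.Ext.comp_smul _ _ _ _).trans (h _)
  obtain ⟨e', he⟩ := Abelian.Ext.contravariant_sequence_exact₁ (syzS_exact N) W _ _ h2
  rw [Abelian.Ext.eq_zero_of_projective e', Abelian.Ext.comp_zero] at he
  exact he.symm

lemma kill_all {R : Type} [CommRing R] [IsNoetherianRing R] (M : FGMod R)
    (a : R) (h : ∀ e : Abelian.Ext M.1 (syz M).1 1, a • e = 0) (W : ModuleCat.{0} R) (i : ℕ) :
    ∀ e : Abelian.Ext M.1 W (i+1), a • e = 0 := by
  intro e
  obtain ⟨e', rfl⟩ := Abelian.Ext.contravariant_sequence_exact₃ (syzS_exact M) W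
    (show Abelian.Ext (syzS M).X₃ W (i+1) from e) 
    (Abelian.Ext.eq_zero_of_projective _) (add_comm 1 i)
  have : a • (syzS_exact M).extClass = 0 := h _
  have h2 : (a • (syzS_exact M).extClass).comp e' (add_comm 1 i) = 0 := by
    rw [this, Abelian.Ext.zero_comp]
  exact (Abelian.Ext.smul_comp _ _ _ _).symm.trans h2

lemma DepthGE.pi {S : Type} [CommRing S] [IsLocalRing S] (d : ℕ) (h : DepthGE S S d) (n : ℕ) :
    DepthGE S (Fin n → S) d := by
  intro i hi
  have h1 := h i hi
  set K := ModuleCat.of S (ResidueField S)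
  set F := ModuleCat.of S (Fin n → S)
  suffices ∀ e : Abelian.Ext K F i, e = 0 from ⟨fun a b => (this a).trans (this b).symm⟩
  intro e
  let φ : (F ⟶ F) →+ Abelian.Ext K F i := AddMonoidHom.mk' (fun f => e.comp (Abelian.Ext.mk₀ f)
    (add_zero i)) (fun a b => by rw [Abelian.Ext.mk₀_add, Abelian.Ext.comp_add])
  let π : Fin n → (F ⟶ ModuleCat.of S S) := fun j => ModuleCat.ofHom (LinearMap.proj j)
  let ι : Fin n → (ModuleCat.of S S ⟶ F) := fun j => ModuleCat.ofHom (LinearMap.single S (fun _ => S) j)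
  have hid : 𝟙 F = ∑ j, π j ≫ ι j := by
    apply ModuleCat.hom_ext
    rw [ModuleCat.hom_sum]
    refine LinearMap.ext fun v => ?_
    rw [LinearMap.sum_apply]
    exact (LinearMap.sum_single_apply (φ := fun _ => S) v).symm
  have : φ (𝟙 F) = e := Abelian.Ext.comp_mk₀_id e
  rw [← this, hid, map_sum]
  refine Finset.sum_eq_zero fun j _ => ?_
  change e.comp (Abelian.Ext.mk₀ (π j ≫ ι j)) (add_zero i) = 0
  rw [← Abelian.Ext.mk₀_comp_mk₀, ← Abelian.Ext.comp_assoc (h₁₂ := add_zero i) (h₂₃ := add_zero 0),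
    show e.comp (Abelian.Ext.mk₀ (π j)) (add_zero i) = 0 from h1.elim _ _, Abelian.Ext.zero_comp]
  simp

lemma DepthGE.syz {S : Type} [CommRing S] [IsNoetherianRing S] [IsLocalRing S] (d : ℕ)
    (h : DepthGE S S d) (N : FGMod S) (m : ℕ) (hm : m < d) (hN : DepthGE S N.1 m) :
    DepthGE S (syz N).1 (m+1) := by
  intro i hi
  set K := ModuleCat.of S (ResidueField S)
  have hF := (h.pi d (exists_cover N).choose.1) i (by omega)
  suffices ∀ e : Abelian.Ext K (syzS N).X₁ i, e = 0 from ⟨fun a b => (this a).trans (this b).symm⟩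
  intro e
  have h0 : e.comp (Abelian.Ext.mk₀ (syzS N).f) (add_zero i) = 0 := hF.elim _ _
  rcases i with _ | i
  · have := (syzS_exact N).mono_f
    exact Abelian.Ext.postcomp_mk₀_injective_of_mono K (syzS N).f (h0.trans
      (by simp))
  · obtain ⟨e', he'⟩ := Abelian.Ext.covariant_sequence_exact₁ K (syzS_exact N) e h0 rfl
    have h2 := hN i (by omega)
    rw [show e' = 0 from h2.elim _ _, Abelian.Ext.zero_comp] at he'
    exact he'.symm

lemma DepthGE.syz_iter {S : Type} [CommRing S] [IsNoetherianRing S] [IsLocalRing S] (d : ℕ)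
    (h : DepthGE S S d) (N : FGMod S) : ∀ m ≤ d, DepthGE S (_root_.syz^[m] N).1 m := by
  intro m
  induction m with
  | zero => intro _ i hi; omega
  | succ m ih =>
    intro hm
    rw [Function.iterate_succ_apply']
    exact h.syz d _ m (by omega) (ih (by omega))

lemma kill_of_syz_iter {R : Type} [CommRing R] [IsNoetherianRing R] (W : ModuleCat.{0} R)
    (a : R) (i : ℕ) (m : ℕ) : ∀ (N : FGMod R)
    (_ : ∀ e : Abelian.Ext (syz^[m] N).1 W i, a • e = 0),
    ∀ e : Abelian.Ext N.1 W (i+m), a • e = 0 := by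
  induction m with
  | zero => intro N h; exact h
  | succ m ih =>
    intro N h
    rw [Function.iterate_succ_apply] at h
    exact kill_of_syz N W a (i+m) (ih (syz N) h)

lemma kill_syz_iter {R : Type} [CommRing R] [IsNoetherianRing R] (W : ModuleCat.{0} R)
    (a : R) (m : ℕ) : ∀ (N : FGMod R)
    (_ : ∀ e : Abelian.Ext N.1 W (m+1), a • e = 0),
    ∀ e : Abelian.Ext (syz^[m] N).1 W 1, a • e = 0 := by
  induction m with
  | zero => intro N h; exact h
  | succ m ih =>
    intro N h
    rw [Function.iterate_succ_apply]
    exact ih (syz N) (kill_syz N W a m h)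

/-- projective dimension after localization -/
abbrev LocPD {R : Type} [CommRing R] (p : Ideal R) [p.IsPrime] (M : ModuleCat.{0} R) (n : ℕ) : Prop :=
  HasProjectiveDimensionLT ((ModuleCat.localizedModuleFunctor p.primeCompl).obj M) n

lemma locS {R : Type} [CommRing R] (p : Ideal R) [p.IsPrime] (N : FGMod R) :
    ((syzS N).map (ModuleCat.localizedModuleFunctor p.primeCompl)).ShortExact :=
  (syzS_exact N).map_of_exact _

lemma locS_proj {R : Type} [CommRing R] (p : Ideal R) [p.IsPrime] (N : FGMod R) :
    LocPD p (syzS N).X₂ 1 := by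
  have := ModuleCat.localizedModule_hasProjectiveDimensionLE 0 p.primeCompl (syzS N).X₂
  exact this

lemma locPD_mono {R : Type} [CommRing R] (p : Ideal R) [p.IsPrime] (M : ModuleCat.{0} R) (n m : ℕ)
    (hnm : n ≤ m) (h : LocPD p M n) : LocPD p M m :=
  hasProjectiveDimensionLT_of_ge _ n m hnm

lemma locPD_syz_of {R : Type} [CommRing R] [IsNoetherianRing R] (p : Ideal R) [p.IsPrime]
    (N : FGMod R) (h : LocPD p N.1 1) : LocPD p (syz N).1 1 := by
  exact (locS p N).hasProjectiveDimensionLT_X₁ 1 (locS_proj p N) (locPD_mono p N.1 1 2 (by omega) h)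

lemma locPD_of_syz {R : Type} [CommRing R] [IsNoetherianRing R] (p : Ideal R) [p.IsPrime]
    (N : FGMod R) (n : ℕ) (h : LocPD p (syz N).1 n) : LocPD p N.1 (n+1) := by
  exact (locS p N).hasProjectiveDimensionLT_X₃ n h
    (locPD_mono p (syzS N).X₂ 1 (n+1) (by omega) (locS_proj p N))

lemma locPD_iter {R : Type} [CommRing R] [IsNoetherianRing R] (p : Ideal R) [p.IsPrime]
    (n : ℕ) (m : ℕ) : ∀ (N : FGMod R) (_ : LocPD p (syz^[m] N).1 n), LocPD p N.1 (n+m) := by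
  induction m with
  | zero => intro N h; exact h
  | succ m ih =>
    intro N h
    rw [Function.iterate_succ_apply] at h
    exact locPD_of_syz p N _ (ih _ h)

lemma locPD_iter' {R : Type} [CommRing R] [IsNoetherianRing R] (p : Ideal R) [p.IsPrime]
    (N : FGMod R) (h : LocPD p N.1 1) (m : ℕ) : LocPD p (syz^[m] N).1 1 := by
  induction m with
  | zero => exact h
  | succ m ih => 
    rw [Function.iterate_succ_apply']
    exact locPD_syz_of p _ ih

lemma loc_map_smul {R : Type} [CommRing R] (p : Ideal R) [p.IsPrime] (M : ModuleCat.{0} R) (a : R) :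
    (ModuleCat.localizedModuleFunctor p.primeCompl).map (a • 𝟙 M) =
      (algebraMap R (Localization p.primeCompl) a) • 𝟙 _ := by
  have e1 : (ModuleCat.localizedModuleMap p.primeCompl (a • 𝟙 M)).hom =
      a • (ModuleCat.localizedModuleMap p.primeCompl (𝟙 M)).hom :=
      (IsLocalizedModule.mapExtendScalars p.primeCompl
        (M.localizedModuleMkLinearMap p.primeCompl)
        (M.localizedModuleMkLinearMap p.primeCompl) (Localization p.primeCompl)).map_smul
          a (𝟙 M : M ⟶ M).hom
  have e2 : ModuleCat.localizedModuleMap p.primeCompl (𝟙 M) = 𝟙 _ :=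
    (ModuleCat.localizedModuleFunctor p.primeCompl).map_id M
  apply ModuleCat.hom_ext
  refine LinearMap.ext fun x => ?_
  change (ModuleCat.localizedModuleMap p.primeCompl (a • 𝟙 M)).hom x = _
  rw [e1, e2]
  exact (algebraMap_smul (A := Localization p.primeCompl) a
    (show M.localizedModule p.primeCompl from x)).symm

lemma locPD_of_kill {R : Type} [CommRing R] [IsNoetherianRing R] (p : Ideal R) [p.IsPrime]
    (P : FGMod R) (a : R) (ha : a ∉ p) (h : ∀ e : Abelian.Ext P.1 (syz P).1 1, a • e = 0) :
    LocPD p P.1 1 := by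
  have h1 : (Abelian.Ext.mk₀ (a • 𝟙 (syzS P).X₃)).comp (syzS_exact P).extClass (zero_add 1) = 0 := by
    rw [Abelian.Ext.mk₀_smul, Abelian.Ext.smul_comp, Abelian.Ext.mk₀_id_comp]
    exact h _
  obtain ⟨x, hx⟩ := Abelian.Ext.covariant_sequence_exact₃ _ (syzS_exact P) _ _ h1
  obtain ⟨g, rfl⟩ := (Abelian.Ext.mk₀_bijective _ _).2 x
  rw [Abelian.Ext.mk₀_comp_mk₀] at hx
  have hg : g ≫ (syzS P).g = a • 𝟙 (syzS P).X₃ := (Abelian.Ext.mk₀_bijective _ _).1 hx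
  let L := ModuleCat.localizedModuleFunctor p.primeCompl
  have hL : L.map g ≫ L.map (syzS P).g =
      (algebraMap R (Localization p.primeCompl) a) • 𝟙 (L.obj (syzS P).X₃) := by
    rw [← L.map_comp, hg]
    exact loc_map_smul p _ a
  obtain ⟨u, hu⟩ := IsLocalization.map_units (Localization p.primeCompl) (⟨a, ha⟩ : p.primeCompl)
  have hp := locS_proj p P
  refine (Retract.mk (Y := L.obj (syzS P).X₂) (((u⁻¹ : Units _) : Localization p.primeCompl) • L.map g) (L.map (syzS P).g) ?_).hasProjectiveDimensionLT 1
  rw [Linear.smul_comp, hL, smul_smul, ← hu]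
  simp

lemma lTensor_quot_injective {S : Type} [CommRing S] (x : S) {A B C : Type} [AddCommGroup A]
    [Module S A] [AddCommGroup B] [Module S B] [AddCommGroup C] [Module S C]
    (f : A →ₗ[S] B) (g : B →ₗ[S] C) (hf : Function.Injective f) (hfg : Function.Exact f g)
    (hC : IsSMulRegular C x) : Function.Injective (f.lTensor (S ⧸ Ideal.span {x})) := by
  have h0 : Function.Exact (0 : PUnit.{1} →ₗ[S] A) f := by
    intro y
    constructor
    · intro h; exact ⟨0, by simpa using (hf (h.trans (map_zero f).symm)).symm⟩
    · rintro ⟨z, rfl⟩; simp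
  have h1 := QuotSMulTop.map_first_exact_on_four_term_exact_of_isSMulRegular_last h0 hfg hC
  rw [map_zero] at h1
  have h2 : Function.Injective (QuotSMulTop.map x f) := by
    rw [injective_iff_map_eq_zero]
    intro a ha
    obtain ⟨z, hz⟩ := (h1 a).1 ha
    simpa using hz.symm
  have h3 := QuotSMulTop.equivQuotTensor_naturality x f
  have h4 : Function.Injective
      (f.lTensor (S ⧸ Ideal.span {x}) ∘ₗ (QuotSMulTop.equivQuotTensor x A).toLinearMap) := by
    rw [← h3]
    exact (QuotSMulTop.equivQuotTensor x B).injective.comp h2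
  intro u v huv
  obtain ⟨u, rfl⟩ := (QuotSMulTop.equivQuotTensor x A).surjective u
  obtain ⟨v, rfl⟩ := (QuotSMulTop.equivQuotTensor x A).surjective v
  rw [h4 huv]

open TensorProduct in
lemma shortExact_quot {S : Type} [CommRing S] (x : S) {A B C : Type} [AddCommGroup A]
    [Module S A] [AddCommGroup B] [Module S B] [AddCommGroup C] [Module S C]
    (f : A →ₗ[S] B) (g : B →ₗ[S] C) (hf : Function.Injective f) (hfg : Function.Exact f g)
    (hg : Function.Surjective g) (hC : IsSMulRegular C x) :
    ∃ T : ShortComplex (ModuleCat.{0} (S ⧸ Ideal.span {x})), T.ShortExact ∧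
      T.X₁ = ModuleCat.of _ ((S ⧸ Ideal.span {x}) ⊗[S] A) ∧
      T.X₂ = ModuleCat.of _ ((S ⧸ Ideal.span {x}) ⊗[S] B) ∧
      T.X₃ = ModuleCat.of _ ((S ⧸ Ideal.span {x}) ⊗[S] C) := by
  have h1 := lTensor_exact (S ⧸ Ideal.span {x}) hfg hg
  have h2 := lTensor_quot_injective x f g hf hfg hC
  have h3 := LinearMap.lTensor_surjective (S ⧸ Ideal.span {x}) hg
  refine ⟨ShortComplex.mk (ModuleCat.ofHom (f.baseChange (S ⧸ Ideal.span {x})))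
          (ModuleCat.ofHom (g.baseChange (S ⧸ Ideal.span {x}))) ?_, ?_, rfl, rfl, rfl⟩
  · rw [← ModuleCat.ofHom_comp, ← LinearMap.baseChange_comp, hfg.linearMap_comp_eq_zero]
    simp
  · exact ModuleCat.shortComplex_shortExact _ h1 h2 h3

open TensorProduct in
lemma shortExact_quot_ker {S : Type} [CommRing S] (x : S) {B C : Type}
    [AddCommGroup B] [Module S B] [AddCommGroup C] [Module S C]
    (g : B →ₗ[S] C)
    (hg : Function.Surjective g) (hC : IsSMulRegular C x) :
    ∃ T : ShortComplex (ModuleCat.{0} (S ⧸ Ideal.span {x})), T.ShortExact ∧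
      T.X₁ = ModuleCat.of _ ((S ⧸ Ideal.span {x}) ⊗[S] (LinearMap.ker g)) ∧
      T.X₂ = ModuleCat.of _ ((S ⧸ Ideal.span {x}) ⊗[S] B) ∧
      T.X₃ = ModuleCat.of _ ((S ⧸ Ideal.span {x}) ⊗[S] C) := 
  shortExact_quot x (LinearMap.ker g).subtype g
        Subtype.val_injective (LinearMap.exact_subtype_ker_map g) hg hC

open TensorProduct in
lemma pd_baseChange {S : Type} [CommRing S] (x : S) (hx : IsSMulRegular S x) (n : ℕ) :
    ∀ (M : ModuleCat.{0} S), IsSMulRegular M x → HasProjectiveDimensionLT M n →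
      HasProjectiveDimensionLT (ModuleCat.of (S ⧸ Ideal.span {x}) ((S ⧸ Ideal.span {x}) ⊗[S] M)) n := by
  induction n with
  | zero =>
    intro M _ h
    have : Subsingleton M := ModuleCat.isZero_iff_subsingleton.1
      ((hasProjectiveDimensionLT_zero_iff_isZero M).1 h)
    rw [hasProjectiveDimensionLT_zero_iff_isZero, ModuleCat.isZero_iff_subsingleton]
    infer_instance
  | succ n ih =>
    intro M hM h
    rcases Nat.eq_zero_or_pos n with rfl | hn
    · have hP : Projective M := (projective_iff_hasProjectiveDimensionLT_one).2 h
      have : Module.Projective S M := (IsProjective.iff_projective M).2 hP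
      have h2 : Projective (ModuleCat.of (S ⧸ Ideal.span {x}) ((S ⧸ Ideal.span {x}) ⊗[S] M)) :=
        ModuleCat.projective_of_categoryTheory_projective _
      exact (projective_iff_hasProjectiveDimensionLT_one).1 h2
    · obtain ⟨n, rfl⟩ : ∃ m, n = m + 1 := ⟨n-1, by omega⟩
      let g : (M →₀ S) →ₗ[S] M := Finsupp.linearCombination S id
      have hg : Function.Surjective g := Finsupp.linearCombination_id_surjective S M
      have hE := LinearMap.shortExact_shortComplexKer hg
      have hK := (hE.hasProjectiveDimensionLT_X₃_iff n
        (inferInstanceAs (Projective (ModuleCat.of S (M →₀ S))))).1 h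
      have hF : IsSMulRegular (M →₀ S) x := by
        intro u v huv
        ext i
        exact hx (by simpa using DFunLike.congr_fun huv i)
      have hKr : IsSMulRegular (LinearMap.ker g) x :=
        hF.of_injective (LinearMap.ker g).subtype Subtype.val_injective
      have := ih (ModuleCat.of S (LinearMap.ker g)) hKr hK
      obtain ⟨T, hT, h1, h2, h3⟩ := shortExact_quot_ker x g hg hM
      have hp : Projective T.X₂ := by
        rw [h2]; exact ModuleCat.projective_of_categoryTheory_projective _
      rw [← h3]
      refine (hT.hasProjectiveDimensionLT_X₃_iff n hp).2 ?_
      rw [h1]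
      exact this

open TensorProduct in
lemma exists_minimal_cover {S : Type} [CommRing S] [IsLocalRing S] (M : Type) [AddCommGroup M]
    [Module S M] [Module.Finite S M] :
    ∃ (ι : Type) (_ : Finite ι) (g : (ι →₀ S) →ₗ[S] M), Function.Surjective g ∧
      ∀ c ∈ LinearMap.ker g, ∀ i, c i ∈ maximalIdeal S := by
  let b := Module.Free.chooseBasis (ResidueField S) ((ResidueField S) ⊗[S] M)
  have hs : Function.Surjective (TensorProduct.mk S (ResidueField S) M 1) :=
    TensorProduct.mk_surjective S M (ResidueField S) Ideal.Quotient.mk_surjective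
  choose v hv using fun i => hs (b i)
  refine ⟨_, inferInstance, Finsupp.linearCombination S v, ?_, ?_⟩
  · rw [← LinearMap.range_eq_top, Finsupp.range_linearCombination]
    exact IsLocalRing.span_eq_top_of_tmul_eq_basis v b hv
  · intro c hc i
    have h1 : TensorProduct.mk S (ResidueField S) M 1 (Finsupp.linearCombination S v c) = 0 := by
      rw [LinearMap.mem_ker.1 hc, map_zero]
    rw [Finsupp.linearCombination_apply, Finsupp.sum_fintype _ _ (by simp), map_sum] at h1
    have h2 : ∑ i, residue S (c i) • b i = 0 := by
      rw [← h1]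
      refine Finset.sum_congr rfl fun i _ => ?_
      rw [map_smul, hv]
      exact algebraMap_smul (ResidueField S) (c i) (b i)
    have := Fintype.linearIndependent_iff.1 b.linearIndependent _ h2 i
    rwa [residue_eq_zero_iff] at this

lemma projective_of_socle {S : Type} [CommRing S] [IsLocalRing S] [IsNoetherianRing S]
    (a : S) (ha : a ≠ 0) (hsoc : ∀ y ∈ maximalIdeal S, a * y = 0) (n : ℕ) :
    ∀ (M : Type) [AddCommGroup M] [Module S M] [Module.Finite S M],
      HasProjectiveDimensionLT (ModuleCat.of S M) (n+1) → Module.Projective S M := by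
  induction n with
  | zero =>
    intro M _ _ _ h
    exact (IsProjective.iff_projective (R := S) M).2 (projective_iff_hasProjectiveDimensionLT_one.2 h)
  | succ n ih =>
    intro M _ _ _ h
    obtain ⟨ι, _, g, hg, hker⟩ := exists_minimal_cover (S := S) M
    have hE := LinearMap.shortExact_shortComplexKer hg
    have hK := (hE.hasProjectiveDimensionLT_X₃_iff n
        (inferInstanceAs (Projective (ModuleCat.of S (ι →₀ S))))).1 h
    have hKP : Module.Projective S (LinearMap.ker g) := ih (LinearMap.ker g) hK
    have hKF : Module.Free S (LinearMap.ker g) := by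
      have := Module.Finite.of_fg (IsNoetherian.noetherian (LinearMap.ker g))
      exact Module.free_of_flat_of_isLocalRing (R := S) (P := LinearMap.ker g)
    have hz : ∀ c : LinearMap.ker g, a • c = 0 := by
      intro c
      ext i
      simpa using hsoc _ (hker c.1 c.2 i)
    have hbot : LinearMap.ker g = ⊥ := by
      by_contra hne
      have : Nontrivial (LinearMap.ker g) := (Submodule.nontrivial_iff_ne_bot).2 hne
      let b := Module.Free.chooseBasis S (LinearMap.ker g)
      obtain ⟨i⟩ := b.index_nonempty
      have h1 := hz (b i)
      have h2 := congrArg (fun v => b.repr v i) h1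
      simp at h2
      exact ha h2
    exact Module.Projective.of_equiv (LinearEquiv.ofBijective g ⟨LinearMap.ker_eq_bot.1 hbot, hg⟩)

lemma exists_regular_notMem_sq {S : Type} [CommRing S] [IsLocalRing S] [IsNoetherianRing S]
    (hm : maximalIdeal S ≠ ⊥) (n : ℕ)
    (h : HasProjectiveDimensionLT (ModuleCat.of S (ResidueField S)) n) :
    ∃ x ∈ maximalIdeal S, x ∉ maximalIdeal S ^ 2 ∧ IsSMulRegular S x := by
  have hass : maximalIdeal S ∉ associatedPrimes S S := by
    rintro hA
    rw [AssociatedPrimes.mem_iff, isAssociatedPrime_iff] at hA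
    obtain ⟨_, a, ha⟩ := hA
    have hm' : ∀ y ∈ maximalIdeal S, a * y = 0 := by
      intro y hy
      rw [ha, Submodule.mem_colon_singleton] at hy
      simpa [mul_comm] using hy
    have ha0 : a ≠ 0 := by
      rintro rfl
      have : (1 : S) ∈ maximalIdeal S := by rw [ha, Submodule.mem_colon_singleton]; simp
      exact (Ideal.ne_top_iff_one _).1 (maximalIdeal.isMaximal S).ne_top this
    have hP : Module.Projective S (ResidueField S) := projective_of_socle a ha0 hm' n _
      (hasProjectiveDimensionLT_of_ge _ n (n+1) (by omega))
    have hF : Module.Free S (ResidueField S) := Module.free_of_flat_of_isLocalRing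
    apply hm
    rw [eq_bot_iff]
    intro y hy
    let b := Module.Free.chooseBasis S (ResidueField S)
    obtain ⟨i⟩ := b.index_nonempty
    have h1 : y • b i = 0 := by
      rw [Algebra.smul_def]
      have : algebraMap S (ResidueField S) y = 0 := (residue_eq_zero_iff y).2 hy
      rw [this, zero_mul]
    have h2 := congrArg (fun v => b.repr v i) h1
    simpa using h2
  have hfin := associatedPrimes.finite S S
  by_contra hcon
  push Not at hcon
  have hsub : (maximalIdeal S : Set S) ⊆ ⋃ q ∈ insert (maximalIdeal S ^ 2) (associatedPrimes S S), (q : Set S) := by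
    intro x hx
    by_cases hx2 : x ∈ maximalIdeal S ^ 2
    · exact Set.mem_biUnion (Set.mem_insert _ _) hx2
    · have hr := hcon x hx hx2
      have : x ∈ ⋃ p ∈ associatedPrimes S S, (p : Set S) := by
        rw [biUnion_associatedPrimes_eq_compl_regular]
        exact hr
      obtain ⟨q, hq, hxq⟩ := Set.mem_iUnion₂.1 this
      exact Set.mem_biUnion (Set.mem_insert_of_mem _ hq) hxq
  rw [Ideal.subset_union_prime_finite (hfin.insert _) (maximalIdeal S ^ 2) (maximalIdeal S ^ 2)] at hsub
  · obtain ⟨q, hq, hle⟩ := hsub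
    rcases hq with rfl | hq
    · apply hm
      refine Submodule.eq_bot_of_le_smul_of_le_jacobson_bot (maximalIdeal S) (maximalIdeal S)
        (IsNoetherian.noetherian _) ?_ (maximalIdeal_le_jacobson _)
      rw [pow_two] at hle
      exact hle
    · have hqp : q.IsPrime := IsAssociatedPrime.isPrime hq
      have := (maximalIdeal.isMaximal S).eq_of_le hqp.ne_top hle
      exact hass (this ▸ hq)
  · intro q hq h1 _
    rcases hq with rfl | hq
    · exact absurd rfl h1
    · exact IsAssociatedPrime.isPrime hq

open TensorProduct in
lemma pd_residue_quot {S : Type} [CommRing S] [IsLocalRing S] [IsNoetherianRing S] (x : S)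
    (hxm : x ∈ maximalIdeal S) (hx2 : x ∉ maximalIdeal S ^ 2) (hx : IsSMulRegular S x)
    [IsLocalRing (S ⧸ Ideal.span {x})] (n : ℕ)
    (h : HasProjectiveDimensionLT (ModuleCat.of S (ResidueField S)) (n+2)) :
    HasProjectiveDimensionLT (ModuleCat.of (S ⧸ Ideal.span {x})
      (ResidueField (S ⧸ Ideal.span {x}))) (n+1) := by
  have hm : HasProjectiveDimensionLT (ModuleCat.of S (maximalIdeal S)) (n+1) := by
    have hE : (ShortComplex.mk (ModuleCat.ofHom (maximalIdeal S).subtype)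
        (ModuleCat.ofHom (Submodule.mkQ (maximalIdeal S))) (by
          ext y; exact Ideal.Quotient.eq_zero_iff_mem.2 y.2)).ShortExact := by
      refine ModuleCat.shortComplex_shortExact _ ?_ ?_ ?_
      · exact LinearMap.exact_subtype_mkQ _
      · exact Subtype.val_injective
      · exact Submodule.mkQ_surjective _
    exact (hE.hasProjectiveDimensionLT_X₃_iff n (inferInstanceAs (Projective (ModuleCat.of S S)))).1 h
  have h1 := pd_baseChange x hx (n+1) (ModuleCat.of S (maximalIdeal S))
    (hx.of_injective (maximalIdeal S).subtype Subtype.val_injective) hm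
  let S' := S ⧸ Ideal.span {x}
  have hmm : ∀ y ∈ maximalIdeal S, algebraMap S S' y ∈ maximalIdeal S' := by
    intro y hy
    rw [mem_maximalIdeal, mem_nonunits_iff]
    intro hu
    obtain ⟨z, hz⟩ := hu.exists_right_inv
    obtain ⟨z, rfl⟩ := Ideal.Quotient.mk_surjective z
    have : y * z - 1 ∈ Ideal.span {x} := by
      rw [← Ideal.Quotient.eq, map_mul, map_one]; exact hz
    have h3 : y * z - 1 ∈ maximalIdeal S :=
      (Ideal.span_singleton_le_iff_mem _).2 hxm this
    have : (1:S) ∈ maximalIdeal S := by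
      have := Ideal.sub_mem _ (Ideal.mul_mem_right z _ hy) h3
      rwa [sub_sub_cancel] at this
    exact (Ideal.ne_top_iff_one _).1 (maximalIdeal.isMaximal S).ne_top this
  let xm : maximalIdeal S := ⟨x, hxm⟩
  -- inclusion
  let i : ResidueField S' →ₗ[S'] (S' ⊗[S] (maximalIdeal S)) :=
    Submodule.liftQ (maximalIdeal S') (LinearMap.toSpanSingleton S' _ (1 ⊗ₜ[S] xm)) (by
      intro y hy
      obtain ⟨y, rfl⟩ := Ideal.Quotient.mk_surjective y
      have hym : y ∈ maximalIdeal S := by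
        by_contra hcon
        have hu : IsUnit y := by simpa using hcon
        exact (mem_nonunits_iff.1 ((mem_maximalIdeal _).1 hy)) (hu.map _)
      rw [LinearMap.mem_ker, LinearMap.toSpanSingleton_apply]
      have e1 : (Ideal.Quotient.mk (Ideal.span {x}) y) • ((1 : S') ⊗ₜ[S] xm) =
        y • ((1 : S') ⊗ₜ[S] xm) := algebraMap_smul S' y ((1 : S') ⊗ₜ[S] xm)
      rw [e1, ← TensorProduct.tmul_smul]
      have e2 : y • xm = x • (⟨y, hym⟩ : maximalIdeal S) := by
        ext; simp [xm, mul_comm]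
      rw [e2, ← TensorProduct.smul_tmul]
      have e3 : x • (1 : S') = 0 := by
        rw [Algebra.smul_def, mul_one]
        exact Ideal.Quotient.eq_zero_iff_mem.2 (Ideal.mem_span_singleton_self x)
      rw [e3, TensorProduct.zero_tmul])
  have hi : i 1 = 1 ⊗ₜ[S] xm := by
    change LinearMap.toSpanSingleton S' _ ((1 : S') ⊗ₜ[S] xm) 1 = _
    simp
  let q : ResidueField S →ₗ[S] ResidueField S' :=
    Submodule.liftQ (maximalIdeal S) (Algebra.linearMap S (ResidueField S')) (by
      intro y hy
      rw [LinearMap.mem_ker, Algebra.linearMap_apply, IsScalarTower.algebraMap_apply S S']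
      exact (residue_eq_zero_iff _).2 (hmm y hy))
  have hq : q 1 = 1 := by
    change Algebra.linearMap S (ResidueField S') 1 = 1
    simp
  have hne : (maximalIdeal S).toCotangent xm ≠ 0 := by
    intro h0
    rw [Ideal.toCotangent_eq_zero] at h0
    exact hx2 h0
  obtain ⟨f, hf⟩ : ∃ f : CotangentSpace S →ₗ[ResidueField S] ResidueField S,
      f ((maximalIdeal S).toCotangent xm) = 1 := by
    by_contra hcon
    push Not at hcon
    apply hne
    rw [← Module.forall_dual_apply_eq_zero_iff (ResidueField S)]
    intro f
    by_contra h0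
    apply hcon ((f ((maximalIdeal S).toCotangent xm))⁻¹ • f)
    exact inv_mul_cancel₀ h0
  let l : maximalIdeal S →ₗ[S] ResidueField S' :=
    q ∘ₗ (f.restrictScalars S) ∘ₗ (maximalIdeal S).toCotangent
  have hl : l xm = 1 := by
    change q (f _) = 1
    rw [hf, hq]
  let r : (S' ⊗[S] (maximalIdeal S)) →ₗ[S'] ResidueField S' := l.liftBaseChange S'
  have hr : r (1 ⊗ₜ[S] xm) = 1 := by
    simp [r, hl]
  refine (Retract.mk (Y := ModuleCat.of S' (S' ⊗[S] (maximalIdeal S))) (ModuleCat.ofHom i)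
    (ModuleCat.ofHom r) ?_).hasProjectiveDimensionLT (n+1)
  rw [← ModuleCat.ofHom_comp]
  ext y
  obtain ⟨y, rfl⟩ := residue_surjective y
  have e : residue S' y = y • (1 : ResidueField S') := by
    rw [Algebra.smul_def, mul_one]; rfl
  change r (i (residue S' y)) = residue S' y
  rw [e, map_smul, map_smul, hi, hr]

lemma serre_aux (d : ℕ) : ∀ (S : Type) [CommRing S] [IsLocalRing S] [IsNoetherianRing S],
    ringKrullDim S < d → (∃ n, HasProjectiveDimensionLT (ModuleCat.of S (ResidueField S)) n) →
    ∃ s : Finset S, Ideal.span (s : Set S) = maximalIdeal S ∧ (s.card : WithBot ℕ∞) ≤ ringKrullDim S := by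
  induction d with
  | zero =>
    intro S _ _ _ h
    exact absurd h (not_lt.2 (by simpa using ringKrullDim_nonneg_of_nontrivial (R := S)))
  | succ d ih =>
    intro S _ _ _ hd ⟨n, hn⟩
    by_cases hm : maximalIdeal S = ⊥
    · exact ⟨∅, by simp [hm], by simpa using ringKrullDim_nonneg_of_nontrivial (R := S)⟩
    obtain ⟨x, hxm, hx2, hx⟩ := exists_regular_notMem_sq hm n hn
    have hne : Ideal.span {x} ≠ ⊤ := fun h =>
      (maximalIdeal.isMaximal S).ne_top (top_le_iff.1 (h ▸ (Ideal.span_singleton_le_iff_mem _).2 hxm))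
    have : Nontrivial (S ⧸ Ideal.span {x}) := Ideal.Quotient.nontrivial_iff.2 hne
    have : IsLocalRing (S ⧸ Ideal.span {x}) :=
      IsLocalRing.of_surjective' (Ideal.Quotient.mk (Ideal.span {x})) Ideal.Quotient.mk_surjective
    have hpd := pd_residue_quot x hxm hx2 hx n (hasProjectiveDimensionLT_of_ge _ n (n+2) (by omega))
    have hnz : x ∈ nonZeroDivisors S := by
      rw [mem_nonZeroDivisors_iff_right]
      intro z hz
      exact hx (by simpa [mul_comm] using hz)
    have hdim := ringKrullDim_quotient_succ_le_of_nonZeroDivisor hnz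
    have hlt : ringKrullDim (S ⧸ Ideal.span {x}) < d := by
      have h1 := lt_of_le_of_lt hdim hd
      by_contra hcon
      rw [not_lt] at hcon
      have h2 : (d : WithBot ℕ∞) + 1 ≤ ringKrullDim (S ⧸ Ideal.span {x}) + 1 := by gcongr
      exact absurd (lt_of_le_of_lt h2 h1) (by push_cast; exact lt_irrefl _)
    obtain ⟨s, hs, hcard⟩ := ih _ hlt ⟨n+1, hpd⟩
    classical
    let lift := Function.surjInv (Ideal.Quotient.mk_surjective (I := Ideal.span {x}))
    have hlift : ∀ y, Ideal.Quotient.mk (Ideal.span {x}) (lift y) = y :=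
      Function.surjInv_eq _
    refine ⟨insert x (s.image lift), ?_, ?_⟩
    · have e1 : Ideal.map (Ideal.Quotient.mk (Ideal.span {x})) (Ideal.span (s.image lift : Set S)) =
          maximalIdeal _ := by
        rw [Ideal.map_span, ← hs]
        congr 1
        ext y
        simp only [Finset.coe_image, Set.mem_image, Finset.mem_coe]
        constructor
        · rintro ⟨_, ⟨z, hz, rfl⟩, rfl⟩
          rwa [hlift]
        · intro hy
          exact ⟨_, ⟨y, hy, rfl⟩, hlift y⟩
      have e2 := congrArg (Ideal.comap (Ideal.Quotient.mk (Ideal.span {x}))) e1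
      rw [Ideal.comap_map_of_surjective _ Ideal.Quotient.mk_surjective, ← RingHom.ker_eq_comap_bot,
        Ideal.mk_ker] at e2
      rw [Finset.coe_insert, Ideal.span_insert, sup_comm, e2]
      have := Ideal.comap_isMaximal_of_surjective (Ideal.Quotient.mk (Ideal.span {x}))
        Ideal.Quotient.mk_surjective (K := maximalIdeal (S ⧸ Ideal.span {x}))
      exact IsLocalRing.eq_maximalIdeal this
    · refine le_trans ?_ hdim
      refine le_trans ?_ (add_le_add_left hcard 1)
      have : (insert x (s.image lift)).card ≤ s.card + 1 :=
        (Finset.card_insert_le _ _).trans (Nat.add_le_add_right Finset.card_image_le 1)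
      exact_mod_cast this

theorem serre_regular (S : Type) [CommRing S] [IsLocalRing S] [IsNoetherianRing S] (n : ℕ)
    (h : HasProjectiveDimensionLT (ModuleCat.of S (ResidueField S)) n) : IsRegularLocal S := by
  have hfin : ringKrullDim S < ((maximalIdeal S).spanFinrank + 1 : ℕ) := 
    lt_of_le_of_lt (ringKrullDim_le_spanFinrank_maximalIdeal S)
      (by exact_mod_cast Nat.lt_succ_self _)
  obtain ⟨s, hs, hc⟩ := serre_aux _ S hfin ⟨n, h⟩
  refine ⟨inferInstance, s, hs, le_antisymm hc ?_⟩
  refine (ringKrullDim_le_spanFinrank_maximalIdeal S).trans ?_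
  have := Submodule.spanFinrank_span_le_ncard_of_finite (R := S) s.finite_toSet
  rw [Set.ncard_coe_finset] at this
  rw [← hs]
  exact_mod_cast this

lemma locPD_residue {R : Type} [CommRing R] (p : Ideal R) [p.IsPrime] (n : ℕ)
    (h : LocPD p (ModuleCat.of R (R ⧸ p)) n) :
    HasProjectiveDimensionLT (ModuleCat.of (Localization.AtPrime p)
      (ResidueField (Localization.AtPrime p))) n := by
  let g := (p : Submodule R R).toLocalizedQuotient' (Localization.AtPrime p) p.primeCompl
    (Algebra.linearMap R (Localization.AtPrime p))
  have hmax : Submodule.localized' (Localization.AtPrime p) p.primeCompl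
    (Algebra.linearMap R (Localization.AtPrime p)) (p : Submodule R R) =
      maximalIdeal (Localization.AtPrime p) := by
    rw [Ideal.localized'_eq_map]
    exact Localization.AtPrime.map_eq_maximalIdeal
  let e1 := IsLocalizedModule.linearEquiv p.primeCompl
    (LocalizedModule.mkLinearMap p.primeCompl (R ⧸ p)) g
  let e2 := e1.extendScalarsOfIsLocalization p.primeCompl (Localization.AtPrime p)
  let e3 := Submodule.quotEquivOfEq _ _ hmax
  let e4 : Shrink.{0} (LocalizedModule p.primeCompl (R ⧸ p)) ≃ₗ[Localization.AtPrime p]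
      LocalizedModule p.primeCompl (R ⧸ p) := Shrink.linearEquiv _ _
  exact @hasProjectiveDimensionLT_of_iso _ _ _ _ _ (e4 ≪≫ₗ e2 ≪≫ₗ e3).toModuleIso n h

lemma locPD_free {R : Type} [CommRing R] [IsNoetherianRing R] (p : Ideal R) [p.IsPrime]
    (M : FGMod R) (h : LocPD p M.1 1) :
    Module.Free (Localization.AtPrime p) (LocalizedModule p.primeCompl M.1) := by
  have := M.2
  have h1 : Projective ((ModuleCat.localizedModuleFunctor p.primeCompl).obj M.1) :=
    projective_iff_hasProjectiveDimensionLT_one.2 h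
  let e4 : Shrink.{0} (LocalizedModule p.primeCompl M.1) ≃ₗ[Localization.AtPrime p]
      LocalizedModule p.primeCompl M.1 := Shrink.linearEquiv _ _
  have h2 : Module.Projective (Localization.AtPrime p)
      (Shrink.{0} (LocalizedModule p.primeCompl M.1)) :=
    (IsProjective.iff_projective (R := Localization.AtPrime p) _).2 h1
  have h3 : Module.Projective (Localization.AtPrime p) (LocalizedModule p.primeCompl M.1) :=
    Module.Projective.of_equiv e4
  have h4 : Module.Finite (Localization.AtPrime p) (LocalizedModule p.primeCompl M.1) :=
    Module.Finite.of_isLocalizedModule p.primeCompl (LocalizedModule.mkLinearMap p.primeCompl M.1)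
  exact Module.free_of_flat_of_isLocalRing

lemma locPD_of_subsingleton {R : Type} [CommRing R] (p : Ideal R) [p.IsPrime] (M : ModuleCat.{0} R)
    (h : Subsingleton (LocalizedModule p.primeCompl M)) : LocPD p M 1 := by
  have : Subsingleton (Shrink.{0} (LocalizedModule p.primeCompl M)) :=
    (equivShrink _).symm.subsingleton
  have hz : Limits.IsZero ((ModuleCat.localizedModuleFunctor p.primeCompl).obj M) :=
    ModuleCat.isZero_iff_subsingleton.2 this
  have := hz.hasProjectiveDimensionLT_zero
  exact locPD_mono p M 0 1 (by omega) this

lemma memCM0_syz {R : Type} [CommRing R] [IsNoetherianRing R] [IsLocalRing R] (d : ℕ)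
    (hd : (maximalIdeal R).height = d) (hR : DepthGE R R d) (zs : List R)
    (hzs : Ideal.span {z | z ∈ zs} = maximalIdeal R) (L : FGMod R) (hL : TorsBy zs L.1) (m : ℕ) :
    MemCM0 R (syz^[d + m] L).1 := by
  refine ⟨(syz^[d + m] L).2, ?_, ?_⟩
  · have := (syz^[d + m] L).2
    apply isMCM_of_depthGE d hd
    rw [Function.iterate_add_apply]
    exact DepthGE.syz_iter d hR _ d le_rfl
  · intro q hq hqm
    apply locPD_free
    apply locPD_iter'
    apply locPD_of_subsingleton
    obtain ⟨z, hz, hzq⟩ : ∃ z ∈ zs, z ∉ q := by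
      by_contra hcon
      push Not at hcon
      apply hqm
      refine ((maximalIdeal.isMaximal R).eq_of_le hq.ne_top ?_).symm
      rw [← hzs, Ideal.span_le]
      exact hcon
    obtain ⟨c, hc⟩ := hL z hz
    rw [IsLocalizedModule.subsingleton_iff q.primeCompl (LocalizedModule.mkLinearMap q.primeCompl L.1)]
    intro y
    exact ⟨z ^ c, fun hh => hzq (hq.mem_of_pow_mem c hh), hc y⟩

theorem regular_of_kill {R : Type} [CommRing R] [IsNoetherianRing R] [IsLocalRing R] 
    (hCM : IsCMLocalRing R) (p : Ideal R) [p.IsPrime] (a : R) (hap : a ∉ p)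
    (ha : ∀ M N : ModuleCat.{0} R, MemCM0 R M → MemCM0 R N →
      ∀ e : Abelian.Ext M N 1, a • e = 0) :
    IsRegularLocal (Localization.AtPrime p) := by
  obtain ⟨d, hd'⟩ := ENat.ne_top_iff_exists.1 (Ideal.height_ne_top_of_isPrime (I := maximalIdeal R))
  have hd := hd'.symm
  have hdim : ringKrullDim R = d := by
    rw [← IsLocalRing.maximalIdeal_height_eq_ringKrullDim, hd]; rfl
  have hR : DepthGE R R d := (ringKrullDim_le_moduleDepth_iff R R d hdim).1 (le_of_eq hCM.symm)
  obtain ⟨T, hT⟩ := (IsNoetherian.noetherian (maximalIdeal R))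
  have hzs : Ideal.span {z | z ∈ T.toList} = maximalIdeal R := by
    simpa using! hT
  have hzm : ∀ z ∈ T.toList, z ∈ maximalIdeal R := fun z hz => by
    rw [← hzs]; exact Ideal.subset_span hz
  have hkey : ∀ W : ModuleCat.{0} R, ∀ N : ModuleCat.{0} R, Module.Finite R N → TorsBy T.toList N →
      TorsBy ([] : List R) N → ∀ i, d < i → ∀ e : Abelian.Ext N W i, a • e = 0 := by
    intro W N hN hTN _ i hi
    let L : FGMod R := ⟨N, hN⟩
    have h0 := memCM0_syz d hd hR T.toList hzs L hTN 0
    have h1 := memCM0_syz d hd hR T.toList hzs L hTN 1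
    rw [add_zero] at h0
    rw [Function.iterate_succ_apply'] at h1
    have h2 := kill_all (syz^[d] L) a (ha _ _ h0 h1) W (i - d - 1)
    have h3 := kill_of_syz_iter W a _ d L h2
    have e : i - d - 1 + 1 + d = i := by omega
    rw [e] at h3
    exact h3
  let N : FGMod R := ⟨ModuleCat.of R (R ⧸ p), inferInstanceAs (Module.Finite R (R ⧸ p))⟩
  have hW := (syz^[d+1] N).2
  have h4 := devissage (syz^[d+1] N).1 (fun i => d < i) a T.toList hzm [] (hkey _) N.1 N.2
    (by intro y hy; simp at hy) (d+1) (by intro j _; omega)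
  have h5 := kill_syz_iter (syz^[d+1] N).1 _ d N h4
  rw [Function.iterate_succ_apply'] at h5
  have h6 := locPD_of_kill p (syz^[d] N) _ (fun hh => hap (Ideal.IsPrime.mem_of_pow_mem ‹_› _ hh)) h5
  have h7 := locPD_iter p 1 d N h6
  exact serre_regular _ _ (locPD_residue p _ h7)

theorem exists_coeff_field_charP (R : Type) [CommRing R] [IsLocalRing R]
    [IsAdicComplete (maximalIdeal R) R] [PerfectField (ResidueField R)]
    (p : ℕ) [Fact p.Prime] [CharP R p] :
    ∃ σ : ResidueField R →+* R, ∀ x, residue R (σ x) = x := by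
  haveI hk : CharP (R ⧸ maximalIdeal R) p := by
    haveI : Nontrivial (R ⧸ maximalIdeal R) := Ideal.Quotient.nontrivial_iff.2 Ideal.IsPrime.ne_top'
    obtain ⟨q, hq⟩ := CharP.exists (R ⧸ maximalIdeal R)
    have h0 : ((p : ℕ) : R ⧸ maximalIdeal R) = 0 := by
      rw [← map_natCast (Ideal.Quotient.mk (maximalIdeal R)), CharP.cast_eq_zero R p, map_zero]
    have h1 : q ∣ p := (CharP.cast_eq_zero_iff (R ⧸ maximalIdeal R) q p).1 h0
    rcases (Nat.dvd_prime (Fact.out : p.Prime)).1 h1 with h | h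
    · subst h
      exact absurd rfl (CharP.char_ne_one (R ⧸ maximalIdeal R) 1)
    · rwa [h] at hq
  haveI : CharP (ResidueField R) p := hk
  haveI : ExpChar (ResidueField R) p := ExpChar.prime Fact.out
  haveI : PerfectRing (ResidueField R) p := PerfectField.toPerfectRing p
  let L : ResidueField R →+* Perfection (R ⧸ maximalIdeal R) p :=
    Perfection.lift p (ResidueField R) (R ⧸ maximalIdeal R) (RingHom.id (ResidueField R))
  let T : Perfection (R ⧸ maximalIdeal R) p →+* R :=
    { Perfection.teichmuller₀ p (maximalIdeal R) with
      map_add' := by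
        intro x y
        refine Perfection.teichmuller₀_spec fun n => ?_
        refine ⟨(Perfection.coeff _ p n x).out + (Perfection.coeff _ p n y).out, by simp, ?_⟩
        rw [add_pow_char_pow]
        refine (Perfection.teichmuller₀_sModEq ?_).symm.add (Perfection.teichmuller₀_sModEq ?_).symm <;> simp }
  refine ⟨T.comp L, fun x => ?_⟩
  have h1 : residue R (T (L x)) = Perfection.coeff (R ⧸ maximalIdeal R) p 0 (L x) :=
    Perfection.mk_teichmuller₀ _
  exact h1

theorem exists_coeff_field_charZero (R : Type) [CommRing R] [IsLocalRing R]
    [IsAdicComplete (maximalIdeal R) R] [Algebra ℚ R] :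
    ∃ σ : ResidueField R →+* R, ∀ x, residue R (σ x) = x := by
  obtain ⟨s, hs⟩ := exists_isTranscendenceBasis ℚ (ResidueField R)
  haveI : Algebra.IsAlgebraic (IntermediateField.adjoin ℚ (Set.range ((↑) : s → ResidueField R))) (ResidueField R) :=
    IntermediateField.isAlgebraic_adjoin_iff_top.2 hs.isAlgebraic
  haveI : Algebra.FormallySmooth ℚ (ResidueField R) :=
    Algebra.FormallySmooth.of_algebraicIndependent_of_isSeparable hs.1
  obtain ⟨g, hg⟩ := Algebra.FormallySmooth.exists_mkₐ_comp_eq_of_isAdicComplete (R := ℚ)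
    (A := ResidueField R) (I := maximalIdeal R) (AlgHom.id ℚ (ResidueField R) : ResidueField R →ₐ[ℚ] R ⧸ maximalIdeal R)
  exact ⟨g, fun x => DFunLike.congr_fun hg x⟩

theorem exists_coeff_field (R : Type) [CommRing R] [IsLocalRing R]
    (hcomp : IsAdicComplete (maximalIdeal R) R) (hequi : ∃ F : Subring R, IsField F)
    (hperf : PerfectField (ResidueField R)) :
    ∃ σ : ResidueField R →+* R, ∀ x, residue R (σ x) = x := by
  obtain ⟨F, hF⟩ := hequi
  letI := hF.toField
  obtain ⟨p, hp⟩ := CharP.exists F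
  haveI : CharP R p := charP_of_injective_ringHom (f := F.subtype) F.subtype_injective p
  rcases CharP.char_is_prime_or_zero F p with h | h
  · haveI : Fact p.Prime := ⟨h⟩
    exact exists_coeff_field_charP R p
  · subst h
    haveI : CharZero F := CharP.charP_to_charZero F
    letI : Algebra ℚ R := ((F.subtype).comp (algebraMap ℚ F)).toAlgebra
    exact exists_coeff_field_charZero R

theorem ps_decomp {k : Type} [Field k] {n : ℕ} (f : MvPowerSeries (Fin n) k) :
    ∃ g : Fin n → MvPowerSeries (Fin n) k,
      f = MvPowerSeries.C (MvPowerSeries.constantCoeff f) + ∑ i, MvPowerSeries.X i * g i := by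
  classical
  let g : Fin n → MvPowerSeries (Fin n) k := fun i m =>
    if ∀ j < i, m j = 0 then MvPowerSeries.coeff (m + Finsupp.single i 1) f else 0
  have hg : ∀ i m, MvPowerSeries.coeff m (g i) =
      if ∀ j < i, m j = 0 then MvPowerSeries.coeff (m + Finsupp.single i 1) f else 0 := fun i m => rfl
  have hX : ∀ i m, MvPowerSeries.coeff m (MvPowerSeries.X i * g i) =
      if (∀ j < i, m j = 0) ∧ m i ≠ 0 then MvPowerSeries.coeff m f else 0 := by
    intro i m
    rw [MvPowerSeries.X, MvPowerSeries.coeff_monomial_mul]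
    by_cases hm : m i = 0
    · rw [if_neg, if_neg]
      · simp [hm]
      · rw [Finsupp.single_le_iff]; omega
    · have hle : Finsupp.single i 1 ≤ m := by rw [Finsupp.single_le_iff]; omega
      rw [if_pos hle, one_mul, hg, tsub_add_cancel_of_le hle]
      refine if_congr ?_ rfl rfl
      constructor
      · intro h
        refine ⟨fun j hj => ?_, hm⟩
        have := h j hj
        simpa [Finsupp.single_apply, hj.ne'] using this
      · rintro ⟨h, -⟩ j hj
        simp [h j hj]
  refine ⟨g, ?_⟩
  ext m
  rw [map_add, map_sum, MvPowerSeries.coeff_C]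
  simp_rw [hX]
  by_cases hm : m = 0
  · subst hm
    simp
  · rw [if_neg hm, zero_add]
    have hne : (Finset.univ.filter fun i => m i ≠ 0).Nonempty := by
      by_contra h
      apply hm
      ext i
      by_contra h'
      exact h ⟨i, by simpa using h'⟩
    let i₀ := (Finset.univ.filter fun i => m i ≠ 0).min' hne
    have h1 : m i₀ ≠ 0 := by
      have := Finset.min'_mem _ hne
      simpa using this
    have h2 : ∀ j < i₀, m j = 0 := by
      intro j hj
      by_contra h
      have := Finset.min'_le (Finset.univ.filter fun i => m i ≠ 0) j (by simpa using h)
      exact absurd hj (not_lt.2 this)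
    rw [Finset.sum_eq_single i₀]
    · rw [if_pos ⟨h2, h1⟩]
    · intro j _ hj
      rw [if_neg]
      rintro ⟨h3, h4⟩
      rcases lt_or_gt_of_ne hj with h | h
      · exact h4 (h2 j h)
      · exact h1 (h3 _ h)
    · simp

theorem ps_frob_decomp {k : Type} [Field k] (p : ℕ) [hp : Fact p.Prime] [CharP k p]
    [PerfectRing k p] {n : ℕ} (f : MvPowerSeries (Fin n) k) :
    ∃ g : (Fin n → Fin p) → MvPowerSeries (Fin n) k,
      f = ∑ α, (g α) ^ p * ∏ i, MvPowerSeries.X i ^ (α i : ℕ) := by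
  classical
  have hp0 : p ≠ 0 := hp.out.ne_zero
  let e : (Fin n → Fin p) → (Fin n →₀ ℕ) := fun α => Finsupp.equivFunOnFinite.symm fun i => (α i : ℕ)
  let g : (Fin n → Fin p) → MvPowerSeries (Fin n) k := fun α m =>
    (frobeniusEquiv k p).symm (MvPowerSeries.coeff (p • m + e α) f)
  have hprod : ∀ α : Fin n → Fin p, (∏ i, MvPowerSeries.X i ^ (α i : ℕ) : MvPowerSeries (Fin n) k) =
      MvPowerSeries.monomial (e α) 1 := by
    intro α
    rw [MvPowerSeries.monomial_eq']
    simp [Finsupp.prod_fintype, e]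
  have hg : ∀ α m, MvPowerSeries.coeff (p • m) (g α ^ p) = MvPowerSeries.coeff (p • m + e α) f := by
    intro α m
    rw [← MvPowerSeries.map_frobenius_expand p hp0, MvPowerSeries.coeff_map,
      MvPowerSeries.coeff_expand_smul]
    exact (frobeniusEquiv k p).apply_symm_apply _
  have hg' : ∀ α m i, ¬ p ∣ m i → MvPowerSeries.coeff m (g α ^ p) = 0 := by
    intro α m i h
    rw [← MvPowerSeries.map_frobenius_expand p hp0, MvPowerSeries.coeff_map,
      MvPowerSeries.coeff_expand_of_not_dvd p hp0 _ h, map_zero]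
  refine ⟨g, ?_⟩
  ext m
  simp_rw [hprod, map_sum, MvPowerSeries.coeff_mul_monomial, mul_one]
  let β : Fin n → Fin p := fun i => ⟨m i % p, Nat.mod_lt _ hp.out.pos⟩
  let m' : Fin n →₀ ℕ := Finsupp.equivFunOnFinite.symm fun i => m i / p
  have hm : p • m' + e β = m := by
    ext i
    simp [m', e, β, Nat.div_add_mod]
  rw [Finset.sum_eq_single β]
  · have hle : e β ≤ m := by rw [← hm]; exact le_add_self
    rw [if_pos hle]
    have : m - e β = p • m' := by rw [← hm]; exact add_tsub_cancel_right _ _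
    rw [this, hg, hm]
  · intro α _ hα
    split_ifs with hle
    · obtain ⟨i, hi⟩ := Function.ne_iff.1 hα
      refine hg' α _ i fun hd => hi ?_
      have h1 : (e α) i ≤ m i := hle i
      have h2 : (e α) i = α i := rfl
      rw [Finsupp.tsub_apply, h2] at hd
      rw [h2] at h1
      ext
      have h3 := (Nat.modEq_iff_dvd' h1).2 hd
      have h4 : (α i : ℕ) % p = m i % p := h3
      rw [Nat.mod_eq_of_lt (α i).2] at h4
      exact h4
    · rfl
  · simp

section
variable (k : Type) [Field k] (R : Type) [CommRing R] [IsLocalRing R] [Algebra k R]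
  [IsAdicComplete (maximalIdeal R) R]

theorem exists_psEval {n : ℕ} (x : Fin n → R) (hx : ∀ i, x i ∈ maximalIdeal R) :
    ∃ φ : MvPowerSeries (Fin n) k →ₐ[k] R, ∀ i, φ (MvPowerSeries.X i) = x i := by
  let I := MvPolynomial.idealOfVars (Fin n) k
  let ev : MvPolynomial (Fin n) k →ₐ[k] R := MvPolynomial.aeval x
  have hI : I ≤ (maximalIdeal R).comap ev := by
    rw [show I = Ideal.span (Set.range MvPolynomial.X) from rfl, Ideal.span_le]
    rintro _ ⟨i, rfl⟩
    simpa [ev] using hx i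
  have hIn : ∀ m, I ^ m ≤ ((maximalIdeal R) ^ m).comap ev := fun m =>
    (Ideal.pow_right_mono hI m).trans (Ideal.le_comap_pow _ _)
  let f : (m : ℕ) → MvPowerSeries (Fin n) k →ₐ[k] R ⧸ (maximalIdeal R) ^ m := fun m =>
    (Ideal.quotientMapₐ _ ev (hIn m)).comp
      ((MvPowerSeries.truncTotalAlgHom (Fin n) k m).restrictScalars k)
  have hf1 : ∀ m (g : MvPowerSeries (Fin n) k),
      f m g = Ideal.Quotient.mk _ (ev (MvPowerSeries.truncTotal m g)) := fun m g => rfl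
  have hf : ∀ {a b : ℕ} (hle : a ≤ b),
      (Ideal.Quotient.factorₐ k (Ideal.pow_le_pow_right hle)).comp (f b) = f a := by
    intro a b hle
    ext g
    rw [AlgHom.comp_apply, hf1, hf1]
    change Ideal.Quotient.mk _ _ = _
    rw [Ideal.Quotient.eq, ← map_sub]
    exact hIn a (MvPowerSeries.truncTotal_sub_truncTotal_mem_pow_idealOfVars hle le_rfl g)
  refine ⟨IsAdicComplete.liftAlgHom (maximalIdeal R) f hf, fun i => ?_⟩
  rw [IsHausdorff.eq_iff_smodEq (I := maximalIdeal R)]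
  intro m
  rw [smul_eq_mul, Ideal.mul_top, SModEq.idealQuotientMk]
  have h1 := IsAdicComplete.mk_liftAlgHom (maximalIdeal R) f hf m (MvPowerSeries.X i)
  refine h1.trans ?_
  have h2 := (MvPowerSeries.truncTotalAlgHom (Fin n) k m).commutes (MvPolynomial.X i)
  have h3 : f m (MvPowerSeries.X i) = Ideal.quotientMapₐ _ ev (hIn m)
      (algebraMap (MvPolynomial (Fin n) k) _ (MvPolynomial.X i)) := by
    rw [← h2]
    have h5 : (algebraMap (MvPolynomial (Fin n) k) (MvPowerSeries (Fin n) k)) (MvPolynomial.X i) =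
        MvPowerSeries.X i := MvPolynomial.coe_X i
    rw [h5]
    rfl
  rw [h3]
  have h4 : ev (MvPolynomial.X i) = x i := by simp [ev]
  conv_rhs => rw [← h4]
  rfl
end

theorem mem_smul_top_pi {A : Type} [CommRing A] (I : Ideal A) (t : ℕ) (y : Fin t → A) :
    y ∈ I • (⊤ : Submodule A (Fin t → A)) ↔ ∀ i, y i ∈ I := by
  constructor
  · intro h i
    have h1 : LinearMap.proj (R := A) (φ := fun _ : Fin t => A) i y ∈
        (I • (⊤ : Submodule A (Fin t → A))).map (LinearMap.proj i) := Submodule.mem_map_of_mem h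
    rw [Submodule.map_smul''] at h1
    have h2 := smul_mono_right I (le_top : (⊤ : Submodule A (Fin t → A)).map (LinearMap.proj i) ≤ ⊤) h1
    rwa [smul_eq_mul, Ideal.mul_top] at h2
  · intro h
    rw [pi_eq_sum_univ' y]
    refine Submodule.sum_mem _ fun i _ => Submodule.smul_mem_smul (h i) trivial

theorem isPrecomplete_pi {A : Type} [CommRing A] (I : Ideal A) [IsPrecomplete I A] (t : ℕ) :
    IsPrecomplete I (Fin t → A) := by
  refine ⟨fun f hf => ?_⟩
  have h1 : ∀ i, ∃ L : A, ∀ n, f n i ≡ L [SMOD (I ^ n • ⊤ : Submodule A A)] := by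
    intro i
    refine IsPrecomplete.prec' (fun n => f n i) fun {m n} hmn => ?_
    have := hf hmn
    rw [SModEq.sub_mem, mem_smul_top_pi] at this
    rw [SModEq.sub_mem, smul_eq_mul, Ideal.mul_top]
    exact this i
  choose L hL using h1
  refine ⟨L, fun n => ?_⟩
  rw [SModEq.sub_mem, mem_smul_top_pi]
  intro i
  have := hL i n
  rw [SModEq.sub_mem, smul_eq_mul, Ideal.mul_top] at this
  exact this

section
variable (k : Type) [Field k] (R : Type) [CommRing R] [IsLocalRing R] [IsNoetherianRing R] [Algebra k R]

theorem exists_fin_mod (hk : ∀ r : R, ∃ c : k, r - algebraMap k R c ∈ maximalIdeal R)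
    (N : Type) [AddCommGroup N] [Module R N] [Module.Finite R N] (l : ℕ) :
    ∃ (t : ℕ) (u : Fin t → N), ∀ y : N, ∃ c : Fin t → k,
      y - ∑ i, algebraMap k R (c i) • u i ∈ ((maximalIdeal R) ^ l • ⊤ : Submodule R N) := by
  induction l with
  | zero => exact ⟨0, fun _ => 0, fun y => ⟨fun _ => 0, by simp⟩⟩
  | succ l ih =>
    obtain ⟨t, u, hu⟩ := ih
    haveI : IsNoetherian R N := isNoetherian_of_isNoetherianRing_of_finite R N
    obtain ⟨s, v, hv⟩ := Submodule.fg_iff_exists_fin_generating_family.1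
      (IsNoetherian.noetherian ((maximalIdeal R) ^ l • ⊤ : Submodule R N))
    refine ⟨t + s, Fin.append u v, fun y => ?_⟩
    obtain ⟨c, hc⟩ := hu y
    rw [← hv, Submodule.mem_span_range_iff_exists_fun] at hc
    obtain ⟨r, hr⟩ := hc
    choose c' hc' using fun i => hk (r i)
    refine ⟨Fin.append c c', ?_⟩
    rw [Fin.sum_univ_add]
    simp only [Fin.append_left, Fin.append_right]
    rw [← sub_sub, ← hr, ← Finset.sum_sub_distrib]
    refine Submodule.sum_mem _ fun i _ => ?_
    rw [← sub_smul, pow_succ', ← smul_eq_mul, smul_assoc]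
    refine Submodule.smul_mem_smul (hc' i) ?_
    rw [← hv]
    exact Submodule.subset_span ⟨i, rfl⟩

theorem finite_over_ps (hk : ∀ r : R, ∃ c : k, r - algebraMap k R c ∈ maximalIdeal R)
    {n : ℕ} [Algebra (MvPowerSeries (Fin n) k) R] [IsScalarTower k (MvPowerSeries (Fin n) k) R]
    (hX : ∀ i, algebraMap (MvPowerSeries (Fin n) k) R (MvPowerSeries.X i) ∈ maximalIdeal R)
    (N : Type) [AddCommGroup N] [Module R N] [Module.Finite R N]
    [Module (MvPowerSeries (Fin n) k) N] [IsScalarTower (MvPowerSeries (Fin n) k) R N] (l : ℕ)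
    (hl : ((maximalIdeal R) ^ l • ⊤ : Submodule R N) ≤
      Ideal.span (Set.range fun i => algebraMap (MvPowerSeries (Fin n) k) R (MvPowerSeries.X i)) • ⊤) :
    Module.Finite (MvPowerSeries (Fin n) k) N := by
  let A := MvPowerSeries (Fin n) k
  let I : Ideal A := Ideal.span (Set.range MvPowerSeries.X)
  haveI : IsAdicComplete I A := inferInstanceAs (IsAdicComplete (Ideal.span (Set.range MvPowerSeries.X)) _)
  have hImap : I.map (algebraMap A R) =
      Ideal.span (Set.range fun i => algebraMap (MvPowerSeries (Fin n) k) R (MvPowerSeries.X i)) := by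
    rw [Ideal.map_span, ← Set.range_comp]; rfl
  have hImax : I.map (algebraMap A R) ≤ maximalIdeal R := by
    rw [hImap, Ideal.span_le]
    rintro _ ⟨i, rfl⟩
    exact hX i
  have hres : ∀ J : Ideal A, (J • ⊤ : Submodule A N) =
      ((J.map (algebraMap A R)) • (⊤ : Submodule R N)).restrictScalars A := by
    intro J
    exact (Ideal.smul_restrictScalars J (⊤ : Submodule R N)).symm
  haveI : IsHausdorff I N := by
    refine ⟨fun x hx => ?_⟩
    refine IsHausdorff.haus (I := maximalIdeal R) inferInstance x fun m => ?_
    have := hx m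
    rw [SModEq.zero] at this ⊢
    rw [hres, Ideal.map_pow, Submodule.restrictScalars_mem] at this
    exact Submodule.smul_mono_left (Ideal.pow_right_mono hImax m) this
  obtain ⟨t, u, hu⟩ := exists_fin_mod k R hk N l
  let f : (Fin t → A) →ₗ[A] N := Fintype.linearCombination A u
  haveI := isPrecomplete_pi I t
  have hf : Function.Surjective f := by
    refine surjective_of_mkQ_comp_surjective (I := I) ?_
    intro y
    obtain ⟨y, rfl⟩ := Submodule.mkQ_surjective _ y
    obtain ⟨c, hc⟩ := hu y
    refine ⟨fun i => algebraMap k A (c i), ?_⟩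
    rw [LinearMap.comp_apply, eq_comm, ← sub_eq_zero, ← map_sub, Submodule.mkQ_apply,
      Submodule.Quotient.mk_eq_zero, hres, Submodule.restrictScalars_mem, hImap]
    refine hl ?_
    have h2 : f (fun i => algebraMap k A (c i)) = ∑ i, algebraMap k R (c i) • u i := by
      simp only [f, Fintype.linearCombination_apply]
      refine Finset.sum_congr rfl fun i _ => ?_
      rw [IsScalarTower.algebraMap_apply k A R]
      exact (IsScalarTower.algebraMap_smul R (algebraMap k A (c i)) (u i)).symm
    rw [h2]
    exact hc
  exact Module.Finite.of_surjective f hf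
end

theorem ker_inter_ofList {S : Type} [CommRing S] {F M : Type} [AddCommGroup F] [Module S F]
    [AddCommGroup M] [Module S M] (g : F →ₗ[S] M) (hg : Function.Surjective g) (rs : List S)
    (h : RingTheory.Sequence.IsWeaklyRegular M rs) :
    ∀ i ≤ rs.length, ∀ v ∈ LinearMap.ker g, v ∈ (Ideal.ofList (rs.take i) • ⊤ : Submodule S F) →
      v ∈ Ideal.ofList (rs.take i) • LinearMap.ker g := by
  intro i
  induction i with
  | zero =>
    intro _ v _ hv
    simpa using hv
  | succ i ih =>
    intro hi v hvK hv
    have hi' : i < rs.length := hi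
    have hreg := h.regular_mod_prev i hi'
    have htake : Ideal.ofList (rs.take (i+1)) = Ideal.ofList (rs.take i) ⊔ Ideal.span {rs[i]} := by
      rw [List.take_succ_eq_append_getElem hi', Ideal.ofList_append, Ideal.ofList_singleton]
    rw [htake, Submodule.sup_smul] at hv ⊢
    obtain ⟨w, hw, z, hz, rfl⟩ := Submodule.mem_sup.1 hv
    rw [Submodule.ideal_span_singleton_smul] at hz
    obtain ⟨f, -, rfl⟩ := Submodule.mem_smul_pointwise_iff_exists _ _ _ |>.1 hz
    have hmapw : ∀ u ∈ (Ideal.ofList (rs.take i) • ⊤ : Submodule S F),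
        g u ∈ (Ideal.ofList (rs.take i) • ⊤ : Submodule S M) := by
      intro u hu
      have := Submodule.mem_map_of_mem (f := g) hu
      rw [Submodule.map_smul'', Submodule.map_top, LinearMap.range_eq_top.2 hg] at this
      exact this
    have h0 : rs[i] • g f ∈ (Ideal.ofList (rs.take i) • ⊤ : Submodule S M) := by
      have h1 : rs[i] • g f = - g w := by
        rw [LinearMap.mem_ker, map_add, map_smul] at hvK
        exact eq_neg_of_add_eq_zero_right hvK
      rw [h1]
      exact neg_mem (hmapw w hw)
    have h2 : g f ∈ (Ideal.ofList (rs.take i) • ⊤ : Submodule S M) := by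
      have h3 : rs[i] • (Submodule.Quotient.mk (g f) : M ⧸ (Ideal.ofList (rs.take i) • ⊤ : Submodule S M)) = 0 := by
        rw [← Submodule.Quotient.mk_smul, Submodule.Quotient.mk_eq_zero]; exact h0
      have h4 := hreg.right_eq_zero_of_smul h3
      rwa [Submodule.Quotient.mk_eq_zero] at h4
    have h5 : g f ∈ (Ideal.ofList (rs.take i) • ⊤ : Submodule S F).map g := by
      rw [Submodule.map_smul'', Submodule.map_top, LinearMap.range_eq_top.2 hg]; exact h2
    obtain ⟨w', hw', hgw'⟩ := h5
    have hκ : f - w' ∈ LinearMap.ker g := by rw [LinearMap.mem_ker, map_sub, hgw', sub_self]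
    have hdec : w + rs[i] • f = (w + rs[i] • w') + rs[i] • (f - w') := by
      rw [smul_sub]; abel
    rw [hdec]
    refine Submodule.add_mem_sup (ih hi'.le _ ?_ ?_) ?_
    · have : w + rs[i] • w' = (w + rs[i] • f) - rs[i] • (f - w') := by rw [smul_sub]; abel
      rw [this]
      exact sub_mem hvK (Submodule.smul_mem _ _ hκ)
    · exact add_mem hw (Submodule.smul_mem _ _ hw')
    · exact Submodule.smul_mem_smul (Ideal.mem_span_singleton_self _) hκ

theorem free_of_regular {S : Type} [CommRing S] [IsLocalRing S] [IsNoetherianRing S]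
    (M : Type) [AddCommGroup M] [Module S M] [Module.Finite S M] (rs : List S)
    (hrs : Ideal.ofList rs = maximalIdeal S)
    (h : RingTheory.Sequence.IsWeaklyRegular M rs) : Module.Free S M := by
  obtain ⟨ι, _, g, hg, hker⟩ := exists_minimal_cover (S := S) M
  have hK : LinearMap.ker g ≤ (maximalIdeal S • ⊤ : Submodule S (ι →₀ S)) := by
    intro c hc
    rw [← c.sum_single]
    refine Submodule.sum_mem _ fun i _ => ?_
    have : Finsupp.single i (c i) = c i • Finsupp.single i (1 : S) := by simp
    rw [this]
    exact Submodule.smul_mem_smul (hker c hc i) trivial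
  have h1 : LinearMap.ker g ≤ maximalIdeal S • LinearMap.ker g := by
    intro v hv
    have := ker_inter_ofList g hg rs h rs.length le_rfl v hv
    rw [List.take_length, hrs] at this
    exact this (hK hv)
  have h2 : LinearMap.ker g = ⊥ :=
    Submodule.eq_bot_of_le_smul_of_le_jacobson_bot (maximalIdeal S) _
      (IsNoetherian.noetherian _) h1 (IsLocalRing.maximalIdeal_le_jacobson _)
  exact Module.Free.of_equiv (LinearEquiv.ofBijective g ⟨LinearMap.ker_eq_bot.1 h2, hg⟩)

theorem ps_maximalIdeal (k : Type) [Field k] (n : ℕ) :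
    Ideal.ofList (List.ofFn (fun i : Fin n => (MvPowerSeries.X i : MvPowerSeries (Fin n) k))) =
      maximalIdeal (MvPowerSeries (Fin n) k) := by
  refine le_antisymm ?_ ?_
  · rw [Ideal.ofList, Ideal.span_le]
    rintro x hx
    obtain ⟨i, rfl⟩ := (List.mem_ofFn' _ _).1 hx
    rw [SetLike.mem_coe, mem_maximalIdeal, mem_nonunits_iff, MvPowerSeries.isUnit_iff_constantCoeff]
    simp
  · intro f hf
    rw [mem_maximalIdeal, mem_nonunits_iff, MvPowerSeries.isUnit_iff_constantCoeff, isUnit_iff_ne_zero,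
      not_not] at hf
    obtain ⟨g, hg⟩ := ps_decomp f
    rw [hf, map_zero, zero_add] at hg
    rw [hg]
    refine Ideal.sum_mem _ fun i _ => Ideal.mul_mem_right _ _ (Ideal.subset_span ?_)
    exact (List.mem_ofFn' _ _).2 ⟨i, rfl⟩

theorem mcm_weaklyRegular {R : Type} [CommRing R] [IsNoetherianRing R] [IsLocalRing R]
    (M : Type) [AddCommGroup M] [Module R M] [Module.Finite R M] (hM : IsMCMModule R M)
    (xs : List R) (hx : ∀ x ∈ xs, x ∈ maximalIdeal R)
    (hd : ringKrullDim R = xs.length)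
    (hrad : maximalIdeal R ≤ (Ideal.span {x | x ∈ xs}).radical) :
    RingTheory.Sequence.IsWeaklyRegular M xs := by
  set m := maximalIdeal R with hm
  have hmp : m.IsPrime := inferInstance
  have h1 := hM m
  have hdl : ringKrullDim (Localization.AtPrime m) = xs.length := by
    rw [IsLocalization.AtPrime.ringKrullDim_eq_height m, ← hd, hm,
      IsLocalRing.maximalIdeal_height_eq_ringKrullDim]
  have h2 := (ringKrullDim_le_moduleDepth_iff (Localization.AtPrime m) (LocalizedModule m.primeCompl M)
    xs.length hdl).1 h1
  have hmap : Ideal.map (algebraMap R (Localization.AtPrime m)) m =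
    maximalIdeal (Localization.AtPrime m) := Localization.AtPrime.map_eq_maximalIdeal
  have h3 := sop_isWeaklyRegular (xs.map (algebraMap R (Localization.AtPrime m))) []
    (by
      intro z hz
      obtain ⟨x, hxx, rfl⟩ := List.mem_map.1 hz
      rw [← hmap]
      exact Ideal.mem_map_of_mem _ (hx x hxx))
    (LocalizedModule m.primeCompl M) (by intro y hy; simp at hy)
    (by
      rw [← hmap]
      refine (Ideal.map_mono hrad).trans ((Ideal.map_radical_le _).trans (Ideal.radical_mono ?_))
      rw [Ideal.map_span, Ideal.span_le]
      rintro _ ⟨x, hxx, rfl⟩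
      refine Ideal.subset_span ?_
      right
      exact List.mem_map_of_mem hxx) (by rw [List.length_map]; exact h2)
  rw [RingTheory.Sequence.isWeaklyRegular_map_algebraMap_iff] at h3
  have hb : Function.Bijective (LocalizedModule.mkLinearMap m.primeCompl M) := by
    have hu : ∀ s : m.primeCompl, IsUnit (s : R) := fun s => by
      by_contra hh
      exact s.2 ((mem_maximalIdeal _).2 hh)
    constructor
    · rw [injective_iff_map_eq_zero]
      intro a ha
      obtain ⟨c, hc⟩ := (IsLocalizedModule.eq_zero_iff m.primeCompl
        (LocalizedModule.mkLinearMap m.primeCompl M)).1 ha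
      exact ((hu c).smul_eq_zero).1 hc
    · intro y
      obtain ⟨⟨a, c⟩, hac⟩ := IsLocalizedModule.surj m.primeCompl
        (LocalizedModule.mkLinearMap m.primeCompl M) y
      obtain ⟨u, hu'⟩ := hu c
      refine ⟨(↑u⁻¹ : R) • a, ?_⟩
      rw [map_smul, ← hac, Submonoid.smul_def, ← hu', smul_smul, Units.inv_mul, one_smul]
  exact ((LinearEquiv.ofBijective _ hb).isWeaklyRegular_congr xs).2 h3

theorem mcm_free {R : Type} [CommRing R] [IsNoetherianRing R] [IsLocalRing R]
    [IsAdicComplete (maximalIdeal R) R] {k : Type} [Field k] [Algebra k R]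
    (hk : ∀ r : R, ∃ c : k, r - algebraMap k R c ∈ maximalIdeal R) {n : ℕ}
    [Algebra (MvPowerSeries (Fin n) k) R] [IsScalarTower k (MvPowerSeries (Fin n) k) R]
    (hX : ∀ i, algebraMap (MvPowerSeries (Fin n) k) R (MvPowerSeries.X i) ∈ maximalIdeal R)
    (hd : ringKrullDim R = n)
    (hrad : maximalIdeal R ≤ (Ideal.span (Set.range fun i =>
      algebraMap (MvPowerSeries (Fin n) k) R (MvPowerSeries.X i))).radical)
    (M : Type) [AddCommGroup M] [Module R M] [Module.Finite R M] (hM : IsMCMModule R M)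
    [Module (MvPowerSeries (Fin n) k) M] [IsScalarTower (MvPowerSeries (Fin n) k) R M] :
    Module.Free (MvPowerSeries (Fin n) k) M := by
  obtain ⟨l, hl⟩ := Ideal.exists_pow_le_of_le_radical_of_fg hrad (IsNoetherian.noetherian _)
  have hfin : Module.Finite (MvPowerSeries (Fin n) k) M :=
    finite_over_ps k R hk hX M l (Submodule.smul_mono_left hl)
  refine free_of_regular M _ (ps_maximalIdeal k n) ?_
  rw [← RingTheory.Sequence.isWeaklyRegular_map_algebraMap_iff R]
  apply mcm_weaklyRegular M hM
  · intro x hx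
    obtain ⟨y, hy, rfl⟩ := List.mem_map.1 hx
    obtain ⟨i, rfl⟩ := List.mem_ofFn.1 hy
    exact hX i
  · simpa using hd
  · refine hrad.trans (Ideal.radical_mono (Ideal.span_mono ?_))
    rintro _ ⟨i, rfl⟩
    exact List.mem_map_of_mem (List.mem_ofFn.2 ⟨i, rfl⟩)

open scoped TensorProduct in
theorem noether_factor {A R : Type} [CommRing A] [CommRing R] [Algebra A R]
    {M F : Type} [AddCommGroup M] [Module R M] [Module A M] [IsScalarTower A R M]
    [AddCommGroup F] [Module R F] [Module A F] [IsScalarTower A R F]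
    (π : F →ₗ[R] M) (τ : M →ₗ[A] F) (hτ : ∀ m, π (τ m) = m)
    (δ : R ⊗[A] R) (hδ : ∀ r : R, δ * ((1 : R) ⊗ₜ[A] r - r ⊗ₜ[A] (1 : R)) = 0) :
    ∃ g : M →ₗ[R] F, ∀ m, π (g m) = Algebra.TensorProduct.lmul' A (S := R) δ • m := by
  let Φ : R ⊗[A] R →ₗ[A] (M →ₗ[A] F) := TensorProduct.lift
    (LinearMap.mk₂ A (fun a b => (Algebra.lsmul A A F a) ∘ₗ τ ∘ₗ (Algebra.lsmul A A M b))
      (by intros; ext; simp [add_smul]) (by intros; ext; simp) (by intros; ext; simp [add_smul])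
      (by
        intro c m n
        ext x
        simp only [LinearMap.comp_apply, LinearMap.smul_apply, Algebra.lsmul_coe, smul_assoc, map_smul]))
  have hΦ : ∀ a b m, Φ (a ⊗ₜ b) m = a • τ (b • m) := fun a b m => rfl
  have h1 : ∀ r x m, Φ (x * ((1:R) ⊗ₜ[A] r)) m = Φ x (r • m) := by
    intro r x m
    induction x with
    | zero => simp
    | tmul a b => rw [Algebra.TensorProduct.tmul_mul_tmul, hΦ, hΦ, mul_one, mul_smul]
    | add x y hx hy => rw [add_mul, map_add, map_add, LinearMap.add_apply, LinearMap.add_apply, hx, hy]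
  have h2 : ∀ r x m, Φ (x * (r ⊗ₜ[A] (1:R))) m = r • Φ x m := by
    intro r x m
    induction x with
    | zero => simp
    | tmul a b => rw [Algebra.TensorProduct.tmul_mul_tmul, hΦ, hΦ, mul_one, mul_comm, mul_smul]
    | add x y hx hy =>
      rw [add_mul, map_add, map_add, LinearMap.add_apply, LinearMap.add_apply, hx, hy, smul_add]
  have h3 : ∀ x m, π (Φ x m) = Algebra.TensorProduct.lmul' A (S := R) x • m := by
    intro x m
    induction x with
    | zero => simp
    | tmul a b => rw [hΦ, map_smul, hτ, Algebra.TensorProduct.lmul'_apply_tmul, mul_smul]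
    | add x y hx hy => rw [map_add, LinearMap.add_apply, map_add, hx, hy, map_add, add_smul]
  refine ⟨{ toFun := Φ δ, map_add' := map_add _, map_smul' := ?_ }, fun m => h3 δ m⟩
  intro r m
  have := hδ r
  rw [mul_sub, sub_eq_zero] at this
  rw [← h1, this, h2]; rfl

open scoped TensorProduct in
theorem noether_delta {A R : Type} [CommRing A] [CommRing R] [Algebra A R] [Module.Finite A R]
    (s : R) (hs : ∀ ω : KaehlerDifferential A R, s • ω = 0) :
    ∃ (n : ℕ) (δ : R ⊗[A] R), (∀ r : R, δ * ((1 : R) ⊗ₜ[A] r - r ⊗ₜ[A] (1 : R)) = 0) ∧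
      Algebra.TensorProduct.lmul' A (S := R) δ = s ^ n := by
  let J := KaehlerDifferential.ideal A R
  have hJ : J.FG := KaehlerDifferential.ideal_fg A R
  have hJf : Module.Finite (R ⊗[A] R) J := Module.Finite.of_fg hJ
  let t : R ⊗[A] R := s ⊗ₜ 1
  have ht : ∀ x : J, t * x ∈ J ^ 2 := by
    intro x
    have h1 : KaehlerDifferential.fromIdeal A R (t • x) = 0 := by
      rw [map_smul]
      have : t • KaehlerDifferential.fromIdeal A R x = s • KaehlerDifferential.fromIdeal A R x := by
        rw [← IsScalarTower.algebraMap_smul (R ⊗[A] R) s]; rfl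
      rw [this, hs]
    have h2 := (Ideal.toCotangent_eq_zero J (t • x)).1 h1
    exact h2
  let f : Module.End (R ⊗[A] R) J := LinearMap.lsmul _ _ t
  obtain ⟨p, hpm, -, hpc, hp0⟩ :=
    LinearMap.exists_monic_and_natDegree_eq_and_coeff_mem_pow_and_aeval_eq_zero (R ⊗[A] R) f J (by
      rintro _ ⟨x, rfl⟩
      have := ht x
      rw [pow_two, ← smul_eq_mul] at this
      have h3 : (J • (⊤ : Submodule (R ⊗[A] R) J)).map J.subtype = J • J := by
        rw [Submodule.map_smul'', Submodule.map_top, Submodule.range_subtype]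
      rw [← h3] at this
      obtain ⟨y, hy, hyx⟩ := this
      have : f x = y := Subtype.ext hyx.symm
      rw [this]; exact hy)
  refine ⟨p.natDegree, p.eval t, ?_, ?_⟩
  · intro r
    have h4 : ∀ x : J, (Polynomial.aeval f p) x = p.eval t • x := by
      intro x
      have : f = algebraMap (R ⊗[A] R) (Module.End (R ⊗[A] R) J) t := by
        ext; rfl
      rw [this, Polynomial.aeval_algebraMap_apply]
      rfl
    have h5 := h4 ⟨_, KaehlerDifferential.one_smul_sub_smul_one_mem_ideal A r⟩
    rw [hp0] at h5
    exact (congrArg Subtype.val h5).symm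
  · have hμ : ∀ x ∈ J, Algebra.TensorProduct.lmul' A (S := R) x = 0 := fun x hx => hx
    rw [Polynomial.eval_eq_sum_range, map_sum, Finset.sum_range_succ, Finset.sum_eq_zero, zero_add,
      hpm.coeff_natDegree, one_mul, map_pow, Algebra.TensorProduct.lmul'_apply_tmul, mul_one]
    intro i hi
    have hi' := Finset.mem_range.1 hi
    rw [map_mul, hμ _ (Ideal.pow_le_self (by omega) (hpc i)), zero_mul]

theorem kill_of_factor {R : Type} [CommRing R] (M : ModuleCat.{0} R) (a : R)
    (F : ModuleCat.{0} R) [Projective F] (π : F →ₗ[R] M) (g : M →ₗ[R] F)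
    (h : ∀ m, π (g m) = a • m) (N : ModuleCat.{0} R) (i : ℕ) (e : Abelian.Ext M N (i+1)) : a • e = 0 := by
  have h1 : ModuleCat.ofHom g ≫ ModuleCat.ofHom π = a • 𝟙 M := by
    ext m; exact h m
  have h2 : a • e = (Abelian.Ext.mk₀ (a • 𝟙 M)).comp e (zero_add _) := by
    rw [Abelian.Ext.mk₀_smul, Abelian.Ext.smul_comp, Abelian.Ext.mk₀_id_comp]
  rw [h2, ← h1, ← Abelian.Ext.mk₀_comp_mk₀_assoc,
    Abelian.Ext.eq_zero_of_projective ((Abelian.Ext.mk₀ (ModuleCat.ofHom π)).comp e (zero_add _)),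
    Abelian.Ext.comp_zero]

theorem kill_of_omega {A R : Type} [CommRing A] [CommRing R] [Algebra A R] [Module.Finite A R]
    (s : R) (hs : ∀ ω : KaehlerDifferential A R, s • ω = 0) :
    ∃ n : ℕ, ∀ (M : ModuleCat.{0} R) [Module A M] [IsScalarTower A R M] [Module.Projective A M]
      (N : ModuleCat.{0} R) (i : ℕ) (e : Abelian.Ext M N (i+1)), s ^ n • e = 0 := by
  obtain ⟨n, δ, hδ, hμ⟩ := noether_delta (A := A) s hs
  refine ⟨n, ?_⟩
  intro M _ _ _ N i e
  let F := ModuleCat.of R (M →₀ R)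
  letI : Module A F := inferInstanceAs (Module A (M →₀ R))
  haveI : IsScalarTower A R F := inferInstanceAs (IsScalarTower A R (M →₀ R))
  let π : F →ₗ[R] M := Finsupp.linearCombination R id
  have hπ : Function.Surjective π := Finsupp.linearCombination_id_surjective R M
  obtain ⟨τ, hτ⟩ := Module.projective_lifting_property (π.restrictScalars A) (LinearMap.id) hπ
  obtain ⟨g, hg⟩ := noether_factor π τ (fun m => LinearMap.congr_fun hτ m) δ hδ
  haveI : Projective F := ModuleCat.projective_of_free (Module.Free.chooseBasis R (M →₀ R))
  refine kill_of_factor M (s^n) F π g (fun m => ?_) N i e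
  rw [hg, hμ]

theorem p_gen (p : ℕ) [hp : Fact p.Prime] {κ : Type} [Field κ] [CharP κ p] (n : ℕ) :
    ∀ (F : Type) [Field F] [Algebra F κ] (_ : ∀ x : κ, ∃ c : F, algebraMap F κ c = x ^ p)
    (_ : Module.Finite F κ) (_ : Module.finrank F κ ≤ p ^ n),
    ∃ t : Fin n → κ, ∀ S : Subfield κ, (∀ c, algebraMap F κ c ∈ S) → (∀ i, t i ∈ S) → S = ⊤ := by
  induction n with
  | zero =>
    intro F _ _ hF hfin hr
    refine ⟨fun i => i.elim0, fun S hS _ => ?_⟩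
    have h1 : Module.finrank F κ = 1 := le_antisymm (by simpa using hr) Module.finrank_pos
    rw [eq_top_iff]
    intro x _
    have h2 := Subalgebra.bot_eq_top_of_finrank_eq_one h1
    have h3 : x ∈ (⊥ : Subalgebra F κ) := by rw [h2]; trivial
    obtain ⟨c, rfl⟩ := Algebra.mem_bot.1 h3
    exact hS c
  | succ n ih =>
    intro F _ _ hF hfin hr
    by_cases hsurj : ∀ x : κ, ∃ c, algebraMap F κ c = x
    · refine ⟨fun i => 0, fun S hS _ => ?_⟩
      rw [eq_top_iff]
      intro x _
      obtain ⟨c, rfl⟩ := hsurj x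
      exact hS c
    push Not at hsurj
    obtain ⟨x, hx⟩ := hsurj
    obtain ⟨a, ha⟩ := hF x
    let L := IntermediateField.adjoin F {x}
    have hirr : Irreducible (Polynomial.X ^ p - Polynomial.C a) := by
      apply X_pow_sub_C_irreducible_of_prime hp.out
      intro b hb
      apply hx b
      have : (algebraMap F κ b) ^ p = x ^ p := by rw [← map_pow, hb, ha]
      exact frobenius_inj κ p this
    have hmin : minpoly F x = Polynomial.X ^ p - Polynomial.C a := by
      symm
      apply minpoly.eq_of_irreducible_of_monic hirr
      · simp [ha]
      · exact Polynomial.monic_X_pow_sub_C a hp.out.ne_zero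
    have hdeg : Module.finrank F L = p := by
      rw [IntermediateField.adjoin.finrank (Algebra.IsIntegral.isIntegral x), hmin,
        Polynomial.natDegree_X_pow_sub_C]
    have hmul := Module.finrank_mul_finrank F L κ
    obtain ⟨t, ht⟩ := ih L (fun y => by
      obtain ⟨c, hc⟩ := hF y
      exact ⟨algebraMap F L c, by rw [← hc]; rfl⟩) inferInstance (by
      rw [hdeg] at hmul
      rw [← hmul, pow_succ, mul_comm] at hr
      exact Nat.le_of_mul_le_mul_right hr hp.out.pos)
    refine ⟨Fin.cons x t, fun S hS hS' => ht S ?_ ?_⟩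
    · rintro ⟨c, hc⟩
      change c ∈ S
      have hle : (IntermediateField.adjoin F {x}).toSubfield ≤ S := by
        rw [IntermediateField.adjoin_toSubfield, Subfield.closure_le]
        rintro y (⟨z, rfl⟩ | hy)
        · exact hS z
        · rw [Set.mem_singleton_iff.1 hy]
          exact hS' 0
      exact hle hc
    · intro i
      exact hS' i.succ

def degHom {K L : Type} [Field K] [Field L] (f : K →+* L) : ℕ :=
  letI := f.toAlgebra
  Module.finrank K L

theorem degHom_comp {K L N : Type} [Field K] [Field L] [Field N] (f : K →+* L) (g : L →+* N) :
    degHom (g.comp f) = degHom f * degHom g := by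
  letI := f.toAlgebra
  letI := g.toAlgebra
  letI := (g.comp f).toAlgebra
  haveI : IsScalarTower K L N := IsScalarTower.of_algebraMap_eq fun _ => rfl
  exact (Module.finrank_mul_finrank K L N).symm

/-- If `K ⊂ κ` is finite then `κ` is generated over `p`-th powers by `e` elements as soon as
`[K : K^p] ≤ p^e`. -/
theorem p_gen_frob (p : ℕ) [hp : Fact p.Prime] {K κ : Type} [Field K] [Field κ] [CharP κ p] [CharP K p]
    [Algebra K κ] [Module.Finite K κ] (e : ℕ) (h0 : degHom (frobenius K p) ≠ 0)
    (h : degHom (frobenius K p) ≤ p ^ e) :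
    ∃ t : Fin e → κ, ∀ S : Subfield κ, (∀ c, c ^ p ∈ S) → (∀ i, t i ∈ S) → S = ⊤ := by
  have h1 : degHom (frobenius κ p) = degHom (frobenius K p) := by
    have h2 : (frobenius κ p).comp (algebraMap K κ) = (algebraMap K κ).comp (frobenius K p) := by
      ext x; simp [frobenius_def]
    have h3 := degHom_comp (algebraMap K κ) (frobenius κ p)
    rw [h2, degHom_comp, mul_comm] at h3
    have h4 : degHom (algebraMap K κ) ≠ 0 := by
      have : degHom (algebraMap K κ) = Module.finrank K κ := by
        unfold degHom
        congr!
        exact Algebra.algebra_ext _ _ fun _ => rfl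
      rw [this]
      exact Module.finrank_pos.ne'
    exact (Nat.eq_of_mul_eq_mul_left (Nat.pos_of_ne_zero h4) h3).symm
  rw [← h1] at h0 h
  have := @p_gen p hp κ _ _ e κ _ (frobenius κ p).toAlgebra (fun x => ⟨x, rfl⟩)
    (@Module.finite_of_finrank_pos κ κ _ _ (frobenius κ p).toAlgebra.toModule _ _ (Nat.pos_of_ne_zero h0)) h
  exact this

/-- bound on `[K : K^p]` from a spanning family -/
theorem degHom_frob_le (p : ℕ) [hp : Fact p.Prime] {A K : Type} [CommRing A] [Field K] [CharP K p] (e : ℕ)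
    (f : A →+* K) (hf : ∀ x : K, ∃ a b, x = f a / f b) (X : Fin e → A)
    (hA : ∀ a : A, ∃ g : (Fin e → Fin p) → A, a = ∑ α, (g α) ^ p * ∏ i, X i ^ (α i : ℕ)) :
    degHom (frobenius K p) ≠ 0 ∧ degHom (frobenius K p) ≤ p ^ e := by
  unfold degHom
  letI inst := (frobenius K p).toAlgebra
  let b : (Fin e → Fin p) → K := fun α => ∏ i, f (X i) ^ (α i : ℕ)
  have hsm : ∀ c x : K, @HSMul.hSMul K K K (@instHSMul K K inst.toSMul) c x = c ^ p * x := fun c x => rfl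
  have hspan : @Submodule.span K K _ _ inst.toModule (Set.range b) = ⊤ := by
    rw [eq_top_iff]
    intro x _
    obtain ⟨a, c, rfl⟩ := hf x
    obtain ⟨g, hg⟩ := hA (a * c ^ (p - 1))
    have hx : f a / f c = ∑ α, (f (g α) / f c) ^ p * b α := by
      by_cases hc : f c = 0
      · simp [hc, hp.out.ne_zero]
      have h1 : f a * f c ^ (p - 1) = ∑ α, (f (g α)) ^ p * b α := by
        rw [← map_pow, ← map_mul, hg]; simp [b]
      have h2 : f c ^ p = f c ^ (p-1) * f c := by
        rw [← pow_succ, Nat.sub_add_cancel hp.out.one_le]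
      simp_rw [div_pow, div_mul_eq_mul_div]
      rw [← Finset.sum_div, ← h1, h2]
      field_simp
    rw [hx]
    refine sum_mem fun α _ => ?_
    rw [← hsm]
    exact @Submodule.smul_mem K K _ _ inst.toModule _ _ _ (@Submodule.subset_span K K _ _ inst.toModule _ _ ⟨α, rfl⟩)
  constructor
  · have : @Module.Finite K K _ _ inst.toModule :=
      @Module.Finite.of_fg_top K K _ _ inst.toModule (hspan ▸ @Submodule.fg_span K K _ _ inst.toModule _ (Set.finite_range b))
    exact (@Module.finrank_pos K K _ _ inst.toModule _ this _ _ _).ne'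
  · have := @finrank_le_of_span_eq_top K K _ _ inst.toModule _ (Fin e → Fin p) _ b hspan
    simpa using! this

section der
variable {k R κ : Type} [Field k] [CommRing R] [Algebra k R] [Field κ] [Algebra R κ] [Algebra k κ]
  [IsScalarTower k R κ]

def derU (k R κ : Type) [Field k] [CommRing R] [Algebra k R] [Field κ] [Algebra R κ] [Algebra k κ]
    [IsScalarTower k R κ] : Submodule κ (Derivation k R κ) where
  carrier := {D | ∃ T : Submodule R κ, T.FG ∧ ∀ r, D r ∈ T}
  zero_mem' := ⟨⊥, Submodule.fg_bot, fun r => by simp⟩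
  add_mem' := by
    rintro D E ⟨T, hT, hD⟩ ⟨T', hT', hE⟩
    exact ⟨T ⊔ T', hT.sup hT', fun r => Submodule.add_mem_sup (hD r) (hE r)⟩
  smul_mem' := by
    rintro c D ⟨T, hT, hD⟩
    refine ⟨T.map (LinearMap.mulLeft R c), hT.map _, fun r => ⟨D r, hD r, ?_⟩⟩
    simp

theorem der_kill [IsNoetherianRing R] [IsLocalRing R] (D : Derivation k R κ) (hD : D ∈ derU k R κ) {n : ℕ}
    (φ : MvPowerSeries (Fin n) k →ₐ[k] R) (hx : ∀ i, φ (MvPowerSeries.X i) ∈ maximalIdeal R)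
    (hDx : ∀ i, D (φ (MvPowerSeries.X i)) = 0) (f : MvPowerSeries (Fin n) k) : D (φ f) = 0 := by
  obtain ⟨T, hT, hDT⟩ := hD
  have key : ∀ N : ℕ, ∀ f, D (φ f) ∈ (maximalIdeal R) ^ N • T := by
    intro N
    induction N with
    | zero => intro f; simpa using hDT _
    | succ N ih =>
      intro f
      obtain ⟨g, hg⟩ := ps_decomp f
      have hC : φ (MvPowerSeries.C (MvPowerSeries.constantCoeff f)) =
          algebraMap k R (MvPowerSeries.constantCoeff f) := φ.commutes _
      rw [hg, map_add, map_add, hC, D.map_algebraMap, zero_add, map_sum, map_sum]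
      refine sum_mem fun i _ => ?_
      rw [map_mul, D.leibniz, hDx, smul_zero, add_zero, pow_succ', mul_smul]
      exact Submodule.smul_mem_smul (hx i) (ih _)
  haveI : Module.Finite R T := Module.Finite.of_fg hT
  have h0 := Ideal.iInf_pow_smul_eq_bot_of_isLocalRing (M := T) (maximalIdeal R)
    (Ideal.IsPrime.ne_top inferInstance)
  have h1 : (⟨D (φ f), hDT _⟩ : T) ∈ (⨅ i : ℕ, (maximalIdeal R) ^ i • (⊤ : Submodule R T)) := by
    rw [Submodule.mem_iInf]
    intro N
    have h2 := key N f
    have h3 : ((maximalIdeal R) ^ N • (⊤ : Submodule R T)).map T.subtype = (maximalIdeal R) ^ N • T := by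
      rw [Submodule.map_smul'', Submodule.map_top, Submodule.range_subtype]
    rw [← h3] at h2
    obtain ⟨y, hy, hyx⟩ := h2
    have : (⟨D (φ f), hDT _⟩ : T) = y := Subtype.ext hyx.symm
    rw [this]; exact hy
  rw [h0, Submodule.mem_bot] at h1
  exact congrArg Subtype.val h1

end der

structure ResF {R : Type} [CommRing R] (p : Ideal R) (κ : Type) [Field κ] [Algebra R κ] : Prop where
  zero : ∀ r, algebraMap R κ r = 0 ↔ r ∈ p
  frac : ∀ y : κ, ∃ a b : R, b ∉ p ∧ y * algebraMap R κ b = algebraMap R κ a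
  lift : ∀ (B : Type) [CommRing B] (f : R →+* B), p ≤ RingHom.ker f → (∀ s, s ∉ p → IsUnit (f s)) →
    ∃ F : κ →+* B, ∀ r, F (algebraMap R κ r) = f r

theorem resF {R : Type} [CommRing R] (p : Ideal R) [p.IsPrime] : ResF p p.ResidueField where
  zero r := Ideal.algebraMap_residueField_eq_zero
  frac y := by
    obtain ⟨a, b, hb, rfl⟩ := IsFractionRing.div_surjective (A := R ⧸ p) y
    obtain ⟨a, rfl⟩ := Ideal.Quotient.mk_surjective a
    obtain ⟨b, rfl⟩ := Ideal.Quotient.mk_surjective b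
    have hb0 := nonZeroDivisors.ne_zero hb
    refine ⟨a, b, fun h => hb0 (Ideal.Quotient.eq_zero_iff_mem.2 h), ?_⟩
    rw [Ideal.algebraMap_quotient_residueField_mk, Ideal.algebraMap_quotient_residueField_mk]
    apply div_mul_cancel₀
    intro h
    rw [Ideal.algebraMap_residueField_eq_zero] at h
    exact hb0 (Ideal.Quotient.eq_zero_iff_mem.2 h)
  lift B _ f h1 h2 := ⟨Ideal.ResidueField.lift p f h1 (fun s hs => h2 s hs), fun r =>
    Ideal.ResidueField.lift_algebraMap ..⟩

theorem der_ext {k R κ : Type} [Field k] [CommRing R] [Algebra k R] [Field κ] [Algebra R κ] [Algebra k κ]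
    [IsScalarTower k R κ] {p : Ideal R} (hκ : ResF p κ)
    (D : Derivation k R κ) (hD : ∀ r ∈ p, D r = 0) :
    ∃ D' : Derivation ℤ κ κ, ∀ r, D' (algebraMap R _ r) = D r := by
  let f : R →+* TrivSqZeroExt κ κ :=
    { toFun := fun r => TrivSqZeroExt.inl (algebraMap R κ r) + TrivSqZeroExt.inr (D r)
      map_one' := by simp
      map_zero' := by simp
      map_add' := fun a b => by
        ext <;> simp
      map_mul' := fun a b => by
        ext
        · simp
        · simp only [Derivation.leibniz, TrivSqZeroExt.snd_add, TrivSqZeroExt.snd_inl, TrivSqZeroExt.snd_inr,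
            TrivSqZeroExt.snd_mul, TrivSqZeroExt.fst_add, TrivSqZeroExt.fst_inl, TrivSqZeroExt.fst_inr,
            zero_add, add_zero, op_smul_eq_smul, smul_eq_mul, Algebra.smul_def] }
  have hf1 : ∀ r, (f r).fst = algebraMap R κ r := fun r => by simp [f]
  have hf2 : ∀ r, (f r).snd = D r := fun r => by simp [f]
  have hle : p ≤ RingHom.ker f := by
    intro r hr
    rw [RingHom.mem_ker]
    ext
    · rw [hf1]; exact (hκ.zero r).2 hr
    · rw [hf2]; simpa using hD r hr
  obtain ⟨F, hF⟩ := hκ.lift _ f hle (by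
    intro s hs
    rw [TrivSqZeroExt.isUnit_iff_isUnit_fst, hf1]
    rw [isUnit_iff_ne_zero]
    intro h
    exact hs ((hκ.zero s).1 h))
  have hfst : ∀ y, (F y).fst = y := by
    intro y
    obtain ⟨a, b, hb, hab⟩ := hκ.frac y
    have h1 := congrArg (fun z => (F z).fst) hab
    simp only [map_mul, TrivSqZeroExt.fst_mul, hF, hf1] at h1
    have hb' : algebraMap R κ b ≠ 0 := fun h => hb ((hκ.zero b).1 h)
    rw [← hab] at h1
    exact mul_right_cancel₀ hb' h1
  refine ⟨Derivation.mk' ((TrivSqZeroExt.sndHom κ κ).toAddMonoidHom.comp F.toAddMonoidHom).toIntLinearMap ?_, ?_⟩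
  · intro a b
    change (F (a * b)).snd = a • (F b).snd + b • (F a).snd
    rw [map_mul, TrivSqZeroExt.snd_mul, hfst, hfst]
    simp [mul_comm]
  · intro r
    change (F (algebraMap R κ r)).snd = _
    rw [hF, hf2]

def derKer {κ : Type} [Field κ] (D : Derivation ℤ κ κ) : Subfield κ where
  carrier := {y | D y = 0}
  mul_mem' := by intro a b ha hb; simp_all
  one_mem' := by simp
  add_mem' := by intro a b ha hb; simp_all
  zero_mem' := by simp
  neg_mem' := by intro a ha; simp_all
  inv_mem' := by intro a ha; simp_all [Derivation.leibniz_inv]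

theorem mem_derKer {κ : Type} [Field κ] (D : Derivation ℤ κ κ) (y : κ) : y ∈ derKer D ↔ D y = 0 := Iff.rfl

theorem derKer_pow {κ : Type} [Field κ] (p : ℕ) [CharP κ p] (D : Derivation ℤ κ κ) (y : κ) : y ^ p ∈ derKer D := by
  rw [mem_derKer, Derivation.leibniz_pow]
  simp

theorem derKer_sep {κ : Type} [Field κ] [CharZero κ] (D : Derivation ℤ κ κ) (K : Subfield κ) (hK : K ≤ derKer D)
    [Module.Finite K κ] : derKer D = ⊤ := by
  have := Algebra.FormallyUnramified.of_isSeparable K κ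
  let D' : Derivation K κ κ := Derivation.mk'
    { toFun := D, map_add' := map_add D, map_smul' := by
        intro c y
        have : D (c : κ) = 0 := hK c.2
        change D ((c : κ) * y) = (c : κ) * D y
        simp [this] } (fun a b => D.leibniz a b)
  have h1 : D' = 0 := by
    rw [← Derivation.liftKaehlerDifferential_comp D']
    ext y
    simp [Subsingleton.elim (KaehlerDifferential.D K κ y) 0]
  rw [eq_top_iff]
  intro y _
  exact DFunLike.congr_fun h1 y

theorem fin_closure {A R κ : Type} [CommRing A] [CommRing R] [Field κ] [Algebra R κ] {p : Ideal R}
    (hκ : ResF p κ) (f : A →+* κ) (q : ℕ) (v : Fin q → κ)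
    (hv : ∀ r : R, ∃ c : Fin q → A, algebraMap R κ r = ∑ j, f (c j) * v j) :
    Module.Finite (Subfield.closure (Set.range f)) κ := by
  set K := Subfield.closure (Set.range f) with hK
  let N : Submodule K κ := Submodule.span K (Set.range (algebraMap R κ))
  have hle : N ≤ Submodule.span K (Set.range v) := by
    rw [Submodule.span_le]
    rintro _ ⟨r, rfl⟩
    obtain ⟨c, hc⟩ := hv r
    rw [hc]
    refine sum_mem fun j _ => ?_
    exact Submodule.smul_mem _ (⟨f (c j), Subfield.subset_closure ⟨_, rfl⟩⟩ : K) (Submodule.subset_span ⟨j, rfl⟩)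
  haveI : Module.Finite K (Submodule.span K (Set.range v)) :=
    Module.Finite.of_fg (Submodule.fg_span (Set.finite_range v))
  haveI hNf : Module.Finite K N := Submodule.finiteDimensional_of_le hle
  have hmul : ∀ b : R, ∀ n ∈ N, LinearMap.mulLeft K (algebraMap R κ b) n ∈ N := by
    intro b n hn
    induction hn using Submodule.span_induction with
    | mem x hx =>
      obtain ⟨r, rfl⟩ := hx
      exact Submodule.subset_span ⟨b * r, by simp⟩
    | zero => simp
    | add x y _ _ hx hy => rw [map_add]; exact add_mem hx hy
    | smul a x _ hx => rw [map_smul]; exact Submodule.smul_mem _ _ hx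
  have htop : N = ⊤ := by
    rw [eq_top_iff]
    intro y _
    obtain ⟨a, b, hb, hab⟩ := hκ.frac y
    have hb' : algebraMap R κ b ≠ 0 := fun h => hb ((hκ.zero b).1 h)
    let g : N →ₗ[K] N := (LinearMap.mulLeft K (algebraMap R κ b)).restrict (hmul b)
    have hg : Function.Injective g := by
      intro x y hxy
      have := congrArg Subtype.val hxy
      exact Subtype.ext (mul_left_cancel₀ hb' this)
    obtain ⟨n, hn⟩ := LinearMap.surjective_of_injective hg ⟨algebraMap R κ a, Submodule.subset_span ⟨a, rfl⟩⟩
    have h1 : algebraMap R κ b * n = algebraMap R κ a := congrArg Subtype.val hn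
    rw [← hab, mul_comm] at h1
    rw [← mul_right_cancel₀ hb' h1]
    exact n.2
  rw [htop] at hNf
  exact Module.Finite.of_fg_top (Module.Finite.iff_fg.1 hNf)

theorem gen_U' {k R κ : Type} [Field k] [PerfectField k] [CommRing R] [IsNoetherianRing R] [IsLocalRing R]
    [IsAdicComplete (maximalIdeal R) R] [Algebra k R] [Field κ] [Algebra R κ] [Algebra k κ]
    [IsScalarTower k R κ] (hk : ∀ r : R, ∃ c : k, r - algebraMap k R c ∈ maximalIdeal R)
    {p : Ideal R} (hκ : ResF p κ) (e : ℕ) (z : Fin e → R)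
    (hz : ∀ i, z i ∈ maximalIdeal R) (hrad : maximalIdeal R ≤ (p ⊔ Ideal.span (Set.range z)).radical) :
    ∃ t : Fin e → κ, ∀ D ∈ derU k R κ, ∀ D' : Derivation ℤ κ κ,
      (∀ r, D' (algebraMap R κ r) = D r) → (∀ i, D' (t i) = 0) → D = 0 := by
  obtain ⟨φ, hφ⟩ := exists_psEval k R z hz
  letI := φ.toRingHom.toAlgebra
  have hAR : ∀ a, algebraMap (MvPowerSeries (Fin e) k) R a = φ a := fun _ => rfl
  haveI : IsScalarTower k (MvPowerSeries (Fin e) k) R :=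
    IsScalarTower.of_algebraMap_eq fun c => (φ.commutes c).symm
  obtain ⟨l, hl⟩ := Ideal.exists_pow_le_of_le_radical_of_fg hrad (IsNoetherian.noetherian _)
  have hfin : Module.Finite (MvPowerSeries (Fin e) k) (R ⧸ p) := by
    refine finite_over_ps k R hk (fun i => ?_) (R ⧸ p) l ?_
    · rw [hAR, hφ]; exact hz i
    · refine (Submodule.smul_mono_left hl).trans ?_
      rw [Submodule.sup_smul]
      have h1 : (p • ⊤ : Submodule R (R ⧸ p)) = ⊥ := by
        rw [eq_bot_iff, Submodule.smul_le]
        intro r hr n _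
        obtain ⟨n, rfl⟩ := Ideal.Quotient.mk_surjective n
        rw [Submodule.mem_bot]
        change Ideal.Quotient.mk p (r * n) = 0
        rw [Ideal.Quotient.eq_zero_iff_mem]
        exact Ideal.mul_mem_right _ _ hr
      rw [h1, bot_sup_eq]
      apply Submodule.smul_mono_left
      apply Ideal.span_mono
      rintro _ ⟨i, rfl⟩
      exact ⟨i, by rw [← hφ]; rfl⟩
  obtain ⟨q, s, hs⟩ := Module.Finite.exists_fin (R := MvPowerSeries (Fin e) k) (M := R ⧸ p)
  choose r hr using fun j => Ideal.Quotient.mk_surjective (s j)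
  let f : MvPowerSeries (Fin e) k →+* κ := (algebraMap R κ).comp φ.toRingHom
  have hfin2 := fin_closure hκ f q (fun j => algebraMap R κ (r j)) (by
    intro x
    have hx : Ideal.Quotient.mk p x ∈ Submodule.span (MvPowerSeries (Fin e) k) (Set.range s) := by
      rw [hs]; trivial
    obtain ⟨c, hc⟩ := (Submodule.mem_span_range_iff_exists_fun _).1 hx
    refine ⟨c, ?_⟩
    have h2 : Ideal.Quotient.mk p (∑ j, φ (c j) * r j) = Ideal.Quotient.mk p x := by
      rw [← hc, map_sum]
      refine Finset.sum_congr rfl fun j _ => ?_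
      rw [map_mul, hr, ← hAR, ← Ideal.Quotient.algebraMap_eq, ← IsScalarTower.algebraMap_apply,
        Algebra.smul_def]
    have h3 := (hκ.zero _).2 (Ideal.Quotient.eq.1 h2)
    rw [map_sub, sub_eq_zero] at h3
    rw [← h3, map_sum]
    refine Finset.sum_congr rfl fun j _ => ?_
    rw [map_mul]; rfl)
  set K := Subfield.closure (Set.range f) with hK
  have hfinal : ∀ D : Derivation k R κ, ∀ D' : Derivation ℤ κ κ,
      (∀ r, D' (algebraMap R κ r) = D r) → derKer D' = ⊤ → D = 0 := by
    intro D D' h1 h2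
    ext r
    have : algebraMap R κ r ∈ derKer D' := by rw [h2]; trivial
    rw [mem_derKer, h1] at this
    exact this
  have hmemK : ∀ x : K, ∃ a b, (x : κ) = f a / f b := by
    rintro ⟨x, hx⟩
    rw [hK, Subfield.mem_closure_iff] at hx
    have h1 : Subring.closure (Set.range f) = f.range := by
      rw [← RingHom.coe_range, Subring.closure_eq]
    rw [h1] at hx
    obtain ⟨_, ⟨a, rfl⟩, _, ⟨b, rfl⟩, rfl⟩ := hx
    exact ⟨a, b, rfl⟩
  obtain ⟨ℓ, hℓ⟩ := CharP.exists k
  rcases CharP.char_is_prime_or_zero k ℓ with hp | h0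
  · haveI : Fact ℓ.Prime := ⟨hp⟩
    haveI : CharP κ ℓ := charP_of_injective_algebraMap (algebraMap k κ).injective ℓ
    haveI : CharP K ℓ := (algebraMap K κ).charP (algebraMap K κ).injective ℓ
    haveI : PerfectRing k ℓ := PerfectField.toPerfectRing ℓ
    let f' : MvPowerSeries (Fin e) k →+* K := f.codRestrict K (fun a => Subfield.subset_closure ⟨a, rfl⟩)
    obtain ⟨h1, h2⟩ := degHom_frob_le ℓ e f' (fun x => by
      obtain ⟨a, b, hab⟩ := hmemK x
      exact ⟨a, b, Subtype.ext hab⟩) MvPowerSeries.X (fun a => ps_frob_decomp ℓ a)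
    obtain ⟨t, ht⟩ := p_gen_frob ℓ (K := K) (κ := κ) e h1 h2
    refine ⟨t, fun D hD D' hDD' hDt => ?_⟩
    exact hfinal D D' hDD' (ht _ (derKer_pow ℓ D') hDt)
  · subst h0
    haveI : CharP κ 0 := charP_of_injective_algebraMap (algebraMap k κ).injective 0
    haveI : CharZero κ := CharP.charP_to_charZero κ
    refine ⟨fun i => algebraMap R κ (z i), fun D hD D' hDD' hDt => ?_⟩
    refine hfinal D D' hDD' (derKer_sep D' K ?_)
    rw [hK, Subfield.closure_le]
    rintro _ ⟨a, rfl⟩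
    change D' (algebraMap R κ (φ a)) = 0
    rw [hDD']
    refine der_kill D hD φ (fun i => ?_) (fun i => ?_) a
    · rw [hφ]; exact hz i
    · rw [hφ, ← hDD']; exact hDt i

theorem der_bound {k R κ : Type} [Field k] [PerfectField k] [CommRing R] [IsNoetherianRing R] [IsLocalRing R]
    [IsAdicComplete (maximalIdeal R) R] [Algebra k R] [Field κ] [Algebra R κ] [Algebra k κ]
    [IsScalarTower k R κ] (hk : ∀ r : R, ∃ c : k, r - algebraMap k R c ∈ maximalIdeal R)
    {p : Ideal R} (hκ : ResF p κ) (e : ℕ) (z : Fin e → R)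
    (hz : ∀ i, z i ∈ maximalIdeal R) (hrad : maximalIdeal R ≤ (p ⊔ Ideal.span (Set.range z)).radical)
    (h : ℕ) (w : Fin h → R) (hwp : ∀ i, w i ∈ p)
    (hw : ∀ r ∈ p, ∃ s, s ∉ p ∧ s * r ∈ Ideal.span (Set.range w)) :
    Module.Finite κ (derU k R κ) ∧ Module.finrank κ (derU k R κ) ≤ h + e := by
  obtain ⟨t, ht⟩ := gen_U' hk hκ e z hz hrad
  choose a b hb hab using fun i => hκ.frac (t i)
  let Ψ : derU k R κ →ₗ[κ] (Fin h → κ) × (Fin e → κ) :=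
    { toFun := fun D => (fun i => D.1 (w i), fun i => algebraMap R κ (b i) * D.1 (a i) -
        algebraMap R κ (a i) * D.1 (b i))
      map_add' := fun D E => by
        ext i
        · simp
        · simp; ring
      map_smul' := fun c D => by
        ext i
        · simp
        · simp; ring }
  have hinj : Function.Injective Ψ := by
    rw [injective_iff_map_eq_zero]
    rintro ⟨D, hD⟩ h0
    have h1 : ∀ i, D (w i) = 0 := fun i => congrFun (congrArg Prod.fst h0) i
    have h2 : ∀ i, algebraMap R κ (b i) * D (a i) - algebraMap R κ (a i) * D (b i) = 0 :=
      fun i => congrFun (congrArg Prod.snd h0) i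
    have hDp : ∀ r ∈ p, D r = 0 := by
      intro r hr
      obtain ⟨s, hs, hsr⟩ := hw r hr
      obtain ⟨c, hc⟩ := (Ideal.mem_span_range_iff_exists_fun).1 hsr
      have h3 : D (s * r) = 0 := by
        rw [← hc, map_sum]
        refine Finset.sum_eq_zero fun i _ => ?_
        rw [D.leibniz, h1, smul_zero, zero_add, Algebra.smul_def, (hκ.zero _).2 (hwp i), zero_mul]
      rw [D.leibniz, Algebra.smul_def, Algebra.smul_def, (hκ.zero _).2 hr, zero_mul, add_zero] at h3
      exact (mul_eq_zero.1 h3).resolve_left fun hh => hs ((hκ.zero s).1 hh)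
    obtain ⟨D', hD'⟩ := der_ext hκ D hDp
    refine Subtype.ext (ht D hD D' hD' fun i => ?_)
    have hb' : algebraMap R κ (b i) ≠ 0 := fun hh => hb i ((hκ.zero _).1 hh)
    have h4 := congrArg D' (hab i)
    rw [D'.leibniz, hD', hD', smul_eq_mul, smul_eq_mul] at h4
    have h5 := h2 i
    rw [← h4, ← hab i] at h5
    have h6 : (algebraMap R κ (b i)) ^ 2 * D' (t i) = 0 := by
      rw [← h5]; ring
    exact (mul_eq_zero.1 h6).resolve_left (pow_ne_zero 2 hb')
  refine ⟨Module.Finite.of_injective Ψ hinj, ?_⟩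
  have := LinearMap.finrank_le_finrank_of_injective hinj
  simpa using this

theorem extend_sop' {R : Type} [CommRing R] [IsNoetherianRing R] [IsLocalRing R]
    (d : ℕ) (hd : (maximalIdeal R).height = d) (k : ℕ) : ∀ (I : Ideal R) (_ : I ≤ maximalIdeal R) (j : ℕ)
    (_ : (j : ℕ∞) ≤ I.height) (_ : j + k = d), ∃ ys : List R, ys.length = k ∧
      (∀ y ∈ ys, y ∈ maximalIdeal R) ∧ (d : ℕ∞) ≤ (I ⊔ Ideal.ofList ys).height := by
  induction k with
  | zero =>
    intro I hI j h1 h2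
    refine ⟨[], rfl, by simp, ?_⟩
    rw [← h2]
    simpa using h1
  | succ k ih =>
    intro I hI j h1 h2
    by_cases hd' : (d : ℕ∞) ≤ I.height
    · refine ⟨List.replicate (k+1) 0, by simp, ?_, hd'.trans (Ideal.height_mono le_sup_left)⟩
      intro y hy
      rw [List.eq_of_mem_replicate hy]
      exact zero_mem _
    obtain ⟨x, hxm, hx⟩ := exists_avoid I (maximalIdeal R) (by
      intro q hq hle
      have hqp : q.IsPrime := hq.1.1
      have hqm : q = maximalIdeal R := le_antisymm (le_maximalIdeal hqp.ne_top) hle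
      apply hd'
      rw [Ideal.height_eq_inf_minimalPrimes]
      refine le_iInf₂ fun J hJ => ?_
      have hJp : J.IsPrime := hJ.1.1
      have : q ≤ J := hq.2 hJ.1 (by rw [hqm]; exact le_maximalIdeal hJp.ne_top)
      have : J = maximalIdeal R := le_antisymm (le_maximalIdeal hJp.ne_top) (hqm ▸ this)
      subst this
      exact hd.ge)
    obtain ⟨ys, hy1, hy2, hy3⟩ := ih (I ⊔ Ideal.span {x})
      (sup_le hI ((Ideal.span_singleton_le_iff_mem _).2 hxm)) (j+1)
      (height_sup_span_singleton I x j h1 hx) (by omega)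
    refine ⟨x :: ys, by simp [hy1], ?_, ?_⟩
    · intro y hy
      rcases List.mem_cons.1 hy with rfl | hy
      · exact hxm
      · exact hy2 y hy
    · rw [Ideal.ofList_cons, ← sup_assoc]; exact hy3

theorem exists_gens {R : Type} [CommRing R] [IsNoetherianRing R] (p : Ideal R) [hp : p.IsPrime]
    (hreg : IsRegularLocal (Localization.AtPrime p)) (h : ℕ) (hh : p.height = h) :
    ∃ w : Fin h → R, (∀ i, w i ∈ p) ∧ ∀ r ∈ p, ∃ s, s ∉ p ∧ s * r ∈ Ideal.span (Set.range w) := by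
  obtain ⟨-, s, hs, hcard⟩ := hreg
  rw [IsLocalization.AtPrime.ringKrullDim_eq_height p, hh] at hcard
  have hc : s.card = h := by exact_mod_cast hcard
  let eq := (s.equivFinOfCardEq hc)
  let y : Fin h → Localization.AtPrime p := fun i => (eq.symm i : Localization.AtPrime p)
  have hy : Set.range y = s := by
    ext x
    constructor
    · rintro ⟨i, rfl⟩; exact (eq.symm i).2
    · intro hx; exact ⟨eq ⟨x, hx⟩, by simp [y]⟩
  choose c hc using fun i => IsLocalization.surj p.primeCompl (y i)
  have hmap : Ideal.map (algebraMap R (Localization.AtPrime p)) p =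
    maximalIdeal (Localization.AtPrime p) := Localization.AtPrime.map_eq_maximalIdeal
  have hcomap : ∀ r, algebraMap R (Localization.AtPrime p) r ∈ maximalIdeal (Localization.AtPrime p) ↔ r ∈ p :=
    fun r => IsLocalization.AtPrime.to_map_mem_maximal_iff _ p r
  refine ⟨fun i => (c i).1, ?_, ?_⟩
  · intro i
    rw [← hcomap, ← hc]
    apply Ideal.mul_mem_right
    rw [← hs, ← hy]
    exact Ideal.subset_span ⟨i, rfl⟩
  · intro r hr
    have h1 : algebraMap R (Localization.AtPrime p) r ∈
        (Ideal.span (Set.range fun i => (c i).1)).map (algebraMap R (Localization.AtPrime p)) := by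
      have h2 : maximalIdeal (Localization.AtPrime p) ≤
          (Ideal.span (Set.range fun i => (c i).1)).map (algebraMap R (Localization.AtPrime p)) := by
        rw [← hs, ← hy, Ideal.span_le]
        rintro _ ⟨i, rfl⟩
        have hu := IsLocalization.map_units (Localization.AtPrime p) (c i).2
        rw [SetLike.mem_coe, ← Ideal.mul_unit_mem_iff_mem _ hu, hc]
        exact Ideal.mem_map_of_mem _ (Ideal.subset_span ⟨i, rfl⟩)
      exact h2 ((hcomap r).2 hr)
    rw [IsLocalization.algebraMap_mem_map_algebraMap_iff p.primeCompl] at h1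
    obtain ⟨m, hm, hmr⟩ := h1
    exact ⟨m, hm, hmr⟩

theorem der_bound' {k R : Type} [Field k] [PerfectField k] [CommRing R] [IsNoetherianRing R] [IsLocalRing R]
    [IsAdicComplete (maximalIdeal R) R] [Algebra k R] {κ : Type} [Field κ] [Algebra R κ] [Algebra k κ]
    [IsScalarTower k R κ] (hk : ∀ r : R, ∃ c : k, r - algebraMap k R c ∈ maximalIdeal R)
    (p : Ideal R) [hp : p.IsPrime] (hκ : ResF p κ)
    (hreg : IsRegularLocal (Localization.AtPrime p)) (d : ℕ) (hd : (maximalIdeal R).height = d) :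
    Module.Finite κ (derU k R κ) ∧ Module.finrank κ (derU k R κ) ≤ d := by
  obtain ⟨h, hh'⟩ := ENat.ne_top_iff_exists.1 (Ideal.height_ne_top_of_isPrime (I := p))
  have hh := hh'.symm
  obtain ⟨w, hw1, hw2⟩ := exists_gens p hreg h hh
  have hpm : p ≤ maximalIdeal R := le_maximalIdeal hp.ne_top
  have hhd : h ≤ d := by
    have := Ideal.height_mono hpm
    rw [hh, hd] at this
    exact_mod_cast this
  obtain ⟨zs, hz1, hz2, hz3⟩ := extend_sop' d hd (d - h) p hpm h hh.ge (by omega)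
  have hrad := le_radical_of_height (p ⊔ Ideal.ofList zs) (by rw [hd]; exact hz3)
  obtain ⟨h1, h2⟩ := der_bound hk hκ zs.length zs.get (fun i => hz2 _ (List.get_mem _ _)) (by
    rw [Set.range_list_get]; exact hrad) h w hw1 hw2
  exact ⟨h1, h2.trans (by omega)⟩

def derV (k R κ : Type) [Field k] [CommRing R] [Algebra k R] [Field κ] [Algebra R κ] [Algebra k κ]
    [IsScalarTower k R κ] (xs : List R) : Submodule κ (Derivation k R κ) where
  carrier := {D | D ∈ derU k R κ ∧ ∀ x ∈ xs, D x = 0}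
  zero_mem' := ⟨zero_mem _, fun x _ => rfl⟩
  add_mem' := by
    rintro D E ⟨hD, hD'⟩ ⟨hE, hE'⟩
    exact ⟨add_mem hD hE, fun x hx => by rw [Derivation.add_apply, hD' x hx, hE' x hx, add_zero]⟩
  smul_mem' := by
    rintro c D ⟨hD, hD'⟩
    exact ⟨Submodule.smul_mem _ c hD, fun x hx => by rw [Derivation.smul_apply, hD' x hx, smul_zero]⟩

theorem avoid_der {k R κ : Type} [Field k] [CommRing R] [IsNoetherianRing R] [IsLocalRing R]
    [Algebra k R] [Field κ] [Algebra R κ] [Algebra k κ] [IsScalarTower k R κ]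
    (hk : ∀ r : R, ∃ c : k, r - algebraMap k R c ∈ maximalIdeal R) (I : Ideal R)
    (hI : ∀ q ∈ I.minimalPrimes, ¬ maximalIdeal R ≤ q) (D : Derivation k R κ) (hD : D ≠ 0) :
    ∃ x ∈ maximalIdeal R, (∀ q ∈ I.minimalPrimes, x ∉ q) ∧ D x ≠ 0 := by
  obtain ⟨x, hxm, hx⟩ := exists_avoid I (maximalIdeal R) hI
  by_cases hDx : D x = 0
  swap
  · exact ⟨x, hxm, hx, hDx⟩
  obtain ⟨y, hym, hy⟩ : ∃ y ∈ maximalIdeal R, D y ≠ 0 := by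
    by_contra hcon
    push Not at hcon
    apply hD
    ext r
    obtain ⟨c, hc⟩ := hk r
    have := hcon _ hc
    rw [map_sub, D.map_algebraMap, sub_zero] at this
    exact this
  have hfin : (⋃ q ∈ I.minimalPrimes, {n : ℕ | y + x ^ (n+1) ∈ q}).Finite := by
    refine (Ideal.finite_minimalPrimes_of_isNoetherianRing R I).biUnion fun q hq => ?_
    apply Set.Subsingleton.finite
    have hqp : q.IsPrime := hq.1.1
    have key : ∀ a b : ℕ, a < b → y + x ^ (a+1) ∈ q → y + x ^ (b+1) ∈ q → False := by
      intro a b hab ha hb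
      have h1 : x ^ (a+1) * (1 - x ^ (b - a)) ∈ q := by
        have h2 := q.sub_mem ha hb
        have h3 : x ^ (b+1) = x ^ (a+1) * x ^ (b-a) := by
          rw [← pow_add]; congr 1; omega
        rw [h3] at h2
        convert h2 using 1
        ring
      rcases hqp.mem_or_mem h1 with h2 | h2
      · exact hx q hq (hqp.mem_of_pow_mem _ h2)
      · have h3 : x ^ (b - a) ∈ maximalIdeal R := Ideal.pow_mem_of_mem _ hxm _ (by omega)
        have h4 : (1 : R) ∈ maximalIdeal R := by
          have := add_mem (le_maximalIdeal hqp.ne_top h2) h3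
          simpa using this
        exact (Ideal.IsPrime.ne_top inferInstance) ((Ideal.eq_top_iff_one _).2 h4)
    intro a ha b hb
    rcases lt_trichotomy a b with h | h | h
    · exact (key a b h ha hb).elim
    · exact h
    · exact (key b a h hb ha).elim
  obtain ⟨n, hn⟩ := hfin.exists_notMem
  refine ⟨y + x ^ (n+1), add_mem hym (Ideal.pow_mem_of_mem _ hxm _ (by omega)), ?_, ?_⟩
  · intro q hq hmem
    exact hn (Set.mem_biUnion hq hmem)
  · rw [map_add, D.leibniz_pow, hDx, smul_zero, smul_zero, add_zero]
    exact hy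

theorem select {k R κ : Type} [Field k] [CommRing R] [IsNoetherianRing R] [IsLocalRing R]
    [Algebra k R] [Field κ] [Algebra R κ] [Algebra k κ] [IsScalarTower k R κ]
    (hk : ∀ r : R, ∃ c : k, r - algebraMap k R c ∈ maximalIdeal R) (d : ℕ)
    (hd : (maximalIdeal R).height = d) (hfin : Module.Finite κ (derU k R κ))
    (hrank : Module.finrank κ (derU k R κ) ≤ d) (j : ℕ) (hj : j ≤ d) :
    ∃ xs : List R, xs.length = j ∧ (∀ x ∈ xs, x ∈ maximalIdeal R) ∧ (j : ℕ∞) ≤ (Ideal.ofList xs).height ∧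
      Module.finrank κ (derV k R κ xs) ≤ d - j := by
  have hfinV : ∀ xs, Module.Finite κ (derV k R κ xs) := fun xs =>
    Submodule.finiteDimensional_of_le (S₂ := derU k R κ) (fun D hD => hD.1)
  induction j with
  | zero =>
    refine ⟨[], rfl, by simp, by simp, ?_⟩
    have hle0 : derV k R κ [] ≤ derU k R κ := fun D hD => hD.1
    exact (Submodule.finrank_mono hle0).trans hrank
  | succ j ih =>
    obtain ⟨xs, h1, h2, h3, h4⟩ := ih (by omega)
    have hI : ∀ q ∈ (Ideal.ofList xs).minimalPrimes, ¬ maximalIdeal R ≤ q := by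
      intro q hq hle
      have hqp : q.IsPrime := hq.1.1
      have h5 := height_le_length xs q hq
      have h6 := (Ideal.height_mono hle).trans h5
      rw [hd, h1] at h6
      have : d ≤ j := by exact_mod_cast h6
      omega
    have hstep : ∀ x ∈ maximalIdeal R, (∀ q ∈ (Ideal.ofList xs).minimalPrimes, x ∉ q) →
        Module.finrank κ (derV k R κ (xs ++ [x])) ≤ d - (j+1) →
        ∃ xs : List R, xs.length = j + 1 ∧ (∀ x ∈ xs, x ∈ maximalIdeal R) ∧
          ((j+1 : ℕ) : ℕ∞) ≤ (Ideal.ofList xs).height ∧ Module.finrank κ (derV k R κ xs) ≤ d - (j+1) := by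
      intro x hxm hx hr
      refine ⟨xs ++ [x], by simp [h1], ?_, ?_, hr⟩
      · intro y hy
        rcases List.mem_append.1 hy with hy | hy
        · exact h2 y hy
        · rw [List.mem_singleton.1 hy]; exact hxm
      · rw [Ideal.ofList_append, Ideal.ofList_singleton]
        exact height_sup_span_singleton _ x j h3 hx
    have hle : ∀ x, derV k R κ (xs ++ [x]) ≤ derV k R κ xs := fun x D hD =>
      ⟨hD.1, fun y hy => hD.2 y (List.mem_append_left _ hy)⟩
    by_cases hV : derV k R κ xs = ⊥
    · obtain ⟨x, hxm, hx⟩ := exists_avoid _ (maximalIdeal R) hI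
      refine hstep x hxm hx ?_
      have := hle x
      rw [hV, le_bot_iff] at this
      rw [this, finrank_bot]
      exact Nat.zero_le _
    · obtain ⟨D, hD, hD0⟩ := Submodule.exists_mem_ne_zero_of_ne_bot hV
      obtain ⟨x, hxm, hx, hDx⟩ := avoid_der hk _ hI D hD0
      refine hstep x hxm hx ?_
      have hlt : derV k R κ (xs ++ [x]) < derV k R κ xs := by
        refine lt_of_le_of_ne (hle x) fun he => hDx ?_
        rw [← he] at hD
        exact hD.2 x (by simp)
      have := hfinV xs
      have := Submodule.finrank_lt_finrank_of_lt hlt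
      omega

open scoped TensorProduct in
theorem omega_kill {A R : Type} [CommRing A] [CommRing R] [Algebra A R] [Module.Finite A R]
    (p : Ideal R) [p.IsPrime] (h : ∀ D : Derivation A R p.ResidueField, D = 0) :
    ∃ s, s ∉ p ∧ ∀ ω : KaehlerDifferential A R, s • ω = 0 := by
  have h1 : ∀ f : KaehlerDifferential A R →ₗ[R] p.ResidueField, f = 0 := by
    intro f
    apply Derivation.liftKaehlerDifferential_unique
    rw [h (f.compDer _), h ((0 : KaehlerDifferential A R →ₗ[R] p.ResidueField).compDer _)]
  have h2 : (⟨p, inferInstance⟩ : PrimeSpectrum R) ∉ Module.support R (KaehlerDifferential A R) := by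
    rw [Module.mem_support_iff_nontrivial_residueField_tensorProduct, not_nontrivial_iff_subsingleton]
    refine subsingleton_of_forall_eq 0 fun x => ?_
    rw [← Module.forall_dual_apply_eq_zero_iff p.ResidueField]
    intro g
    have h3 := h1 ((g.restrictScalars R).comp (TensorProduct.mk R p.ResidueField (KaehlerDifferential A R) 1))
    induction x with
    | zero => simp
    | tmul a b =>
      have h4 := LinearMap.congr_fun h3 b
      have h5 : g (1 ⊗ₜ b) = 0 := h4
      have h6 : (a ⊗ₜ[R] b : TensorProduct R p.ResidueField (KaehlerDifferential A R)) = a • (1 ⊗ₜ b) := by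
        rw [TensorProduct.smul_tmul', smul_eq_mul, mul_one]
      rw [h6, map_smul, h5, smul_zero]
    | add x y hx hy => rw [map_add, hx, hy, add_zero]
  rw [Module.mem_support_iff_of_finite] at h2
  obtain ⟨s, hs, hsp⟩ := Set.not_subset.1 h2
  exact ⟨s, hsp, fun ω => Module.mem_annihilator.1 hs ω⟩

theorem der_zero {k A R κ : Type} [Field k] [CommRing A] [CommRing R] [Algebra k A] [Algebra k R]
    [Algebra A R] [IsScalarTower k A R] [Module.Finite A R] [Field κ] [Algebra R κ] [Algebra k κ]
    [IsScalarTower k R κ] [Algebra A κ] [IsScalarTower A R κ] (xs : List R)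
    (hxs : ∀ x ∈ xs, x ∈ Set.range (algebraMap A R)) (hV : derV k R κ xs = ⊥)
    (D : Derivation A R κ) : D = 0 := by
  let f : R →ₗ[k] κ :=
    { toFun := D
      map_add' := map_add D
      map_smul' := fun c r => by
        rw [RingHom.id_apply, ← IsScalarTower.algebraMap_smul A c r, D.map_smul,
          ← IsScalarTower.algebraMap_smul R (algebraMap k A c) (D r),
          ← IsScalarTower.algebraMap_apply, IsScalarTower.algebraMap_smul] }
  let E : Derivation k R κ := Derivation.mk' f (fun a b => D.leibniz a b)
  have hE : ∀ r, E r = D r := fun _ => rfl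
  have hmem : E ∈ derV k R κ xs := by
    refine ⟨?_, ?_⟩
    · obtain ⟨n, s, hs⟩ := Module.Finite.exists_fin (R := A) (M := R)
      refine ⟨Submodule.span R (Set.range fun i => D (s i)), Submodule.fg_span (Set.finite_range _), ?_⟩
      intro r
      rw [hE]
      have hr : r ∈ Submodule.span A (Set.range s) := by rw [hs]; trivial
      obtain ⟨c, rfl⟩ := (Submodule.mem_span_range_iff_exists_fun A).1 hr
      rw [map_sum]
      refine Submodule.sum_mem _ fun i _ => ?_
      rw [D.map_smul, ← IsScalarTower.algebraMap_smul R]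
      exact Submodule.smul_mem _ _ (Submodule.subset_span ⟨i, rfl⟩)
    · intro x hx
      obtain ⟨a, rfl⟩ := hxs x hx
      rw [hE, D.map_algebraMap]
  rw [hV, Submodule.mem_bot] at hmem
  ext r
  rw [← hE, hmem]; rfl

theorem kill_of_regular' {k R : Type} [Field k] [PerfectField k] [CommRing R] [IsNoetherianRing R]
    [IsLocalRing R] [IsAdicComplete (maximalIdeal R) R] [Algebra k R]
    (hk : ∀ r : R, ∃ c : k, r - algebraMap k R c ∈ maximalIdeal R)
    (p : Ideal R) [hp : p.IsPrime] (hreg : IsRegularLocal (Localization.AtPrime p)) :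
    ∃ s, s ∉ p ∧ ∀ M N : ModuleCat.{0} R, MemCM R M → ∀ (i : ℕ) (e : Abelian.Ext M N (i+1)),
      s • e = 0 := by
  obtain ⟨d, hd'⟩ := ENat.ne_top_iff_exists.1 (Ideal.height_ne_top_of_isPrime (I := maximalIdeal R))
  have hd := hd'.symm
  have hdim : ringKrullDim R = d := by
    rw [← IsLocalRing.maximalIdeal_height_eq_ringKrullDim, hd]; rfl
  obtain ⟨hf, hr⟩ := der_bound' (k := k) hk p (resF p) hreg d hd
  obtain ⟨xs, h1, h2, h3, h4⟩ := select hk d hd hf hr d le_rfl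
  haveI : Module.Finite p.ResidueField (derV k R p.ResidueField xs) :=
    Submodule.finiteDimensional_of_le (S₂ := derU k R p.ResidueField) (fun D hD => hD.1)
  have hV : derV k R p.ResidueField xs = ⊥ := by
    apply Submodule.finrank_eq_zero.1
    omega
  subst h1
  obtain ⟨φ, hφ⟩ := exists_psEval k R xs.get (fun i => h2 _ (List.get_mem _ _))
  letI := φ.toRingHom.toAlgebra
  have hAR : ∀ a, algebraMap (MvPowerSeries (Fin xs.length) k) R a = φ a := fun _ => rfl
  haveI : IsScalarTower k (MvPowerSeries (Fin xs.length) k) R :=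
    IsScalarTower.of_algebraMap_eq fun c => (φ.commutes c).symm
  have hX : ∀ i, algebraMap (MvPowerSeries (Fin xs.length) k) R (MvPowerSeries.X i) ∈ maximalIdeal R :=
    fun i => by rw [hAR, hφ]; exact h2 _ (List.get_mem _ _)
  have hrange : (Set.range fun i => algebraMap (MvPowerSeries (Fin xs.length) k) R (MvPowerSeries.X i)) =
      {x | x ∈ xs} := by
    rw [← Set.range_list_get]
    congr 1
    funext i
    rw [hAR, hφ]
  have hrad : maximalIdeal R ≤ (Ideal.span (Set.range fun i =>
      algebraMap (MvPowerSeries (Fin xs.length) k) R (MvPowerSeries.X i))).radical := by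
    rw [hrange]
    exact le_radical_of_height _ (hd.le.trans h3)
  obtain ⟨l, hl⟩ := Ideal.exists_pow_le_of_le_radical_of_fg hrad (IsNoetherian.noetherian _)
  haveI hfin : Module.Finite (MvPowerSeries (Fin xs.length) k) R :=
    finite_over_ps k R hk hX R l (Submodule.smul_mono_left hl)
  obtain ⟨s, hs, hω⟩ := omega_kill (A := MvPowerSeries (Fin xs.length) k) p (fun D =>
    der_zero (k := k) xs (fun x hx => by
      obtain ⟨i, hi⟩ := hrange.ge hx
      exact ⟨_, hi⟩) hV D)
  obtain ⟨n, hn⟩ := kill_of_omega (A := MvPowerSeries (Fin xs.length) k) s hω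
  refine ⟨s ^ n, fun h => hs (hp.mem_of_pow_mem n h), ?_⟩
  intro M N hM i e
  haveI := hM.1
  letI : Module (MvPowerSeries (Fin xs.length) k) M :=
    Module.compHom M (algebraMap (MvPowerSeries (Fin xs.length) k) R)
  haveI : IsScalarTower (MvPowerSeries (Fin xs.length) k) R M :=
    ⟨fun a r m => by rw [Algebra.smul_def, mul_smul]; rfl⟩
  haveI := mcm_free hk hX hdim hrad M hM.2
  exact hn M N i e

theorem kill_of_regular (R : Type) [CommRing R] [IsNoetherianRing R] [IsLocalRing R]
    (hcomp : IsAdicComplete (maximalIdeal R) R) (hequi : ∃ F : Subring R, IsField F)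
    (hperf : PerfectField (ResidueField R))
    (p : Ideal R) [hp : p.IsPrime] (hreg : IsRegularLocal (Localization.AtPrime p)) :
    ∃ s, s ∉ p ∧ ∀ M N : ModuleCat.{0} R, MemCM R M → ∀ (i : ℕ) (e : Abelian.Ext M N (i+1)),
      s • e = 0 := by
  obtain ⟨σ, hσ⟩ := exists_coeff_field R hcomp hequi hperf
  letI : Algebra (ResidueField R) R := σ.toAlgebra
  refine kill_of_regular' (k := ResidueField R) (fun r => ⟨residue R r, ?_⟩) p hreg
  rw [← residue_eq_zero_iff, map_sub]
  exact sub_eq_zero.2 (hσ _).symm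

/-- Let `R` be a Cohen-Macaulay, complete, equicharacteristic noetherian
local ring with perfect residue field. For any class `X` with `CM₀(R) ⊆ X ⊆ CM(R)` and any
class `Y` of finitely generated modules containing `CM₀(R)`, one has
`V(⋂_{i>0, M ∈ X, N ∈ Y} Ann_R Ext^i(M,N)) = Sing R`. -/
theorem stmt9 (R : Type) [CommRing R] [IsNoetherianRing R] [IsLocalRing R]
    (hCM : IsCMLocalRing R) (hcomp : IsAdicComplete (maximalIdeal R) R)
    (hequi : ∃ F : Subring R, IsField F)
    (hperf : PerfectField (ResidueField R))
    (X Y : Set (ModuleCat.{0} R))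
    (hX0 : ∀ M : ModuleCat.{0} R, MemCM0 R M → M ∈ X)
    (hXCM : ∀ M ∈ X, MemCM R M)
    (hY0 : ∀ M : ModuleCat.{0} R, MemCM0 R M → M ∈ Y)
    (hYfin : ∀ M ∈ Y, Module.Finite R M) :
    PrimeSpectrum.zeroLocus
        ((⨅ (i : ℕ) (_ : 0 < i) (M : ModuleCat.{0} R) (_ : M ∈ X)
            (N : ModuleCat.{0} R) (_ : N ∈ Y),
            Module.annihilator R (ExtMod R i M N) : Ideal R) : Set R)
      = singularLocus R := by
  ext p
  constructor
  · intro h hreg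
    obtain ⟨s, hs, hk⟩ := kill_of_regular R hcomp hequi hperf p.asIdeal hreg
    refine hs (h ?_)
    simp only [SetLike.mem_coe, Submodule.mem_iInf]
    intro i hi M hM N hN
    obtain ⟨j, rfl⟩ : ∃ j, i = j + 1 := ⟨i - 1, by omega⟩
    exact (ann_extMod_iff _ M N s).2 (hk M N (hXCM M hM) j)
  · intro h a ha
    by_contra hap
    refine h (regular_of_kill hCM p.asIdeal a hap ?_)
    intro M N hM hN
    simp only [SetLike.mem_coe, Submodule.mem_iInf] at ha
    exact (ann_extMod_iff 1 M N a).1 (ha 1 one_pos M (hX0 M hM) N (hY0 N hN))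

end
end

section
/- Let R be a commutative noetherian local ring of Krull dimension d and let X be any class of finitely generated R-modules. Then one has the inclusions V(⋂_{i>0, M ∈ X, N} Ann_R Tor_i^R(M, Ω^d N)) ⊆ V(⋂_{i>0, M ∈ X, L finite length} Ann_R Tor_i^R(M,L)) ⊆ V(⋂_{i>0, M ∈ X, N} Ann_R Tor_i^R(M,N)), where N ranges over all finitely generated R-modules, L ranges over all finite-length R-modules, and Ω^d N denotes the d-th syzygy of N in a minimal free resolution. -/
open CategoryTheory IsLocalRing

noncomputable section

/-- `a` kills the kernel of `M ⊗ K → M ⊗ F`. -/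
def KillsKer {R : Type} [CommRing R] (a : R) (M : Type) [AddCommGroup M] [Module R M]
    {K F : Type} [AddCommGroup K] [Module R K] [AddCommGroup F] [Module R F]
    (g : K →ₗ[R] F) : Prop :=
  ∀ x : TensorProduct R M K, LinearMap.lTensor M g x = 0 → a • x = 0

/-- `Q` is a retract of `Q'` up to maps factoring through a projective. -/
def StabRetract (R : Type) [CommRing R] (Q Q' : Type) [AddCommGroup Q] [Module R Q]
    [AddCommGroup Q'] [Module R Q'] : Prop :=
  ∃ (u : Q →ₗ[R] Q') (v : Q' →ₗ[R] Q) (G : Type) (_ : AddCommGroup G) (_ : Module R G)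
    (_ : Module.Projective R G) (s : Q →ₗ[R] G) (t : G →ₗ[R] Q),
    v.comp u = LinearMap.id + t.comp s

lemma StabRetract.refl (R : Type) [CommRing R] (Q : Type) [AddCommGroup Q] [Module R Q] :
    StabRetract R Q Q :=
  ⟨LinearMap.id, LinearMap.id, R, inferInstance, inferInstance, inferInstance, 0, 0, by simp⟩

lemma factor_ker {R : Type} [CommRing R] {A K F Q : Type} [AddCommGroup A] [Module R A]
    [AddCommGroup K] [Module R K] [AddCommGroup F] [Module R F] [AddCommGroup Q] [Module R Q]
    (g : K →ₗ[R] F) (f : F →ₗ[R] Q) (hg : Function.Injective g) (hgf : Function.Exact g f)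
    (φ : A →ₗ[R] F) (hφ : f.comp φ = 0) : ∃ ψ : A →ₗ[R] K, g.comp ψ = φ := by
  have h : ∀ x, φ x ∈ LinearMap.range g := fun x =>
    (hgf _).1 (by simpa using LinearMap.congr_fun hφ x)
  refine ⟨(LinearEquiv.ofInjective g hg).symm.toLinearMap.comp (φ.codRestrict _ h), ?_⟩
  ext x
  have := LinearEquiv.apply_symm_apply (LinearEquiv.ofInjective g hg) (φ.codRestrict _ h x)
  exact congrArg Subtype.val this

lemma comparison {R : Type} [CommRing R] {K F Q K' F' Q' : Type}
    [AddCommGroup K] [Module R K] [AddCommGroup F] [Module R F] [AddCommGroup Q] [Module R Q]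
    [AddCommGroup K'] [Module R K'] [AddCommGroup F'] [Module R F'] [AddCommGroup Q'] [Module R Q']
    [Module.Projective R F] [Module.Projective R F']
    (g : K →ₗ[R] F) (f : F →ₗ[R] Q) (hg : Function.Injective g) (hgf : Function.Exact g f)
    (hf : Function.Surjective f)
    (g' : K' →ₗ[R] F') (f' : F' →ₗ[R] Q') (hg' : Function.Injective g')
    (hgf' : Function.Exact g' f') (hf' : Function.Surjective f')
    (H : StabRetract R Q Q') :
    ∃ (u : K →ₗ[R] K') (v : K' →ₗ[R] K) (h : F →ₗ[R] K) (U : F →ₗ[R] F'),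
      v.comp u = LinearMap.id + h.comp g ∧ g'.comp u = U.comp g := by
  obtain ⟨u, v, G, _, _, _, s, t, huv⟩ := H
  obtain ⟨U, hU⟩ := Module.projective_lifting_property f' (u.comp f) hf'
  obtain ⟨V, hV⟩ := Module.projective_lifting_property f (v.comp f') hf
  obtain ⟨T, hT⟩ := Module.projective_lifting_property f t hf
  have e1 : ∀ x, f (g x) = 0 := hgf.apply_apply_eq_zero
  have e2 : ∀ x, f' (g' x) = 0 := hgf'.apply_apply_eq_zero
  have hU' : ∀ x, f' (U x) = u (f x) := fun x => LinearMap.congr_fun hU x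
  have hV' : ∀ x, f (V x) = v (f' x) := fun x => LinearMap.congr_fun hV x
  have hT' : ∀ x, f (T x) = t x := fun x => LinearMap.congr_fun hT x
  have huv' : ∀ x, v (u x) = x + t (s x) := fun x => LinearMap.congr_fun huv x
  obtain ⟨u1, hu1⟩ := factor_ker g' f' hg' hgf' (U.comp g) (by ext x; simp [hU', e1])
  obtain ⟨v1, hv1⟩ := factor_ker g f hg hgf (V.comp g') (by ext x; simp [hV', e2])
  obtain ⟨h, hh⟩ := factor_ker g f hg hgf (V.comp U - LinearMap.id - T.comp (s.comp f))
    (by ext x; simp [hV', hU', hT', huv'])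
  refine ⟨u1, v1, h, U, ?_, hu1⟩
  ext x
  apply hg
  have a1 : g (v1 (u1 x)) = V (g' (u1 x)) := LinearMap.congr_fun hv1 _
  have a2 : g' (u1 x) = U (g x) := LinearMap.congr_fun hu1 _
  have a3 : g (h (g x)) = V (U (g x)) - g x - T (s (f (g x))) := LinearMap.congr_fun hh _
  simp [a1, a2, a3, e1]

lemma KillsKer.transfer {R : Type} [CommRing R] {a : R} {M : Type} [AddCommGroup M] [Module R M]
    {K F Q K' F' Q' : Type}
    [AddCommGroup K] [Module R K] [AddCommGroup F] [Module R F] [AddCommGroup Q] [Module R Q]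
    [AddCommGroup K'] [Module R K'] [AddCommGroup F'] [Module R F'] [AddCommGroup Q'] [Module R Q']
    [Module.Projective R F] [Module.Projective R F']
    (g : K →ₗ[R] F) (f : F →ₗ[R] Q) (hg : Function.Injective g) (hgf : Function.Exact g f)
    (hf : Function.Surjective f)
    (g' : K' →ₗ[R] F') (f' : F' →ₗ[R] Q') (hg' : Function.Injective g')
    (hgf' : Function.Exact g' f') (hf' : Function.Surjective f')
    (H : StabRetract R Q Q') (hk : KillsKer a M g') : KillsKer a M g := by
  obtain ⟨u, v, h, U, e1, e2⟩ := comparison g f hg hgf hf g' f' hg' hgf' hf' H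
  intro x hx
  have h1 : LinearMap.lTensor M g' (LinearMap.lTensor M u x) = 0 := by
    rw [← LinearMap.lTensor_comp_apply, e2, LinearMap.lTensor_comp_apply, hx, map_zero]
  have h2 := hk _ h1
  have h3 : LinearMap.lTensor M v (LinearMap.lTensor M u x) = x := by
    rw [← LinearMap.lTensor_comp_apply, e1, LinearMap.lTensor_add, LinearMap.add_apply,
      LinearMap.lTensor_id, LinearMap.lTensor_comp_apply, hx]
    simp
  rw [← h3, ← map_smul, h2, map_zero]

lemma StabRetract.ker {R : Type} [CommRing R]
    {K F Q K' F' Q' : Type}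
    [AddCommGroup K] [Module R K] [AddCommGroup F] [Module R F] [AddCommGroup Q] [Module R Q]
    [AddCommGroup K'] [Module R K'] [AddCommGroup F'] [Module R F'] [AddCommGroup Q'] [Module R Q']
    [Module.Projective R F] [Module.Projective R F']
    (g : K →ₗ[R] F) (f : F →ₗ[R] Q) (hg : Function.Injective g) (hgf : Function.Exact g f)
    (hf : Function.Surjective f)
    (g' : K' →ₗ[R] F') (f' : F' →ₗ[R] Q') (hg' : Function.Injective g')
    (hgf' : Function.Exact g' f') (hf' : Function.Surjective f')
    (H : StabRetract R Q Q') : StabRetract R K K' := by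
  obtain ⟨u, v, h, U, e1, e2⟩ := comparison g f hg hgf hf g' f' hg' hgf' hf' H
  exact ⟨u, v, F, inferInstance, inferInstance, inferInstance, g, h, e1⟩

lemma artin_rees_step {R : Type} [CommRing R] [IsNoetherianRing R] [IsLocalRing R] (a : R)
    (M : Type) [AddCommGroup M] [Module R M] [Module.Finite R M]
    {F : Type} [AddCommGroup F] [Module R F] [Module.Finite R F] (K : Submodule R F)
    (H : ∀ n : ℕ, 0 < n → KillsKer a M (K ⊔ (maximalIdeal R) ^ n • (⊤ : Submodule R F)).subtype) :
    KillsKer a M K.subtype := by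
  intro x hx
  obtain ⟨k, hk⟩ := Ideal.exists_pow_inf_eq_pow_smul (maximalIdeal R) K
  have key : ∀ j : ℕ, a • x ∈ (maximalIdeal R) ^ j • (⊤ : Submodule R (TensorProduct R M K)) := by
    intro j
    set m := maximalIdeal R
    let n := j + k + 1
    let Kn := K ⊔ m ^ n • (⊤ : Submodule R F)
    let i : K →ₗ[R] Kn := Submodule.inclusion le_sup_left
    have h1 : a • (LinearMap.lTensor M i x) = 0 := by
      apply H n (by omega)
      rw [← LinearMap.lTensor_comp_apply]
      exact hx
    let q : Kn →ₗ[R] Kn ⧸ ((m ^ n • (⊤ : Submodule R F)).submoduleOf Kn) := Submodule.mkQ _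
    let C : Submodule R K := (m ^ n • (⊤ : Submodule R F)).submoduleOf K
    have hsurj : Function.Surjective (q.comp i) := by
      intro y
      obtain ⟨⟨y, hy⟩, rfl⟩ := Submodule.mkQ_surjective _ y
      obtain ⟨y1, hy1, y2, hy2, rfl⟩ := Submodule.mem_sup.1 hy
      refine ⟨⟨y1, hy1⟩, ?_⟩
      refine (Submodule.Quotient.eq _).2 ?_
      simp only [Submodule.submoduleOf, Submodule.mem_comap, i]
      simpa using hy2
    have hex : Function.Exact C.subtype (q.comp i) := by
      intro y
      rw [Submodule.coe_subtype, Subtype.range_coe]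
      exact Submodule.Quotient.mk_eq_zero _
    have h2 : LinearMap.lTensor M (q.comp i) (a • x) = 0 := by
      rw [LinearMap.lTensor_comp_apply, map_smul, h1, map_zero]
    obtain ⟨z, hz⟩ := (lTensor_exact M hex hsurj _).1 h2
    rw [← hz]
    clear hz h2
    have hC : C ≤ m ^ j • (⊤ : Submodule R K) := by
      intro c hc
      have h3 : (c : F) ∈ m ^ n • ⊤ ⊓ K := ⟨hc, c.2⟩
      rw [hk n (by omega)] at h3
      have h4 : (c : F) ∈ m ^ (n - k) • K := Submodule.smul_mono le_rfl inf_le_right h3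
      have h5 : (c : F) ∈ m ^ j • K :=
        Submodule.smul_mono (Ideal.pow_le_pow_right (by omega)) le_rfl h4
      have h6 : m ^ j • K = (m ^ j • (⊤ : Submodule R K)).map K.subtype := by
        rw [Submodule.map_smul'', Submodule.map_top, Submodule.range_subtype]
      rw [h6] at h5
      obtain ⟨c', hc', e⟩ := h5
      rwa [← Subtype.ext e]
    induction z using TensorProduct.induction_on with
    | zero => simp
    | add x y hx hy => rw [map_add]; exact Submodule.add_mem _ hx hy
    | tmul p c =>
      have h7 : (TensorProduct.mk R M K p) (c : K) ∈
          (m ^ j • (⊤ : Submodule R K)).map (TensorProduct.mk R M K p) := ⟨_, hC c.2, rfl⟩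
      rw [Submodule.map_smul''] at h7
      exact Submodule.smul_mono le_rfl le_top h7
  have : a • x ∈ (⨅ j : ℕ, (maximalIdeal R) ^ j • ⊤ : Submodule R (TensorProduct R M K)) :=
    Submodule.mem_iInf _ |>.2 key
  rwa [Ideal.iInf_pow_smul_eq_bot_of_isLocalRing _ (Ideal.IsPrime.ne_top'), Submodule.mem_bot] at this

lemma finlen {R : Type} [CommRing R] [IsNoetherianRing R] [IsLocalRing R]
    {Q : Type} [AddCommGroup Q] [Module R Q] [Module.Finite R Q] (n : ℕ) (hn : 0 < n)
    (h : ∀ r ∈ (maximalIdeal R) ^ n, ∀ x : Q, r • x = 0) : IsFiniteLength R Q := by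
  rw [isFiniteLength_iff_isNoetherian_isArtinian]
  refine ⟨inferInstance, ?_⟩
  set J := (maximalIdeal R) ^ n
  have : IsArtinianRing (R ⧸ J) := by
    apply IsLocalRing.quotient_artinian_of_mem_minimalPrimes_of_isLocalRing
    refine ⟨⟨inferInstance, Ideal.pow_le_self hn.ne'⟩, fun p hp _ => ?_⟩
    exact Ideal.IsPrime.le_of_pow_le (hP := hp.1) hp.2
  have hT : Module.IsTorsionBySet R Q J := fun x r => h r.1 r.2 x
  let _ := hT.module
  have : IsScalarTower R (R ⧸ J) Q := hT.isScalarTower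
  have : Module.Finite (R ⧸ J) Q := Module.Finite.of_restrictScalars_finite R _ _
  have : IsArtinian (R ⧸ J) Q := inferInstance
  have : RingHomSurjective (Ideal.Quotient.mk J) := ⟨Ideal.Quotient.mk_surjective⟩
  let l : Q →ₛₗ[Ideal.Quotient.mk J] Q :=
    { toFun := id, map_add' := fun _ _ => rfl, map_smul' := fun _ _ => rfl }
  exact (LinearMap.isArtinian_iff_of_bijective l Function.bijective_id).2 inferInstance

lemma mem_ann_homology {R : Type} [CommRing R] (a : R) (S : ShortComplex (ModuleCat.{0} R)) :
    a ∈ Module.annihilator R S.homology ↔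
      ∀ x : S.X₂, S.g.hom x = 0 → ∃ y, S.f.hom y = a • x := by
  have e : S.homology ≃ₗ[R] _ := (S.moduleCatHomologyIso).toLinearEquiv
  rw [e.annihilator_eq, Module.mem_annihilator]
  change (∀ m : LinearMap.ker S.g.hom ⧸ LinearMap.range S.moduleCatToCycles, a • m = 0) ↔ _
  constructor
  · intro h x hx
    have h1 := h (Submodule.Quotient.mk ⟨x, hx⟩)
    rw [← Submodule.Quotient.mk_smul, Submodule.Quotient.mk_eq_zero] at h1
    obtain ⟨y, hy⟩ := h1
    exact ⟨y, congrArg Subtype.val hy⟩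
  · intro h m
    obtain ⟨⟨x, hx⟩, rfl⟩ := Submodule.mkQ_surjective _ m
    obtain ⟨y, hy⟩ := h x hx
    rw [Submodule.mkQ_apply, ← Submodule.Quotient.mk_smul, Submodule.Quotient.mk_eq_zero]
    exact ⟨y, Subtype.ext hy⟩

lemma smul_torMod_iff {R : Type} [CommRing R] (a : R) (M N : ModuleCat.{0} R)
    (P : ProjectiveResolution N) (i : ℕ) :
    a ∈ Module.annihilator R (TorMod R (i + 1) M N) ↔
      KillsKer a M (LinearMap.range (P.complex.d (i + 1) i).hom).subtype := by
  let C := (((MonoidalCategory.tensoringLeft (ModuleCat.{0} R)).obj M).mapHomologicalComplex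
    (ComplexShape.down ℕ)).obj P.complex
  have e : TorMod R (i + 1) M N ≃ₗ[R] (C.sc' (i + 2) (i + 1) i).homology :=
    ((P.isoLeftDerivedObj ((MonoidalCategory.tensoringLeft (ModuleCat.{0} R)).obj M) (i + 1)) ≪≫
      C.homologyIsoSc' (i + 2) (i + 1) i (by simp) (by simp)).toLinearEquiv
  rw [e.annihilator_eq, mem_ann_homology]
  let d1 := (P.complex.d (i + 1) i).hom
  let d2 := (P.complex.d (i + 2) (i + 1)).hom
  have hex : Function.Exact d2 d1 :=
    (ShortComplex.ShortExact.moduleCat_exact_iff_function_exact _).1 (P.exact_succ i)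
  have hex' : Function.Exact d2 d1.rangeRestrict := by
    intro x
    rw [← hex x, ← Subtype.coe_inj]
    rfl
  have hs : Function.Surjective d1.rangeRestrict := d1.surjective_rangeRestrict
  have hT := lTensor_exact M hex' hs
  have hc : ∀ x, LinearMap.lTensor M (LinearMap.range d1).subtype
      (LinearMap.lTensor M d1.rangeRestrict x) = LinearMap.lTensor M d1 x := by
    intro x
    rw [← LinearMap.lTensor_comp_apply]
    rfl
  change (∀ x : TensorProduct R M (P.complex.X (i + 1)), LinearMap.lTensor M d1 x = 0 →
    ∃ y : TensorProduct R M (P.complex.X (i + 2)), LinearMap.lTensor M d2 y = a • x) ↔ _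
  constructor
  · intro h y hy
    obtain ⟨x, rfl⟩ := LinearMap.lTensor_surjective M hs y
    obtain ⟨w, hw⟩ := h x (by rw [← hc]; exact hy)
    rw [← map_smul, ← hw]
    exact hT.apply_apply_eq_zero w
  · intro h x hx
    have h1 := h (LinearMap.lTensor M d1.rangeRestrict x) (by rw [← hx]; exact hc x)
    exact (hT _).1 (by rw [map_smul]; exact h1)

lemma res_zero {R : Type} [CommRing R] (N : ModuleCat.{0} R) (P : ProjectiveResolution N) :
    Function.Surjective (P.π.f 0).hom ∧
    Function.Exact (LinearMap.range (P.complex.d 1 0).hom).subtype (P.π.f 0).hom := by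
  refine ⟨(ModuleCat.epi_iff_surjective _).1 inferInstance, ?_⟩
  have := (ShortComplex.ShortExact.moduleCat_exact_iff_function_exact _).1 P.exact₀
  intro x
  rw [Submodule.coe_subtype, Subtype.range_coe]
  exact this x

lemma kills_of_finite {R : Type} [CommRing R] [IsNoetherianRing R] [IsLocalRing R] (a : R)
    (M : ModuleCat.{0} R) [Module.Finite R M]
    (h : ∀ L : ModuleCat.{0} R, IsFiniteLength R L → a ∈ Module.annihilator R (TorMod R 1 M L))
    {F : Type} [AddCommGroup F] [Module R F] [Module.Finite R F] [Module.Projective R F]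
    (K : Submodule R F) : KillsKer a M K.subtype := by
  refine artin_rees_step a M K fun n hn => ?_
  set Kn := K ⊔ (maximalIdeal R) ^ n • (⊤ : Submodule R F)
  let L := ModuleCat.of R (F ⧸ Kn)
  have hL : IsFiniteLength R (F ⧸ Kn) := by
    refine finlen n hn fun r hr x => ?_
    obtain ⟨x, rfl⟩ := Submodule.mkQ_surjective _ x
    rw [Submodule.mkQ_apply, ← Submodule.Quotient.mk_smul, Submodule.Quotient.mk_eq_zero]
    exact (le_sup_right : _ ≤ Kn) (Submodule.smul_mem_smul hr trivial)
  let P := ProjectiveResolution.of L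
  have h1 := (smul_torMod_iff a M L P 0).1 (h L hL)
  obtain ⟨hs, he⟩ := res_zero L P
  have : Module.Projective R (P.complex.X 0) :=
    (IsProjective.iff_projective _).2 (P.projective 0)
  exact KillsKer.transfer Kn.subtype Kn.mkQ Kn.injective_subtype (LinearMap.exact_subtype_mkQ Kn)
    Kn.mkQ_surjective _ _ (Submodule.injective_subtype _) he hs (StabRetract.refl R _) h1

lemma res_stab {R : Type} [CommRing R] [IsNoetherianRing R]
    (N : ModuleCat.{0} R) [Module.Finite R N] (P : ProjectiveResolution N) (i : ℕ) :
    ∃ (Q Q' : Type) (_ : AddCommGroup Q) (_ : Module R Q) (_ : AddCommGroup Q') (_ : Module R Q')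
      (f : P.complex.X i →ₗ[R] Q), Function.Surjective f ∧
      Function.Exact (LinearMap.range (P.complex.d (i + 1) i).hom).subtype f ∧
      Module.Finite R Q' ∧ StabRetract R Q Q' := by
  induction i with
  | zero =>
    obtain ⟨hs, he⟩ := res_zero N P
    exact ⟨N, N, _, _, _, _, (P.π.f 0).hom, hs, he, inferInstance, StabRetract.refl R N⟩
  | succ i ih =>
    obtain ⟨Q, Q', _, _, _, _, f, hf, he, hfin, hst⟩ := ih
    obtain ⟨n, f', hf'⟩ := Module.Finite.exists_fin' R Q'
    have : Module.Projective R (P.complex.X i) :=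
      (IsProjective.iff_projective _).2 (P.projective i)
    refine ⟨LinearMap.range (P.complex.d (i + 1) i).hom, LinearMap.ker f', inferInstance,
      inferInstance, inferInstance, inferInstance, (P.complex.d (i + 1) i).hom.rangeRestrict,
      LinearMap.surjective_rangeRestrict _, ?_, inferInstance, ?_⟩
    · have hex := (ShortComplex.ShortExact.moduleCat_exact_iff_function_exact _).1 (P.exact_succ i)
      intro x
      rw [Submodule.coe_subtype, Subtype.range_coe, ← Subtype.coe_inj]
      exact hex x
    · exact StabRetract.ker _ f (Submodule.injective_subtype _) he hf (LinearMap.ker f').subtype f'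
        (Submodule.injective_subtype _) (LinearMap.exact_subtype_ker_map f') hf' hst

lemma tor_of_finlen {R : Type} [CommRing R] [IsNoetherianRing R] [IsLocalRing R] (a : R)
    (M : ModuleCat.{0} R) [Module.Finite R M]
    (h : ∀ L : ModuleCat.{0} R, IsFiniteLength R L → a ∈ Module.annihilator R (TorMod R 1 M L))
    (N : ModuleCat.{0} R) [Module.Finite R N] (i : ℕ) :
    a ∈ Module.annihilator R (TorMod R (i + 1) M N) := by
  let P := ProjectiveResolution.of N
  rw [smul_torMod_iff a M N P i]
  obtain ⟨Q, Q', _, _, _, _, f, hf, he, hfin, hst⟩ := res_stab N P i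
  obtain ⟨n, f', hf'⟩ := Module.Finite.exists_fin' R Q'
  have : Module.Projective R (P.complex.X i) :=
    (IsProjective.iff_projective _).2 (P.projective i)
  exact KillsKer.transfer _ f (Submodule.injective_subtype _) he hf (LinearMap.ker f').subtype f'
    (Submodule.injective_subtype _) (LinearMap.exact_subtype_ker_map f') hf' hst
    (kills_of_finite a M h _)

lemma finite_syzygy {R : Type} [CommRing R] [IsNoetherianRing R] [IsLocalRing R] (d : ℕ) :
    ∀ N K : ModuleCat.{0} R, Module.Finite R N → IsMinimalSyzygy R d N K → Module.Finite R K := by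
  induction d with
  | zero =>
    rintro N K hN ⟨e⟩
    exact Module.Finite.equiv e.symm
  | succ d ih =>
    rintro N K hN ⟨L, ⟨n, f, -, -, ⟨e⟩⟩, hK⟩
    exact ih L K (Module.Finite.equiv e.symm) hK

/-- Let `R` be a noetherian local ring of Krull dimension `d` and `X` a
class of finitely generated `R`-modules. Then
`V(⋂ Ann Tor_i(M, Ω^d N)) ⊆ V(⋂ Ann Tor_i(M, L)) ⊆ V(⋂ Ann Tor_i(M, N))`, where `i > 0`,
`M ∈ X`, `N` ranges over finitely generated modules, `L` over finite-length modules, and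
`Ω^d N` is the `d`-th syzygy in a minimal free resolution of `N`. -/
theorem stmt10 (R : Type) [CommRing R] [IsNoetherianRing R] [IsLocalRing R]
    (d : ℕ) (hd : ringKrullDim R = (d : WithBot ℕ∞))
    (X : Set (ModuleCat.{0} R)) (hX : ∀ M ∈ X, Module.Finite R M) :
    PrimeSpectrum.zeroLocus
        ((⨅ (i : ℕ) (_ : 0 < i) (M : ModuleCat.{0} R) (_ : M ∈ X)
            (N : ModuleCat.{0} R) (_ : Module.Finite R N)
            (K : ModuleCat.{0} R) (_ : IsMinimalSyzygy R d N K),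
            Module.annihilator R (TorMod R i M K) : Ideal R) : Set R) ⊆
      PrimeSpectrum.zeroLocus
        ((⨅ (i : ℕ) (_ : 0 < i) (M : ModuleCat.{0} R) (_ : M ∈ X)
            (L : ModuleCat.{0} R) (_ : IsFiniteLength R L),
            Module.annihilator R (TorMod R i M L) : Ideal R) : Set R) ∧
    PrimeSpectrum.zeroLocus
        ((⨅ (i : ℕ) (_ : 0 < i) (M : ModuleCat.{0} R) (_ : M ∈ X)
            (L : ModuleCat.{0} R) (_ : IsFiniteLength R L),
            Module.annihilator R (TorMod R i M L) : Ideal R) : Set R) ⊆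
      PrimeSpectrum.zeroLocus
        ((⨅ (i : ℕ) (_ : 0 < i) (M : ModuleCat.{0} R) (_ : M ∈ X)
            (N : ModuleCat.{0} R) (_ : Module.Finite R N),
            Module.annihilator R (TorMod R i M N) : Ideal R) : Set R) := by
  refine ⟨PrimeSpectrum.zeroLocus_anti_mono ?_, PrimeSpectrum.zeroLocus_anti_mono ?_⟩
  · intro a ha
    simp only [SetLike.mem_coe, Submodule.mem_iInf] at ha ⊢
    intro i hi M hM N hN K hK
    obtain ⟨i, rfl⟩ := Nat.exists_eq_succ_of_ne_zero hi.ne'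
    have := hX M hM
    have := finite_syzygy d N K hN hK
    exact tor_of_finlen a M (fun L hL => ha 1 one_pos M hM L hL) K i
  · intro a ha
    simp only [SetLike.mem_coe, Submodule.mem_iInf] at ha ⊢
    intro i hi M hM L hL
    have := (isFiniteLength_iff_isNoetherian_isArtinian.1 hL).1
    exact ha i hi M hM L inferInstance

end
end
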